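/- arXiv:1503.05872 — 2 statements merged into one kernel-verified Lean document; each statement's English description precedes it below -/
import Mathlib

section
/- Heavy-traffic limit of the scaled total queue length under MaxWeight (Theorem 5.2, limit version). Fix n ≥ 1 and ν ∈ F with ν_min := min_{ij} ν_{ij} > 0. For each ε ∈ (0, ν_min/(2‖ν‖)], consider a switch with arrival means λ^{(ε)}_{ij} = (1−ε)ν_{ij}, variances (σ^{(ε)}_{ij})², arrivals bounded by a common a_max ≥ 1, operated under MaxWeight, and let π^{(ε)} be an invariant distribution of the corresponding Markov chain. If (σ^{(ε)})² → σ² componentwise as ε → 0, then lim_{ε↓0} ε · E_{π^{(ε)}}[∑_{ij} q̄^{(ε)}_{ij}] = (1 − 1/(2n))·‖σ‖², where ‖σ‖² = ∑_{ij} σ_{ij}². -/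
open scoped BigOperators ENNReal

namespace SwitchModel

/-- Next queue state: `q⁺_{ij} = max(q_{ij} + a_{ij} − s_{ij}, 0)` (truncated `ℕ` subtraction). -/
def nextQ (n : ℕ) (q a s : Fin n → Fin n → ℕ) : Fin n → Fin n → ℕ :=
  fun i j => q i j + a i j - s i j

/-- A 0–1 matrix with at most one 1 per row and per column. -/
def IsSchedule (n : ℕ) (s : Fin n → Fin n → ℕ) : Prop :=
  (∀ i j, s i j ≤ 1) ∧ (∀ i, (∑ j, s i j) ≤ 1) ∧ (∀ j, (∑ i, s i j) ≤ 1)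

/-- A permutation matrix: exactly one 1 per row and per column. -/
def IsPerm (n : ℕ) (s : Fin n → Fin n → ℕ) : Prop :=
  (∀ i j, s i j ≤ 1) ∧ (∀ i, (∑ j, s i j) = 1) ∧ (∀ j, (∑ i, s i j) = 1)

/-- MaxWeight selection: `sched q` is a permutation matrix maximizing `∑ q_{ij} s_{ij}`. -/
def IsMaxWeight (n : ℕ) (sched : (Fin n → Fin n → ℕ) → (Fin n → Fin n → ℕ)) : Prop :=
  ∀ q, IsPerm n (sched q) ∧
    ∀ s, IsPerm n s → (∑ i, ∑ j, q i j * s i j) ≤ (∑ i, ∑ j, q i j * sched q i j)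

/-- Joint arrival probability: the entries are mutually independent with marginals `A i j`. -/
noncomputable def jointA (n : ℕ) (A : Fin n → Fin n → ℕ → ℝ≥0∞) (a : Fin n → Fin n → ℕ) : ℝ≥0∞ :=
  ∏ i, ∏ j, A i j (a i j)

/-- `A i j` is a probability distribution on `ℕ` supported on `[0, amax]`,
with mean `lam i j` and variance `(sig i j)^2`. -/
def ArrivalDist (n : ℕ) (A : Fin n → Fin n → ℕ → ℝ≥0∞)
    (lam sig : Fin n → Fin n → ℝ) (amax : ℕ) : Prop :=
  (∀ i j, (∑' k : ℕ, A i j k) = 1) ∧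
  (∀ i j k, A i j k ≠ 0 → k ≤ amax) ∧
  (∀ i j, (∑' k : ℕ, (A i j k).toReal * (k : ℝ)) = lam i j) ∧
  (∀ i j, (∑' k : ℕ, (A i j k).toReal * ((k : ℝ) - lam i j) ^ 2) = (sig i j) ^ 2)

/-- Transition kernel of the switch under a deterministic scheduling map `sched`. -/
noncomputable def kernelMW (n : ℕ) (A : Fin n → Fin n → ℕ → ℝ≥0∞)
    (sched : (Fin n → Fin n → ℕ) → (Fin n → Fin n → ℕ))
    (q q' : Fin n → Fin n → ℕ) : ℝ≥0∞ :=
  ∑' a : Fin n → Fin n → ℕ, jointA n A a * (if nextQ n q a (sched q) = q' then 1 else 0)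

/-- Transition kernel of the switch under a randomized scheduling policy `pol`
(the schedule is chosen independently of the current arrivals). -/
noncomputable def kernelPol (n : ℕ) (A : Fin n → Fin n → ℕ → ℝ≥0∞)
    (pol : (Fin n → Fin n → ℕ) → (Fin n → Fin n → ℕ) → ℝ≥0∞)
    (q q' : Fin n → Fin n → ℕ) : ℝ≥0∞ :=
  ∑' a : Fin n → Fin n → ℕ, ∑' s : Fin n → Fin n → ℕ,
    jointA n A a * pol q s * (if nextQ n q a s = q' then 1 else 0)

/-- `pd` is an invariant (stationary) probability distribution of the kernel `P`. -/
def IsInvariant (n : ℕ)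
    (P : (Fin n → Fin n → ℕ) → (Fin n → Fin n → ℕ) → ℝ≥0∞)
    (pd : (Fin n → Fin n → ℕ) → ℝ≥0∞) : Prop :=
  (∑' q : Fin n → Fin n → ℕ, pd q) = 1 ∧
  ∀ q', (∑' q : Fin n → Fin n → ℕ, pd q * P q q') = pd q'

/-- The face `F`: nonnegative matrices with all row and column sums equal to 1. -/
def memF (n : ℕ) (ν : Fin n → Fin n → ℝ) : Prop :=
  (∀ i j, 0 ≤ ν i j) ∧ (∀ i, (∑ j, ν i j) = 1) ∧ (∀ j, (∑ i, ν i j) = 1)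

/-- Steady-state expectation of the total queue length `∑_{ij} q_{ij}`. -/
noncomputable def Etot (n : ℕ) (pd : (Fin n → Fin n → ℕ) → ℝ≥0∞) : ℝ≥0∞ :=
  ∑' q : Fin n → Fin n → ℕ, pd q * (∑ i, ∑ j, (q i j : ℝ≥0∞))

/-- Steady-state expectation of `(∑_{ij} q_{ij})²`. -/
noncomputable def Etot2 (n : ℕ) (pd : (Fin n → Fin n → ℕ) → ℝ≥0∞) : ℝ≥0∞ :=
  ∑' q : Fin n → Fin n → ℕ, pd q * (∑ i, ∑ j, (q i j : ℝ≥0∞)) ^ 2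

/-- Euclidean norm on `ℝ^{n×n}`. -/
noncomputable def normE (n : ℕ) (x : Fin n → Fin n → ℝ) : ℝ :=
  Real.sqrt (∑ i, ∑ j, x i j ^ 2)

/-- The cone `K = {x : x_{ij} = w_i + w̃_j, w, w̃ ≥ 0}`. -/
def coneK (n : ℕ) : Set (Fin n → Fin n → ℝ) :=
  {x | ∃ w wt : Fin n → ℝ, (∀ i, 0 ≤ w i) ∧ (∀ j, 0 ≤ wt j) ∧ ∀ i j, x i j = w i + wt j}

/-- Embedding of queue states into `ℝ^{n×n}`. -/
def toR (n : ℕ) (q : Fin n → Fin n → ℕ) : Fin n → Fin n → ℝ :=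
  fun i j => (q i j : ℝ)

/-- `proj` is the nearest-point projection onto the cone `K`. -/
def IsConeProj (n : ℕ) (proj : (Fin n → Fin n → ℝ) → (Fin n → Fin n → ℝ)) : Prop :=
  ∀ x, proj x ∈ coneK n ∧ ∀ y ∈ coneK n, normE n (x - proj x) ≤ normE n (x - y)

/-- Bernoulli distribution on `ℕ` with success probability `p`. -/
noncomputable def bern (p : ℝ) : ℕ → ℝ≥0∞ :=
  fun k => if k = 0 then ENNReal.ofReal (1 - p) else if k = 1 then ENNReal.ofReal p else 0

end SwitchModel
namespace SwitchModel

section Alg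
variable {n : ℕ}

/-- Inner product of matrices. -/
def ip (x y : Fin n → Fin n → ℝ) : ℝ := ∑ i, ∑ j, x i j * y i j

lemma ip_comm (x y : Fin n → Fin n → ℝ) : ip x y = ip y x := by
  simp only [ip, mul_comm]

lemma ip_add_left (x y z : Fin n → Fin n → ℝ) : ip (x + y) z = ip x z + ip y z := by
  simp only [ip, Pi.add_apply, add_mul, Finset.sum_add_distrib]

lemma ip_add_right (x y z : Fin n → Fin n → ℝ) : ip x (y + z) = ip x y + ip x z := by
  simp only [ip, Pi.add_apply, mul_add, Finset.sum_add_distrib]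

lemma ip_sub_left (x y z : Fin n → Fin n → ℝ) : ip (x - y) z = ip x z - ip y z := by
  simp only [ip, Pi.sub_apply, sub_mul, Finset.sum_sub_distrib]

lemma ip_sub_right (x y z : Fin n → Fin n → ℝ) : ip x (y - z) = ip x y - ip x z := by
  simp only [ip, Pi.sub_apply, mul_sub, Finset.sum_sub_distrib]

lemma ip_smul_left (c : ℝ) (x y : Fin n → Fin n → ℝ) : ip (c • x) y = c * ip x y := by
  simp only [ip, Pi.smul_apply, smul_eq_mul, Finset.mul_sum, mul_assoc]

lemma ip_smul_right (c : ℝ) (x y : Fin n → Fin n → ℝ) : ip x (c • y) = c * ip x y := by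
  rw [ip_comm, ip_smul_left, ip_comm]

lemma ip_self_nonneg (x : Fin n → Fin n → ℝ) : 0 ≤ ip x x :=
  Finset.sum_nonneg fun _ _ => Finset.sum_nonneg fun _ _ => mul_self_nonneg _

lemma ip_nonneg {x y : Fin n → Fin n → ℝ} (hx : ∀ i j, 0 ≤ x i j) (hy : ∀ i j, 0 ≤ y i j) :
    0 ≤ ip x y :=
  Finset.sum_nonneg fun _ _ => Finset.sum_nonneg fun _ _ => mul_nonneg (hx _ _) (hy _ _)

lemma ip_mono_right {x y z : Fin n → Fin n → ℝ} (hx : ∀ i j, 0 ≤ x i j)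
    (hy : ∀ i j, y i j ≤ z i j) : ip x y ≤ ip x z :=
  Finset.sum_le_sum fun _ _ => Finset.sum_le_sum fun _ _ =>
    mul_le_mul_of_nonneg_left (hy _ _) (hx _ _)

lemma ip_eq_prod (x y : Fin n → Fin n → ℝ) :
    ip x y = ∑ k : Fin n × Fin n, x k.1 k.2 * y k.1 k.2 := by
  rw [ip, ← Fintype.sum_prod_type' (f := fun i j => x i j * y i j)]

lemma ip_sq_le (x y : Fin n → Fin n → ℝ) : (ip x y) ^ 2 ≤ ip x x * ip y y := by
  rw [ip_eq_prod, ip_eq_prod, ip_eq_prod]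
  simpa only [pow_two] using Finset.sum_mul_sq_le_sq_mul_sq Finset.univ
    (fun k : Fin n × Fin n => x k.1 k.2) (fun k => y k.1 k.2)

lemma abs_ip_le (x y : Fin n → Fin n → ℝ) : |ip x y| ≤ √(ip x x) * √(ip y y) := by
  rw [← Real.sqrt_mul (ip_self_nonneg x)]
  exact Real.abs_le_sqrt (ip_sq_le x y)

lemma sq_le_ip_self (x : Fin n → Fin n → ℝ) (i j : Fin n) : (x i j) ^ 2 ≤ ip x x := by
  rw [ip_eq_prod, pow_two]
  exact Finset.single_le_sum (f := fun k : Fin n × Fin n => x k.1 k.2 * x k.1 k.2)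
    (fun k _ => mul_self_nonneg _) (Finset.mem_univ (i, j))

lemma abs_le_sqrt_ip (x : Fin n → Fin n → ℝ) (i j : Fin n) : |x i j| ≤ √(ip x x) :=
  Real.abs_le_sqrt (sq_le_ip_self x i j)

/-- `n` times the orthogonal projection on the span of row and column indicators. -/
noncomputable def GG (x : Fin n → Fin n → ℝ) : Fin n → Fin n → ℝ :=
  fun i j => (∑ l, x i l) + (∑ k, x k j) - (∑ k, ∑ l, x k l) / n

lemma GG_add (x y : Fin n → Fin n → ℝ) : GG (x + y) = GG x + GG y := by
  funext i j
  simp only [GG, Pi.add_apply, Finset.sum_add_distrib]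
  ring

lemma GG_smul (c : ℝ) (x : Fin n → Fin n → ℝ) : GG (c • x) = c • GG x := by
  funext i j
  simp only [GG, Pi.smul_apply, smul_eq_mul, ← Finset.mul_sum]
  ring

lemma GG_sub (x y : Fin n → Fin n → ℝ) : GG (x - y) = GG x - GG y := by
  funext i j
  simp only [GG, Pi.sub_apply, Finset.sum_sub_distrib]
  ring

lemma ip_GG (x y : Fin n → Fin n → ℝ) : ip (GG x) y =
    (∑ i, (∑ l, x i l) * (∑ l, y i l)) + (∑ j, (∑ k, x k j) * (∑ k, y k j))
      - (∑ k, ∑ l, x k l) * (∑ k, ∑ l, y k l) / n := by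
  simp only [ip, GG, sub_mul, add_mul, Finset.sum_add_distrib, Finset.sum_sub_distrib]
  congr 1
  · congr 1
    · simp only [Finset.mul_sum]
    · rw [Finset.sum_comm]
      simp only [Finset.mul_sum]
  · simp only [← Finset.mul_sum]
    ring

lemma ip_GG_symm (x y : Fin n → Fin n → ℝ) : ip (GG x) y = ip x (GG y) := by
  rw [ip_comm x, ip_GG, ip_GG]
  simp only [mul_comm]

/-- The all-ones matrix. -/
def one1 (n : ℕ) : Fin n → Fin n → ℝ := fun _ _ => 1

lemma ip_one1 (x : Fin n → Fin n → ℝ) : ip x (one1 n) = ∑ i, ∑ j, x i j := by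
  simp [ip, one1]

lemma GG_ds (hn : 1 ≤ n) {x : Fin n → Fin n → ℝ} (hr : ∀ i, ∑ j, x i j = 1)
    (hc : ∀ j, ∑ i, x i j = 1) : GG x = one1 n := by
  funext i j
  have : (n : ℝ) ≠ 0 := by positivity
  simp [GG, hr, hc, one1, this]

/-- The closed cone. -/
def cone (n : ℕ) : Set (Fin n → Fin n → ℝ) :=
  {x | (∀ i j, 0 ≤ x i j) ∧ ∀ i j, (n : ℝ) * x i j = GG x i j}

lemma cone_smul {x : Fin n → Fin n → ℝ} (hx : x ∈ cone n) {c : ℝ} (hc : 0 ≤ c) :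
    c • x ∈ cone n := by
  refine ⟨fun i j => mul_nonneg hc (hx.1 i j), fun i j => ?_⟩
  rw [GG_smul]
  have := hx.2 i j
  simp only [Pi.smul_apply, smul_eq_mul, ← this]
  ring

lemma cone_add {x y : Fin n → Fin n → ℝ} (hx : x ∈ cone n) (hy : y ∈ cone n) :
    x + y ∈ cone n := by
  refine ⟨fun i j => add_nonneg (hx.1 i j) (hy.1 i j), fun i j => ?_⟩
  rw [GG_add]
  simp only [Pi.add_apply, ← hx.2 i j, ← hy.2 i j]
  ring

lemma cone_zero : (0 : Fin n → Fin n → ℝ) ∈ cone n := by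
  refine ⟨fun i j => le_rfl, fun i j => ?_⟩
  simp [GG]

lemma cone_row (i₀ : Fin n) : (fun i _ => if i = i₀ then (1:ℝ) else 0) ∈ cone n := by
  have : (n : ℝ) ≠ 0 := by
    have := i₀.pos
    positivity
  refine ⟨fun i j => by positivity, fun i j => ?_⟩
  simp [GG, this]

lemma cone_col (j₀ : Fin n) : (fun _ j => if j = j₀ then (1:ℝ) else 0) ∈ cone n := by
  have : (n : ℝ) ≠ 0 := by
    have := j₀.pos
    positivity
  refine ⟨fun i j => by positivity, fun i j => ?_⟩
  simp [GG, this]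

lemma cone_ip {p : Fin n → Fin n → ℝ} (hp : p ∈ cone n) (y : Fin n → Fin n → ℝ) :
    (n : ℝ) * ip p y = ip (GG p) y := by
  rw [← ip_smul_left]
  congr 1
  funext i j
  exact hp.2 i j

lemma exists_proj (q : Fin n → Fin n → ℝ) :
    ∃ p ∈ cone n, ip (q - p) p = 0 ∧ ∀ k ∈ cone n, ip (q - p) k ≤ 0 := by

  let φ : EuclideanSpace ℝ (Fin n × Fin n) → (Fin n → Fin n → ℝ) := fun x i j => x (i, j)
  let ψ : (Fin n → Fin n → ℝ) → EuclideanSpace ℝ (Fin n × Fin n) := fun x => WithLp.toLp 2 (fun k => x k.1 k.2)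
  have hφψ : ∀ x, φ (ψ x) = x := fun x => rfl
  have hinner : ∀ x y : EuclideanSpace ℝ (Fin n × Fin n), inner ℝ x y = ip (φ x) (φ y) := by
    intro x y
    rw [ip_eq_prod]
    simp [φ, PiLp.inner_apply, mul_comm]
  let K : Set (EuclideanSpace ℝ (Fin n × Fin n)) := {x | φ x ∈ cone n}
  have hcl : IsClosed K := by
    have : K = (⋂ i, ⋂ j, {x : EuclideanSpace ℝ (Fin n × Fin n) | 0 ≤ x (i, j)}) ∩
        ⋂ i, ⋂ j, {x : EuclideanSpace ℝ (Fin n × Fin n) | (n : ℝ) * x (i, j) = (∑ l, x (i, l)) + (∑ k, x (k, j))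
          - (∑ k, ∑ l, x (k, l)) / n} := by
      ext x
      simp [K, φ, cone, GG]
    rw [this]
    refine IsClosed.inter ?_ ?_
    · exact isClosed_iInter fun i => isClosed_iInter fun j =>
        isClosed_le continuous_const (by fun_prop)
    · exact isClosed_iInter fun i => isClosed_iInter fun j =>
        isClosed_eq (by fun_prop) (by fun_prop)
  have hconv : Convex ℝ K := by
    intro x hx y hy a b ha hb _
    exact cone_add (cone_smul hx ha) (cone_smul hy hb)
  have hne : K.Nonempty := ⟨0, cone_zero⟩
  obtain ⟨v, hvK, hv⟩ := exists_norm_eq_iInf_of_complete_convex hne hcl.isComplete hconv (ψ q)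
  have hv' := (norm_eq_iInf_iff_real_inner_le_zero hconv hvK).1 hv
  have key : ∀ k ∈ cone n, ip (q - φ v) (k - φ v) ≤ 0 := by
    intro k hk
    have h := hv' (ψ k) hk
    rw [hinner] at h
    exact h
  have h0 : ip (q - φ v) (φ v) = 0 := by
    have h1 := key 0 cone_zero
    have h2 := key ((2:ℝ) • φ v) (cone_smul hvK (by norm_num))
    rw [ip_sub_right] at h1 h2
    rw [ip_smul_right] at h2
    have h3 : ip (q - φ v) 0 = 0 := by simp [ip]
    linarith
  refine ⟨φ v, hvK, h0, fun k hk => ?_⟩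
  have := key k hk
  rw [ip_sub_right, h0] at this
  linarith

/-- The projection on the cone. -/
noncomputable def prj (q : Fin n → Fin n → ℝ) : Fin n → Fin n → ℝ := (exists_proj q).choose

/-- The residual. -/
noncomputable def res (q : Fin n → Fin n → ℝ) : Fin n → Fin n → ℝ := q - prj q

lemma prj_mem (q : Fin n → Fin n → ℝ) : prj q ∈ cone n := (exists_proj q).choose_spec.1
lemma res_prj (q : Fin n → Fin n → ℝ) : ip (res q) (prj q) = 0 := (exists_proj q).choose_spec.2.1
lemma res_cone (q : Fin n → Fin n → ℝ) : ∀ k ∈ cone n, ip (res q) k ≤ 0 :=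
  (exists_proj q).choose_spec.2.2

lemma res_min (q k : Fin n → Fin n → ℝ) (hk : k ∈ cone n) :
    ip (res q) (res q) ≤ ip (q - k) (q - k) := by
  have h : q - k = res q + (prj q - k) := by simp [res]
  rw [h]
  have h1 := res_cone q k hk
  have h2 := res_prj q
  have h3 := ip_self_nonneg (prj q - k)
  simp only [ip_add_left, ip_add_right]
  rw [ip_comm (prj q - k) (res q)]
  have h4 : ip (res q) (prj q - k) = ip (res q) (prj q) - ip (res q) k := ip_sub_right _ _ _
  linarith

lemma res_row (q : Fin n → Fin n → ℝ) (i : Fin n) : ∑ j, res q i j ≤ 0 := by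
  have := res_cone q _ (cone_row i)
  simpa [ip, Finset.sum_ite_eq] using this

lemma res_col (q : Fin n → Fin n → ℝ) (j : Fin n) : ∑ i, res q i j ≤ 0 := by
  have := res_cone q _ (cone_col j)
  simpa [ip, Finset.sum_ite_eq] using this

/-- MaxWeight dominates doubly stochastic matrices. -/
lemma mw_ds (q : Fin n → Fin n → ℕ) (s : Fin n → Fin n → ℕ)
    (hs : ∀ s', IsPerm n s' → (∑ i, ∑ j, q i j * s' i j) ≤ (∑ i, ∑ j, q i j * s i j))
    (m : Fin n → Fin n → ℝ) (h0 : ∀ i j, 0 ≤ m i j) (hr : ∀ i, ∑ j, m i j = 1)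
    (hc : ∀ j, ∑ i, m i j = 1) : ip (toR n q) m ≤ ip (toR n q) (toR n s) := by
  have hm : (Matrix.of m) ∈ doublyStochastic ℝ (Fin n) := by
    rw [mem_doublyStochastic_iff_sum]
    exact ⟨h0, hr, hc⟩
  obtain ⟨w, hw0, hw1, hw⟩ := exists_eq_sum_perm_of_mem_doublyStochastic hm
  have hm2 : m = ∑ σ : Equiv.Perm (Fin n), w σ • (fun i j => σ.permMatrix ℝ i j) := by
    funext i j
    have := congrFun (congrFun hw i) j
    simp only [Finset.sum_apply, Pi.smul_apply]
    rw [Matrix.sum_apply] at this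
    exact this.symm
  have hlin : ip (toR n q) m = ∑ σ : Equiv.Perm (Fin n),
      w σ * ip (toR n q) (fun i j => σ.permMatrix ℝ i j) := by
    have : ∀ S : Finset (Equiv.Perm (Fin n)),
      ip (toR n q) (∑ σ ∈ S, w σ • (fun i j => σ.permMatrix ℝ i j)) =
      ∑ σ ∈ S, w σ * ip (toR n q) (fun i j => σ.permMatrix ℝ i j) := by
      intro S
      induction S using Finset.induction_on with
      | empty => simp [ip]
      | insert a S ha ih =>
        rw [Finset.sum_insert ha, Finset.sum_insert ha, ip_add_right, ih, ip_smul_right]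
    conv_lhs => rw [hm2]
    exact this _
  rw [hlin]
  calc _ ≤ ∑ σ : Equiv.Perm (Fin n), w σ * ip (toR n q) (toR n s) := by
        refine Finset.sum_le_sum fun σ _ => mul_le_mul_of_nonneg_left ?_ (hw0 σ)
        have hp : IsPerm n (fun i j => if σ i = j then 1 else 0) := by
          refine ⟨fun i j => by dsimp only; split_ifs <;> simp, fun i => by simp, fun j => ?_⟩
          have : ∀ i, (σ i = j) = (i = σ.symm j) := fun i => by
            rw [Equiv.eq_symm_apply]
          simp [this]
        have := hs _ hp
        have h2 : ((∑ i, ∑ j, q i j * (if σ i = j then 1 else 0) : ℕ) : ℝ)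
          ≤ ((∑ i, ∑ j, q i j * s i j : ℕ) : ℝ) := by exact_mod_cast this
        push_cast at h2
        simpa [ip, toR, Equiv.Perm.permMatrix, PEquiv.toMatrix_apply, eq_comm] using h2
    _ = _ := by rw [← Finset.sum_mul, hw1, one_mul]

lemma mw_sub (q : Fin n → Fin n → ℕ) (s : Fin n → Fin n → ℕ)
    (hs : ∀ s', IsPerm n s' → (∑ i, ∑ j, q i j * s' i j) ≤ (∑ i, ∑ j, q i j * s i j))
    (m : Fin n → Fin n → ℝ) (h0 : ∀ i j, 0 ≤ m i j) (hr : ∀ i, ∑ j, m i j ≤ 1)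
    (hc : ∀ j, ∑ i, m i j ≤ 1) : ip (toR n q) m ≤ ip (toR n q) (toR n s) := by
  have hq : ∀ i j, 0 ≤ toR n q i j := fun i j => Nat.cast_nonneg _
  set T : ℝ := ∑ i, ∑ j, m i j with hT
  have hT' : ∑ j, ∑ i, m i j = T := by rw [hT, Finset.sum_comm]
  have hTr : ∑ i, (1 - ∑ j, m i j) = n - T := by simp [Finset.sum_sub_distrib, hT]
  have hTc : ∑ j, (1 - ∑ i, m i j) = n - T := by simp [Finset.sum_sub_distrib, hT']
  have hTn : 0 ≤ n - T := by
    rw [← hTr]; exact Finset.sum_nonneg fun i _ => by linarith [hr i]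
  rcases hTn.eq_or_lt with h | h
  · refine mw_ds q s hs m h0 (fun i => ?_) (fun j => ?_)
    · rw [← h, Finset.sum_eq_zero_iff_of_nonneg (fun i _ => by linarith [hr i])] at hTr
      linarith [hTr i (Finset.mem_univ _)]
    · rw [← h, Finset.sum_eq_zero_iff_of_nonneg (fun i _ => by linarith [hc i])] at hTc
      linarith [hTc j (Finset.mem_univ _)]
  · let m' : Fin n → Fin n → ℝ := fun i j =>
      m i j + (1 - ∑ l, m i l) * (1 - ∑ k, m k j) / (n - T)
    have hle : ∀ i j, m i j ≤ m' i j := fun i j => by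
      have : 0 ≤ (1 - ∑ l, m i l) * (1 - ∑ k, m k j) / (n - T) :=
        div_nonneg (mul_nonneg (by linarith [hr i]) (by linarith [hc j])) h.le
      simp only [m']; linarith
    refine (ip_mono_right hq hle).trans (mw_ds q s hs m' (fun i j => (h0 i j).trans (hle i j)) ?_ ?_)
    · intro i
      simp only [m', Finset.sum_add_distrib, ← Finset.sum_div, ← Finset.mul_sum, hTc]
      field_simp
      ring
    · intro j
      simp only [m', Finset.sum_add_distrib, ← Finset.sum_div, ← Finset.sum_mul, hTr]
      field_simp
      ring

end Alg

end SwitchModel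

namespace SwitchModel

section Prob
open MeasureTheory
variable {n : ℕ}

/-- Abstract properties of the arrival law. -/
structure Law (n : ℕ) (Bx : Finset (Fin n → Fin n → ℕ)) (w : (Fin n → Fin n → ℕ) → ℝ)
    (lam sig : Fin n → Fin n → ℝ) (amax : ℕ) : Prop where
  nonneg : ∀ a, 0 ≤ w a
  sum_one : ∑ a ∈ Bx, w a = 1
  mean : ∀ i j, ∑ a ∈ Bx, w a * (a i j : ℝ) = lam i j
  cov : ∀ i j k l, ∑ a ∈ Bx, w a * (((a i j : ℝ) - lam i j) * ((a k l : ℝ) - lam k l)) =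
    if i = k ∧ j = l then (sig i j) ^ 2 else 0
  bdd : ∀ a ∈ Bx, ∀ i j, a i j ≤ amax

/-- The box of possible arrivals. -/
def box (n amax : ℕ) : Finset (Fin n → Fin n → ℕ) :=
  Fintype.piFinset fun _ => Fintype.piFinset fun _ => Finset.range (amax + 1)

lemma box_sum (amax : ℕ) (g : Fin n × Fin n → ℕ → ℝ) :
    ∑ a ∈ box n amax, ∏ x : Fin n × Fin n, g x (a x.1 x.2) =
      ∏ x : Fin n × Fin n, ∑ k ∈ Finset.range (amax + 1), g x k := by
  rw [Fintype.prod_prod_type]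
  simp only [Finset.prod_univ_sum]
  simp only [Fintype.prod_prod_type]
  rfl

lemma law_of_arrival {A : Fin n → Fin n → ℕ → ℝ≥0∞} {lam sig : Fin n → Fin n → ℝ} {amax : ℕ}
    (h : ArrivalDist n A lam sig amax) :
    Law n (box n amax) (fun a => (jointA n A a).toReal) lam sig amax := by
  obtain ⟨h1, h2, h3, h4⟩ := h
  have hz : ∀ i j k, k ∉ Finset.range (amax + 1) → A i j k = 0 := by
    intro i j k hk
    by_contra hne
    have := h2 i j k hne
    simp at hk
    omega
  have hsum : ∀ i j, ∑ k ∈ Finset.range (amax + 1), (A i j k).toReal = 1 := by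
    intro i j
    have := h1 i j
    rw [tsum_eq_sum (s := Finset.range (amax + 1)) (fun k hk => hz i j k hk)] at this
    have hne : ∀ k ∈ Finset.range (amax + 1), A i j k ≠ ⊤ := by
      intro k hk htop
      have := Finset.single_le_sum (f := A i j) (fun _ _ => zero_le) hk
      rw [htop] at this
      simp_all
    rw [← ENNReal.toReal_sum hne, this]
    simp
  have hts : ∀ i j (f : ℕ → ℝ), ∑' k, (A i j k).toReal * f k =
      ∑ k ∈ Finset.range (amax + 1), (A i j k).toReal * f k := by
    intro i j f
    refine tsum_eq_sum fun k hk => ?_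
    rw [hz i j k hk]; simp
  simp only [hts] at h3 h4
  have hw : ∀ a, (jointA n A a).toReal =
      ∏ x : Fin n × Fin n, (A x.1 x.2 (a x.1 x.2)).toReal := by
    intro a
    rw [jointA, ENNReal.toReal_prod, Fintype.prod_prod_type]
    simp only [ENNReal.toReal_prod]
  have marg1 : ∀ (x₀ : Fin n × Fin n) (f : ℕ → ℝ),
      ∑ a ∈ box n amax, (jointA n A a).toReal * f (a x₀.1 x₀.2) =
        ∑ k ∈ Finset.range (amax + 1), (A x₀.1 x₀.2 k).toReal * f k := by
    intro x₀ f
    have hb := box_sum amax (fun (x : Fin n × Fin n) k =>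
      (A x.1 x.2 k).toReal * (if x = x₀ then f k else 1))
    simp only [Finset.prod_mul_distrib, Finset.prod_ite_eq', Finset.mem_univ, if_true] at hb
    simp only [hw]
    rw [hb]
    rw [Finset.prod_eq_single x₀]
    · simp
    · intro x _ hx
      simp [hx, hsum]
    · simp
  have marg2 : ∀ (x₀ x₁ : Fin n × Fin n) (_ : x₀ ≠ x₁) (f g : ℕ → ℝ)
      (_ : ∑ k ∈ Finset.range (amax + 1), (A x₀.1 x₀.2 k).toReal * f k = 0),
      ∑ a ∈ box n amax, (jointA n A a).toReal * (f (a x₀.1 x₀.2) * g (a x₁.1 x₁.2)) = 0 := by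
    intro x₀ x₁ hne f g hf
    have hb := box_sum amax (fun (x : Fin n × Fin n) k =>
      (A x.1 x.2 k).toReal * ((if x = x₀ then f k else 1) * (if x = x₁ then g k else 1)))
    simp only [Finset.prod_mul_distrib, Finset.prod_ite_eq', Finset.mem_univ, if_true] at hb
    simp only [hw]
    rw [hb]
    refine Finset.prod_eq_zero (Finset.mem_univ x₀) ?_
    simp [hne, hf]
  have hmean0 : ∀ x : Fin n × Fin n, ∑ k ∈ Finset.range (amax + 1),
      (A x.1 x.2 k).toReal * ((k : ℝ) - lam x.1 x.2) = 0 := by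
    intro x
    simp only [mul_sub, Finset.sum_sub_distrib, ← Finset.sum_mul, hsum, h3]
    ring
  refine ⟨fun a => ENNReal.toReal_nonneg, ?_, ?_, ?_, ?_⟩
  · have hb := box_sum amax (fun (x : Fin n × Fin n) k => (A x.1 x.2 k).toReal)
    simp only [hw]
    rw [hb]
    simp [hsum]
  · intro i j
    rw [← h3 i j]
    exact marg1 (i, j) (fun k => (k : ℝ))
  · intro i j k l
    split_ifs with hh
    · obtain ⟨rfl, rfl⟩ := hh
      rw [← h4 i j]
      simp only [pow_two]
      exact marg1 (i, j) (fun k => ((k : ℝ) - lam i j) * ((k : ℝ) - lam i j))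
    · refine marg2 (i, j) (k, l) ?_ (fun m => (m : ℝ) - lam i j) (fun m => (m : ℝ) - lam k l)
        (hmean0 (i, j))
      intro he
      rw [Prod.mk.injEq] at he
      exact hh he
  · intro a ha i j
    rw [box, Fintype.mem_piFinset] at ha
    have := ha i
    rw [Fintype.mem_piFinset] at this
    have := this j
    simp at this
    omega

/-- The measure on states. -/
noncomputable def stM (pd : (Fin n → Fin n → ℕ) → ℝ≥0∞) : Measure (Fin n → Fin n → ℕ) :=
  Measure.sum fun q => pd q • Measure.dirac q

lemma lint_stM (pd g : (Fin n → Fin n → ℕ) → ℝ≥0∞) :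
    ∫⁻ q, g q ∂(stM pd) = ∑' q, pd q * g q := by
  rw [stM, lintegral_sum_measure]
  simp [lintegral_smul_measure, lintegral_dirac]

lemma stM_apply (pd : (Fin n → Fin n → ℕ) → ℝ≥0∞) (S : Set (Fin n → Fin n → ℕ)) :
    stM pd S = ∑' q, pd q * S.indicator 1 q := by
  rw [← lint_stM, lintegral_indicator_one (MeasurableSet.of_discrete)]

/-- Invariance as a measure identity. -/
def Inv (Bx : Finset (Fin n → Fin n → ℕ)) (w : (Fin n → Fin n → ℕ) → ℝ)
    (nx : (Fin n → Fin n → ℕ) → (Fin n → Fin n → ℕ) → (Fin n → Fin n → ℕ))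
    (μ : Measure (Fin n → Fin n → ℕ)) : Prop :=
  μ = ∑ a ∈ Bx, ENNReal.ofReal (w a) • μ.map (fun q => nx q a)

lemma inv_of_invariant {A : Fin n → Fin n → ℕ → ℝ≥0∞} {lam sig : Fin n → Fin n → ℝ} {amax : ℕ}
    (h : ArrivalDist n A lam sig amax)
    {sched : (Fin n → Fin n → ℕ) → (Fin n → Fin n → ℕ)} {pd : (Fin n → Fin n → ℕ) → ℝ≥0∞}
    (hi : IsInvariant n (kernelMW n A sched) pd) :
    Inv (box n amax) (fun a => (jointA n A a).toReal) (fun q a => nextQ n q a (sched q))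
      (stM pd) := by
  have hz : ∀ a, a ∉ box n amax → jointA n A a = 0 := by
    intro a ha
    simp only [box, Fintype.mem_piFinset, not_forall] at ha
    obtain ⟨i, j, hij⟩ := ha
    have : A i j (a i j) = 0 := by
      by_contra hne
      have := h.2.1 i j _ hne
      simp at hij
      omega
    rw [jointA]
    exact Finset.prod_eq_zero (Finset.mem_univ i) (Finset.prod_eq_zero (Finset.mem_univ j) this)
  have hfin : ∀ a, jointA n A a ≠ ⊤ := by
    intro a
    have : ∀ i j k, A i j k ≠ ⊤ := by
      intro i j k htop
      have h1 := h.1 i j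
      have := ENNReal.le_tsum (f := A i j) k
      rw [htop, h1] at this
      simp at this
    rw [jointA]
    exact ENNReal.prod_ne_top fun i _ => ENNReal.prod_ne_top fun j _ => this i j _
  refine Measure.ext_of_singleton fun q' => ?_
  rw [Measure.finsetSum_apply]
  simp only [Measure.smul_apply, smul_eq_mul]
  have h1 : stM pd {q'} = pd q' := by
    rw [stM_apply, tsum_eq_single q']
    · simp
    · intro b hb
      simp [hb]
  rw [h1, ← hi.2 q']
  have h2 : ∀ a, (stM pd).map (fun q => nextQ n q a (sched q)) {q'} =
      ∑' q, pd q * (if nextQ n q a (sched q) = q' then 1 else 0) := by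
    intro a
    rw [Measure.map_apply (measurable_of_countable _) (MeasurableSet.of_discrete), stM_apply]
    refine tsum_congr fun q => ?_
    by_cases hq : nextQ n q a (sched q) = q'
    · rw [Set.indicator_of_mem (by exact hq), if_pos hq, Pi.one_apply]
    · rw [Set.indicator_of_notMem (by exact hq), if_neg hq]
  simp only [h2, ENNReal.ofReal_toReal (hfin _)]
  simp only [← ENNReal.tsum_mul_left]
  rw [← Summable.tsum_finsetSum (fun _ _ => ENNReal.summable)]
  refine tsum_congr fun q => ?_
  rw [kernelMW, tsum_eq_sum (s := box n amax) (fun a ha => by rw [hz a ha, zero_mul]),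
    Finset.mul_sum]
  refine Finset.sum_congr rfl fun a _ => ?_
  ring

variable {Bx : Finset (Fin n → Fin n → ℕ)} {w : (Fin n → Fin n → ℕ) → ℝ}
  {nx : (Fin n → Fin n → ℕ) → (Fin n → Fin n → ℕ) → (Fin n → Fin n → ℕ)}
  {μ : Measure (Fin n → Fin n → ℕ)}

lemma inv_int (hμ : Inv Bx w nx μ) (hw : ∀ a, 0 ≤ w a) (g : (Fin n → Fin n → ℕ) → ℝ)
    (hg : ∀ a ∈ Bx, Integrable (fun q => g (nx q a)) μ) :
    ∫ q, ∑ a ∈ Bx, w a * g (nx q a) ∂μ = ∫ q, g q ∂μ := by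
  have hmap : ∀ a ∈ Bx, Integrable g (μ.map (fun q => nx q a)) := by
    intro a ha
    rw [integrable_map_measure (measurable_of_countable _).aestronglyMeasurable
      (measurable_of_countable _).aemeasurable]
    exact hg a ha
  rw [integral_finsetSum _ (fun a ha => (hg a ha).const_mul _)]
  conv_rhs => rw [hμ]
  rw [integral_finsetSum_measure
    (fun a ha => (hmap a ha).smul_measure ENNReal.ofReal_ne_top)]
  refine Finset.sum_congr rfl fun a _ => ?_
  rw [integral_smul_measure, integral_map (measurable_of_countable _).aemeasurable
    (measurable_of_countable _).aestronglyMeasurable, ENNReal.toReal_ofReal (hw a),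
    smul_eq_mul, integral_const_mul]

lemma foster [IsProbabilityMeasure μ] (hμ : Inv Bx w nx μ) (hw : ∀ a, 0 ≤ w a)
    (hw1 : ∑ a ∈ Bx, w a = 1)
    (V f : (Fin n → Fin n → ℕ) → ℝ) (b : ℝ) (hb : 0 ≤ b) (hV : ∀ q, 0 ≤ V q) (hf : ∀ q, 0 ≤ f q)
    (hdrift : ∀ q, ∑ a ∈ Bx, w a * V (nx q a) + f q ≤ V q + b) :
    ∫⁻ q, ENNReal.ofReal (f q) ∂μ ≤ ENNReal.ofReal b := by
  classical
  let fM : ℕ → (Fin n → Fin n → ℕ) → ℝ := fun M q => if V q ≤ M then f q else 0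
  have hf0 : ∀ M q, 0 ≤ fM M q := by
    intro M q
    simp only [fM]
    split_ifs
    · exact hf q
    · exact le_rfl
  have hbd : ∀ (g : (Fin n → Fin n → ℕ) → ℝ) (C : ℝ), (∀ q, 0 ≤ g q) → (∀ q, g q ≤ C) →
      Integrable g μ := by
    intro g C h0 hC
    refine Integrable.of_bound (measurable_of_countable _).aestronglyMeasurable C
      (Filter.Eventually.of_forall fun q => ?_)
    rw [Real.norm_eq_abs, abs_of_nonneg (h0 q)]
    exact hC q
  have hEnn : ∀ q, 0 ≤ ∑ a ∈ Bx, w a * V (nx q a) := fun q =>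
    Finset.sum_nonneg fun a _ => mul_nonneg (hw a) (hV _)
  have key : ∀ M : ℕ, ∫⁻ q, ENNReal.ofReal (fM M q) ∂μ ≤ ENNReal.ofReal b := by
    intro M
    let g : (Fin n → Fin n → ℕ) → ℝ := fun q => min (V q) M
    have hg0 : ∀ q, 0 ≤ g q := fun q => le_min (hV q) (Nat.cast_nonneg _)
    have hgM : ∀ q, g q ≤ M := fun q => min_le_right _ _
    have hgi : Integrable g μ := hbd g M hg0 hgM
    have hgni : ∀ a ∈ Bx, Integrable (fun q => g (nx q a)) μ := fun a _ =>
      hbd _ M (fun q => hg0 _) (fun q => hgM _)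
    have hfi : Integrable (fM M) μ := by
      refine hbd _ (M + b) (hf0 M) fun q => ?_
      simp only [fM]
      split_ifs with hq
      · linarith [hdrift q, hEnn q]
      · positivity
    have hpt : ∀ q, ∑ a ∈ Bx, w a * g (nx q a) + fM M q ≤ g q + b := by
      intro q
      by_cases hq : V q ≤ M
      · have h1 : ∑ a ∈ Bx, w a * g (nx q a) ≤ ∑ a ∈ Bx, w a * V (nx q a) :=
          Finset.sum_le_sum fun a _ => mul_le_mul_of_nonneg_left (min_le_left _ _) (hw a)
        have h2 : fM M q = f q := by simp [fM, hq]
        have h3 : g q = V q := min_eq_left hq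
        rw [h2, h3]
        linarith [hdrift q]
      · have h1 : ∑ a ∈ Bx, w a * g (nx q a) ≤ ∑ a ∈ Bx, w a * (M : ℝ) :=
          Finset.sum_le_sum fun a _ => mul_le_mul_of_nonneg_left (hgM _) (hw a)
        rw [← Finset.sum_mul, hw1, one_mul] at h1
        have h2 : fM M q = 0 := by simp [fM, hq]
        have h3 : g q = M := min_eq_right (not_le.1 hq).le
        rw [h2, h3]
        linarith
    have hsi : Integrable (fun q => ∑ a ∈ Bx, w a * g (nx q a)) μ :=
      integrable_finsetSum _ fun a ha => (hgni a ha).const_mul _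
    have hint := integral_mono (hsi.add hfi) (hgi.add (integrable_const b)) hpt
    simp only [Pi.add_apply] at hint
    rw [integral_add hsi hfi, integral_add hgi (integrable_const b),
      inv_int hμ hw g hgni] at hint
    simp only [integral_const, probReal_univ, one_smul] at hint
    rw [← ofReal_integral_eq_lintegral_ofReal hfi (Filter.Eventually.of_forall (hf0 M))]
    exact ENNReal.ofReal_le_ofReal (by linarith)
  have hsup : ∀ q, ENNReal.ofReal (f q) = ⨆ M, ENNReal.ofReal (fM M q) := by
    intro q
    apply le_antisymm
    · obtain ⟨M, hM⟩ := exists_nat_ge (V q)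
      refine le_iSup_of_le M ?_
      simp [fM, hM]
    · refine iSup_le fun M => ENNReal.ofReal_le_ofReal ?_
      simp only [fM]
      split_ifs
      · exact le_rfl
      · exact hf q
  simp only [hsup]
  rw [lintegral_iSup (fun M => measurable_of_countable _)]
  · exact iSup_le key
  · intro M N hMN q
    refine ENNReal.ofReal_le_ofReal ?_
    simp only [fM]
    have : (M : ℝ) ≤ N := by exact_mod_cast hMN
    split_ifs with h1 h2
    · exact le_rfl
    · exact absurd (h1.trans this) h2
    · exact hf q
    · exact le_rfl

end Prob

end SwitchModel

namespace SwitchModel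

section Dyn
open MeasureTheory
variable {n : ℕ}

lemma ip_add_self (x y : Fin n → Fin n → ℝ) :
    ip (x + y) (x + y) = ip x x + 2 * ip x y + ip y y := by
  rw [ip_add_left, ip_add_right, ip_add_right, ip_comm y x]
  ring

/-- Unused service. -/
def un (q a s : Fin n → Fin n → ℕ) : Fin n → Fin n → ℝ :=
  toR n (nextQ n q a s) - toR n q - toR n a + toR n s

lemma next_eq (q a s : Fin n → Fin n → ℕ) :
    toR n (nextQ n q a s) = toR n q + (toR n a - toR n s) + un q a s := by
  simp only [un]; abel

lemma un_cases {q a s : Fin n → Fin n → ℕ} (hs : ∀ i j, s i j ≤ 1) (i j : Fin n) :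
    un q a s i j = 0 ∨ (un q a s i j = 1 ∧ s i j = 1 ∧ q i j = 0 ∧ a i j = 0 ∧
      nextQ n q a s i j = 0) := by
  have h := hs i j
  simp only [un, toR, nextQ, Pi.add_apply, Pi.sub_apply]
  by_cases hh : s i j ≤ q i j + a i j
  · left
    rw [Nat.cast_sub hh]
    push_cast
    ring
  · right
    have h1 : s i j = 1 := by omega
    have h2 : q i j = 0 := by omega
    have h3 : a i j = 0 := by omega
    simp [h1, h2, h3]

lemma un_nonneg {q a s : Fin n → Fin n → ℕ} (hs : ∀ i j, s i j ≤ 1) (i j : Fin n) :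
    0 ≤ un q a s i j := by
  rcases un_cases (q := q) (a := a) hs i j with h | h
  · rw [h]
  · rw [h.1]; norm_num

lemma un_le {q a s : Fin n → Fin n → ℕ} (hs : ∀ i j, s i j ≤ 1) (i j : Fin n) :
    un q a s i j ≤ s i j := by
  rcases un_cases (q := q) (a := a) hs i j with h | h
  · rw [h]; positivity
  · rw [h.1, h.2.1]; norm_num

lemma ip_q_un {q a s : Fin n → Fin n → ℕ} (hs : ∀ i j, s i j ≤ 1) :
    ip (toR n q) (un q a s) = 0 := by
  refine Finset.sum_eq_zero fun i _ => Finset.sum_eq_zero fun j _ => ?_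
  rcases un_cases (q := q) (a := a) hs i j with h | h
  · rw [h, mul_zero]
  · simp [toR, h.2.2.1]

lemma ip_next_un {q a s : Fin n → Fin n → ℕ} (hs : ∀ i j, s i j ≤ 1) :
    ip (toR n (nextQ n q a s)) (un q a s) = 0 := by
  refine Finset.sum_eq_zero fun i _ => Finset.sum_eq_zero fun j _ => ?_
  rcases un_cases (q := q) (a := a) hs i j with h | h
  · rw [h, mul_zero]
  · simp [toR, h.2.2.2.2]

lemma ip_self_le {x : Fin n → Fin n → ℝ} {c : ℝ} (h : ∀ i j, |x i j| ≤ c) :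
    ip x x ≤ (n : ℝ) ^ 2 * c ^ 2 := by
  calc ip x x ≤ ∑ _i : Fin n, ∑ _j : Fin n, c ^ 2 := by
        refine Finset.sum_le_sum fun i _ => Finset.sum_le_sum fun j _ => ?_
        rw [← pow_two]
        exact sq_le_sq' (by linarith [abs_le.1 (h i j)]) (abs_le.1 (h i j)).2
    _ = _ := by simp; ring

/-- The constant bounding squared increments. -/
noncomputable def MM (n amax : ℕ) : ℝ := (n : ℝ) ^ 2 * ((amax : ℝ) + 1) ^ 2

lemma MM_nonneg (n amax : ℕ) : 0 ≤ MM n amax := by unfold MM; positivity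

lemma z_bound {a s : Fin n → Fin n → ℕ} {amax : ℕ} (hs : ∀ i j, s i j ≤ 1)
    (ha : ∀ i j, a i j ≤ amax) : ip (toR n a - toR n s) (toR n a - toR n s) ≤ MM n amax := by
  refine ip_self_le fun i j => ?_
  have h1 : (s i j : ℝ) ≤ 1 := by exact_mod_cast hs i j
  have h2 : (a i j : ℝ) ≤ amax := by exact_mod_cast ha i j
  have h3 : (0 : ℝ) ≤ s i j := Nat.cast_nonneg _
  have h4 : (0 : ℝ) ≤ a i j := Nat.cast_nonneg _
  simp only [toR, Pi.sub_apply]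
  rw [abs_le]
  constructor <;> linarith

lemma zu_bound {q a s : Fin n → Fin n → ℕ} {amax : ℕ} (hs : ∀ i j, s i j ≤ 1)
    (ha : ∀ i j, a i j ≤ amax) :
    ip (toR n a - toR n s + un q a s) (toR n a - toR n s + un q a s) ≤ MM n amax := by
  refine ip_self_le fun i j => ?_
  have h1 : (s i j : ℝ) ≤ 1 := by exact_mod_cast hs i j
  have h2 : (a i j : ℝ) ≤ amax := by exact_mod_cast ha i j
  have h3 : (0 : ℝ) ≤ s i j := Nat.cast_nonneg _
  have h4 : (0 : ℝ) ≤ a i j := Nat.cast_nonneg _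
  have h5 := un_nonneg (q := q) (a := a) hs i j
  have h6 := un_le (q := q) (a := a) hs i j
  simp only [toR, Pi.sub_apply, Pi.add_apply]
  rw [abs_le]
  constructor <;> linarith

/-- one step bound for the residual -/
lemma step_res {q a s : Fin n → Fin n → ℕ} {amax : ℕ} (hs : ∀ i j, s i j ≤ 1)
    (ha : ∀ i j, a i j ≤ amax) :
    ip (res (toR n (nextQ n q a s))) (res (toR n (nextQ n q a s))) ≤
      ip (res (toR n q)) (res (toR n q)) + 2 * ip (res (toR n q)) (toR n a - toR n s)
        + MM n amax := by
  have h1 := res_min (toR n (nextQ n q a s)) (prj (toR n q)) (prj_mem _)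
  have h2 : toR n (nextQ n q a s) - prj (toR n q) =
      res (toR n q) + (toR n a - toR n s + un q a s) := by
    rw [next_eq]; simp only [res]; abel
  rw [h2] at h1
  have h3 := zu_bound (q := q) hs ha
  have h4 : ip (res (toR n q)) (un q a s) ≤ 0 := by
    rw [res, ip_sub_left, ip_q_un hs]
    have := ip_nonneg (prj_mem (toR n q)).1 (un_nonneg (q := q) (a := a) hs)
    linarith
  set Z := toR n a - toR n s + un q a s with hZ
  have h5 : ip (res (toR n q)) Z = ip (res (toR n q)) (toR n a - toR n s) +
      ip (res (toR n q)) (un q a s) := by rw [hZ, ip_add_right]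
  rw [ip_add_self] at h1
  linarith

lemma step_q {q a s : Fin n → Fin n → ℕ} {amax : ℕ} (hs : ∀ i j, s i j ≤ 1)
    (ha : ∀ i j, a i j ≤ amax) :
    ip (toR n (nextQ n q a s)) (toR n (nextQ n q a s)) ≤
      ip (toR n q) (toR n q) + 2 * ip (toR n q) (toR n a - toR n s) + MM n amax := by
  have h1 : toR n (nextQ n q a s) = toR n q + (toR n a - toR n s + un q a s) := by
    rw [next_eq]; abel
  have h3 := zu_bound (q := q) hs ha
  rw [h1]
  have h4 := ip_q_un (q := q) (a := a) hs
  set Z := toR n a - toR n s + un q a s with hZ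
  have h5 : ip (toR n q) Z = ip (toR n q) (toR n a - toR n s) + 0 := by
    rw [hZ, ip_add_right, h4]
  rw [ip_add_self]
  linarith

/-- drift for the residual -/
lemma drift_res {q s : Fin n → Fin n → ℕ} (hn : 1 ≤ n) (hsp : IsPerm n s)
    (hs : ∀ s', IsPerm n s' → (∑ i, ∑ j, q i j * s' i j) ≤ (∑ i, ∑ j, q i j * s i j))
    {ν : Fin n → Fin n → ℝ} (hν : memF n ν) {νmin ε : ℝ} (hmin : ∀ i j, νmin ≤ ν i j)
    (hpos : 0 < νmin) (hε0 : 0 < ε) (hε : ε * normE n ν ≤ νmin / 2) :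
    ip (res (toR n q)) ((fun i j => (1 - ε) * ν i j) - toR n s) ≤
      - (νmin / 2) * √(ip (res (toR n q)) (res (toR n q))) := by
  set x := toR n q with hx
  set r := res x with hr
  set p := prj x with hp
  set D := √(ip r r) with hD
  have hxp : x = p + r := by rw [hr, res]; abel
  have hDsq : D * D = ip r r := Real.mul_self_sqrt (ip_self_nonneg r)
  have hD0 : 0 ≤ D := Real.sqrt_nonneg _
  have hnR : (0 : ℝ) < n := by exact_mod_cast hn
  -- p is orthogonal to differences
  have hpds : ∀ m : Fin n → Fin n → ℝ, (∀ i, ∑ j, m i j = 1) → (∀ j, ∑ i, m i j = 1) →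
      (n : ℝ) * ip p m = ip p (one1 n) := by
    intro m h1 h2
    rw [cone_ip (prj_mem x), ip_GG_symm, GG_ds hn h1 h2]
  have hps : ip p ν = ip p (toR n s) := by
    have h1 := hpds ν hν.2.1 hν.2.2
    have h2 := hpds (toR n s) (fun i => by simp only [toR]; exact_mod_cast hsp.2.1 i)
      (fun j => by simp only [toR]; exact_mod_cast hsp.2.2 j)
    exact mul_left_cancel₀ hnR.ne' (h1.trans h2.symm)
  have hrν : |ip r ν| ≤ D * normE n ν := by
    have := abs_ip_le r ν
    have h2 : normE n ν = √(ip ν ν) := by simp only [normE, ip, pow_two]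
    rw [h2]; exact this
  have hmw : ip x ν + νmin * D ≤ ip x (toR n s) := by
    rcases hD0.eq_or_lt with h0 | h0
    · rw [← h0, mul_zero, add_zero]
      exact mw_sub q s hs ν hν.1 (fun i => (hν.2.1 i).le) (fun j => (hν.2.2 j).le)
    · have hc : 0 ≤ νmin / D := by positivity
      have h1 := mw_sub q s hs (ν + (νmin / D) • r) ?_ ?_ ?_
      · rw [ip_add_right, ip_smul_right] at h1
        have h2 : ip (toR n q) r = D * D := by
          rw [← hx]
          conv_lhs => rw [hxp]
          rw [ip_add_left, hDsq, ip_comm, res_prj]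
          ring
        rw [h2] at h1
        have h3 : νmin / D * (D * D) = νmin * D := by field_simp
        rw [h3] at h1
        exact h1
      · intro i j
        have h2 := abs_le_sqrt_ip r i j
        rw [← hD] at h2
        have h3 : νmin / D * (-D) ≤ νmin / D * r i j :=
          mul_le_mul_of_nonneg_left (abs_le.1 h2).1 hc
        have h4 : νmin / D * (-D) = -νmin := by field_simp
        have := hmin i j
        simp only [Pi.add_apply, Pi.smul_apply, smul_eq_mul]
        linarith
      · intro i
        simp only [Pi.add_apply, Pi.smul_apply, smul_eq_mul, Finset.sum_add_distrib,
          ← Finset.mul_sum, hν.2.1 i]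
        have := mul_nonneg hc (neg_nonneg.2 (res_row x i))
        linarith
      · intro j
        simp only [Pi.add_apply, Pi.smul_apply, smul_eq_mul, Finset.sum_add_distrib,
          ← Finset.mul_sum, hν.2.2 j]
        have := mul_nonneg hc (neg_nonneg.2 (res_col x j))
        linarith
  have e1 : ip r ((fun i j => (1 - ε) * ν i j) - toR n s) = (1 - ε) * ip r ν - ip r (toR n s) := by
    rw [ip_sub_right]
    congr 1
    exact ip_smul_right (1 - ε) r ν
  have e2 : ∀ y, ip x y = ip p y + ip r y := fun y => by
    conv_lhs => rw [hxp]
    rw [ip_add_left]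
  rw [e2, e2] at hmw
  have e3 : - (ε * ip r ν) ≤ νmin / 2 * D := by
    have h1 : -ip r ν ≤ D * normE n ν := by linarith [(abs_le.1 hrν).1]
    have h2 := mul_le_mul_of_nonneg_left h1 hε0.le
    have h3 := mul_le_mul_of_nonneg_right hε hD0
    linarith
  rw [e1]
  linarith

lemma sqrt_ip_le_sum {x : Fin n → Fin n → ℝ} (hx : ∀ i j, 0 ≤ x i j) :
    √(ip x x) ≤ ∑ i, ∑ j, x i j := by
  have h0 : 0 ≤ ∑ i, ∑ j, x i j :=
    Finset.sum_nonneg fun i _ => Finset.sum_nonneg fun j _ => hx i j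
  rw [Real.sqrt_le_left h0, pow_two, ip]
  rw [Finset.sum_mul]
  refine Finset.sum_le_sum fun i _ => ?_
  rw [Finset.sum_mul]
  refine Finset.sum_le_sum fun j _ => mul_le_mul_of_nonneg_left ?_ (hx i j)
  calc x i j ≤ ∑ j, x i j :=
        Finset.single_le_sum (f := fun j => x i j) (fun j _ => hx i j) (Finset.mem_univ j)
    _ ≤ _ := Finset.single_le_sum (f := fun i => ∑ j, x i j)
        (fun i _ => Finset.sum_nonneg fun j _ => hx i j) (Finset.mem_univ i)

lemma drift_q {q s : Fin n → Fin n → ℕ}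
    (hs : ∀ s', IsPerm n s' → (∑ i, ∑ j, q i j * s' i j) ≤ (∑ i, ∑ j, q i j * s i j))
    {ν : Fin n → Fin n → ℝ} (hν : memF n ν) {νmin ε : ℝ} (hmin : ∀ i j, νmin ≤ ν i j)
    (hpos : 0 < νmin) (hε0 : 0 < ε) :
    ip (toR n q) ((fun i j => (1 - ε) * ν i j) - toR n s) ≤
      - (ε * νmin) * √(ip (toR n q) (toR n q)) := by
  have hq : ∀ i j, 0 ≤ toR n q i j := fun i j => Nat.cast_nonneg _
  have h1 := mw_sub q s hs ν hν.1 (fun i => (hν.2.1 i).le) (fun j => (hν.2.2 j).le)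
  have e1 : ip (toR n q) ((fun i j => (1 - ε) * ν i j) - toR n s) =
      (1 - ε) * ip (toR n q) ν - ip (toR n q) (toR n s) := by
    rw [ip_sub_right]
    congr 1
    exact ip_smul_right (1 - ε) _ ν
  have h2 : ip (toR n q) (νmin • one1 n) ≤ ip (toR n q) ν :=
    ip_mono_right hq fun i j => by simpa [one1] using hmin i j
  rw [ip_smul_right, ip_one1] at h2
  have h3 := mul_le_mul_of_nonneg_left (sqrt_ip_le_sum hq) hpos.le
  have h4 := mul_le_mul_of_nonneg_left (h3.trans h2) hε0.le
  rw [e1]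
  linarith

variable {Bx : Finset (Fin n → Fin n → ℕ)} {w : (Fin n → Fin n → ℕ) → ℝ}
  {lam sig : Fin n → Fin n → ℝ} {amax : ℕ}
  {S : (Fin n → Fin n → ℕ) → (Fin n → Fin n → ℕ)}
  {μ : Measure (Fin n → Fin n → ℕ)}

lemma law_const (hL : Law n Bx w lam sig amax) (c : ℝ) : ∑ a ∈ Bx, w a * c = c := by
  rw [← Finset.sum_mul, hL.sum_one, one_mul]

lemma law_ip0 (hL : Law n Bx w lam sig amax) (x : Fin n → Fin n → ℝ) :
    ∑ a ∈ Bx, w a * ip x (toR n a) = ip x lam := by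
  simp only [ip, Finset.mul_sum]
  rw [Finset.sum_comm]
  refine Finset.sum_congr rfl fun i _ => ?_
  rw [Finset.sum_comm]
  refine Finset.sum_congr rfl fun j _ => ?_
  rw [← hL.mean i j, Finset.mul_sum]
  refine Finset.sum_congr rfl fun a _ => ?_
  simp only [toR]; ring

lemma law_ip (hL : Law n Bx w lam sig amax) (x y : Fin n → Fin n → ℝ) :
    ∑ a ∈ Bx, w a * ip x (toR n a - y) = ip x (lam - y) := by
  simp only [ip_sub_right, mul_sub, Finset.sum_sub_distrib, law_const hL, law_ip0 hL]

/-- The constant in the Lyapunov bound. -/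
noncomputable def LB (M δ : ℝ) : ℝ := (10 * M + 1) ^ 3 / (16 * δ ^ 2) + 2 * M ^ 2

lemma cubic {M δ D : ℝ} (hM : 0 ≤ M) (hδ : 0 < δ) (hD : 0 ≤ D) :
    (10 * M + 1) * D ^ 2 + 2 * M ^ 2 ≤ 4 * δ * D ^ 3 + LB M δ := by
  unfold LB
  set k := 10 * M + 1 with hk
  have hk0 : 0 < k := by positivity
  by_cases h : k ≤ 4 * δ * D
  · have h1 : k * D ^ 2 ≤ 4 * δ * D * D ^ 2 := mul_le_mul_of_nonneg_right h (by positivity)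
    have h2 : 0 ≤ k ^ 3 / (16 * δ ^ 2) := by positivity
    nlinarith
  · push Not at h
    have h1 : D ^ 2 ≤ k ^ 2 / (16 * δ ^ 2) := by
      rw [le_div_iff₀ (by positivity)]
      have : (4 * δ * D) ^ 2 ≤ k ^ 2 := pow_le_pow_left₀ (by positivity) h.le 2
      nlinarith
    have h2 : k * D ^ 2 ≤ k * (k ^ 2 / (16 * δ ^ 2)) := mul_le_mul_of_nonneg_left h1 hk0.le
    have h3 : k * (k ^ 2 / (16 * δ ^ 2)) = k ^ 3 / (16 * δ ^ 2) := by ring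
    have h4 : 0 ≤ 4 * δ * D ^ 3 := by positivity
    linarith

lemma lyap [IsProbabilityMeasure μ] (hL : Law n Bx w lam sig amax)
    (hμ : Inv Bx w (fun q a => nextQ n q a (S q)) μ)
    (hS : ∀ q i j, S q i j ≤ 1)
    (r : (Fin n → Fin n → ℕ) → (Fin n → Fin n → ℝ)) {δ : ℝ} (hδ : 0 < δ)
    (h1 : ∀ q, ∀ a ∈ Bx, ip (r (nextQ n q a (S q))) (r (nextQ n q a (S q))) ≤
      ip (r q) (r q) + 2 * ip (r q) (toR n a - toR n (S q)) + MM n amax)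
    (h2 : ∀ q, ip (r q) (lam - toR n (S q)) ≤ - δ * √(ip (r q) (r q))) :
    ∫⁻ q, ENNReal.ofReal (ip (r q) (r q)) ∂μ ≤ ENNReal.ofReal (LB (MM n amax) δ) := by
  set M := MM n amax with hM
  have hM0 : 0 ≤ M := MM_nonneg _ _
  refine foster hμ hL.nonneg hL.sum_one (fun q => (ip (r q) (r q)) ^ 2) _ _
    (by unfold LB; positivity) (fun q => by positivity) (fun q => ip_self_nonneg _) fun q => ?_
  set X := ip (r q) (r q) with hX
  have hX0 : 0 ≤ X := ip_self_nonneg _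
  set D := √X with hD
  have hDX : D ^ 2 = X := Real.sq_sqrt hX0
  have hD0 : 0 ≤ D := Real.sqrt_nonneg _
  have hpt : ∀ a ∈ Bx, w a * (ip (r (nextQ n q a (S q))) (r (nextQ n q a (S q)))) ^ 2 ≤
      w a * (X ^ 2 + 10 * M * X + 2 * M ^ 2) +
        (4 * X) * (w a * ip (r q) (toR n a - toR n (S q))) := by
    intro a ha
    have e1 := h1 q a ha
    have e0 : 0 ≤ ip (r (nextQ n q a (S q))) (r (nextQ n q a (S q))) := ip_self_nonneg _
    have e2 := pow_le_pow_left₀ e0 e1 2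
    have e3 := ip_sq_le (r q) (toR n a - toR n (S q))
    have e4 := z_bound (hS q) (hL.bdd a ha)
    have e5 := mul_le_mul_of_nonneg_left e4 hX0
    set t := ip (r q) (toR n a - toR n (S q)) with ht
    have e6 : t ^ 2 ≤ X * M := e3.trans e5
    have e7 : (X + 2 * t + M) ^ 2 ≤ X ^ 2 + 10 * M * X + 2 * M ^ 2 + 4 * X * t := by
      nlinarith [sq_nonneg (2 * t - M)]
    have e8 := mul_le_mul_of_nonneg_left (e2.trans e7) (hL.nonneg a)
    linarith
  have hsum := Finset.sum_le_sum hpt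
  rw [Finset.sum_add_distrib, law_const hL, ← Finset.mul_sum, law_ip hL] at hsum
  have e9 := mul_le_mul_of_nonneg_left (h2 q) (by positivity : 0 ≤ 4 * X)
  have e10 := cubic hM0 hδ hD0
  have e11 : 4 * X * (-δ * √(ip (r q) (r q))) = - (4 * δ * D ^ 3) := by
    rw [← hX, ← hD, ← hDX]; ring
  rw [e11] at e9
  rw [hDX] at e10
  linarith

end Dyn

end SwitchModel

namespace SwitchModel

section Main
open MeasureTheory
variable {n : ℕ}

variable {Bx : Finset (Fin n → Fin n → ℕ)} {w : (Fin n → Fin n → ℕ) → ℝ}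
  {lam sig : Fin n → Fin n → ℝ} {amax : ℕ}
  {S : (Fin n → Fin n → ℕ) → (Fin n → Fin n → ℕ)}
  {μ : Measure (Fin n → Fin n → ℕ)}

lemma law_sq (hL : Law n Bx w lam sig amax) (α : Fin n → Fin n → ℝ) :
    ∑ a ∈ Bx, w a * (ip α (toR n a - lam) * ip α (toR n a - lam)) =
      ∑ i, ∑ j, α i j ^ 2 * sig i j ^ 2 := by
  have h1 : ∀ a ∈ Bx, w a * (ip α (toR n a - lam) * ip α (toR n a - lam)) =
      ∑ x : Fin n × Fin n, ∑ y : Fin n × Fin n, α x.1 x.2 * α y.1 y.2 *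
        (w a * (((a x.1 x.2 : ℝ) - lam x.1 x.2) * ((a y.1 y.2 : ℝ) - lam y.1 y.2))) := by
    intro a _
    rw [ip_eq_prod, Finset.sum_mul_sum, Finset.mul_sum]
    refine Finset.sum_congr rfl fun x _ => ?_
    rw [Finset.mul_sum]
    refine Finset.sum_congr rfl fun y _ => ?_
    simp only [toR, Pi.sub_apply]
    ring
  rw [Finset.sum_congr rfl h1, Finset.sum_comm,
    ← Fintype.sum_prod_type' (f := fun i j => α i j ^ 2 * sig i j ^ 2)]
  refine Finset.sum_congr rfl fun x _ => ?_
  rw [Finset.sum_comm]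
  simp only [← Finset.mul_sum, hL.cov]
  have h2 : ∀ y : Fin n × Fin n, (x.1 = y.1 ∧ x.2 = y.2) = (x = y) := fun y => by
    rw [Prod.ext_iff]
  simp only [h2]
  simp [pow_two]

lemma law_quad (hL : Law n Bx w lam sig amax) :
    ∑ a ∈ Bx, w a * ip (GG (toR n a - lam)) (toR n a - lam) =
      (2 - 1 / n) * ∑ i, ∑ j, sig i j ^ 2 := by
  have hr : ∀ (c : Fin n → Fin n → ℝ) i, ∑ l, c i l = ip (fun k _ => if k = i then 1 else 0) c := by
    intro c i
    simp [ip, Finset.sum_ite_eq]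
  have hc : ∀ (c : Fin n → Fin n → ℝ) j, ∑ k, c k j = ip (fun _ l => if l = j then 1 else 0) c := by
    intro c j
    simp [ip, Finset.sum_ite_eq]
  have ht : ∀ (c : Fin n → Fin n → ℝ), ∑ k, ∑ l, c k l = ip (one1 n) c := by
    intro c
    simp [ip, one1]
  have h1 : ∀ a ∈ Bx, w a * ip (GG (toR n a - lam)) (toR n a - lam) =
      (∑ i, w a * (ip (fun k _ => if k = i then 1 else 0) (toR n a - lam) *
        ip (fun k _ => if k = i then 1 else 0) (toR n a - lam))) +
      (∑ j, w a * (ip (fun _ l => if l = j then 1 else 0) (toR n a - lam) *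
        ip (fun _ l => if l = j then 1 else 0) (toR n a - lam))) -
      w a * (ip (one1 n) (toR n a - lam) * ip (one1 n) (toR n a - lam)) / n := by
    intro a _
    rw [ip_GG, ← Finset.mul_sum, ← Finset.mul_sum, ht]
    simp only [hr, hc]
    ring
  rw [Finset.sum_congr rfl h1, Finset.sum_sub_distrib, Finset.sum_add_distrib, Finset.sum_comm,
    ← Finset.sum_div, Finset.sum_comm (s := Bx)]
  simp only [law_sq hL]
  have e1 : ∑ i₀ : Fin n, ∑ i : Fin n, ∑ j : Fin n, (if i = i₀ then (1:ℝ) else 0) ^ 2 * sig i j ^ 2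
      = ∑ i, ∑ j, sig i j ^ 2 := by
    refine Finset.sum_congr rfl fun i _ => ?_
    simp
  have e2 : ∑ j₀ : Fin n, ∑ i : Fin n, ∑ j : Fin n, (if j = j₀ then (1:ℝ) else 0) ^ 2 * sig i j ^ 2
      = ∑ i, ∑ j, sig i j ^ 2 := by
    conv_rhs => rw [Finset.sum_comm]
    refine Finset.sum_congr rfl fun i _ => ?_
    simp
  rw [e1, e2]
  simp only [one1, one_pow, one_mul]
  ring

/-- Expected quadratic form of the increments. -/
lemma law_quad_z (hn : 1 ≤ n) {ν : Fin n → Fin n → ℝ} (hν : memF n ν) {ε : ℝ}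
    (hL : Law n Bx w (fun i j => (1 - ε) * ν i j) sig amax) {s : Fin n → Fin n → ℕ}
    (hs : IsPerm n s) :
    ∑ a ∈ Bx, w a * ip (GG (toR n a - toR n s)) (toR n a - toR n s) =
      (2 - 1 / n) * (∑ i, ∑ j, sig i j ^ 2) + n * ε ^ 2 := by
  set lam : Fin n → Fin n → ℝ := fun i j => (1 - ε) * ν i j with hlam
  have hG : GG (lam - toR n s) = (-ε) • one1 n := by
    have h1 : lam = (1 - ε) • ν := rfl
    rw [GG_sub, h1, GG_smul, GG_ds hn hν.2.1 hν.2.2,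
      GG_ds hn (fun i => by simp only [toR]; exact_mod_cast hs.2.1 i)
        (fun j => by simp only [toR]; exact_mod_cast hs.2.2 j)]
    module
  have hT : ip (GG (lam - toR n s)) (lam - toR n s) = n * ε ^ 2 := by
    rw [hG, ip_smul_left, ip_comm, ip_one1]
    have : ∀ i, ∑ j, (lam - toR n s) i j = -ε := by
      intro i
      simp only [Pi.sub_apply, hlam, toR, Finset.sum_sub_distrib, ← Finset.mul_sum, hν.2.1 i]
      have : ∑ j, (s i j : ℝ) = 1 := by exact_mod_cast hs.2.1 i
      rw [this]; ring
    simp only [this]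
    simp
    ring
  have hsplit : ∀ a, w a * ip (GG (toR n a - toR n s)) (toR n a - toR n s) =
      w a * ip (GG (toR n a - lam)) (toR n a - lam) +
      (2 * (w a * ip (GG (lam - toR n s)) (toR n a - lam)) + w a * (n * ε ^ 2)) := by
    intro a
    have h1 : toR n a - toR n s = (toR n a - lam) + (lam - toR n s) := by abel
    rw [h1, GG_add, ip_add_left, ip_add_right, ip_add_right, hT,
      ip_GG_symm (toR n a - lam) (lam - toR n s), ip_comm (toR n a - lam) (GG (lam - toR n s))]
    ring
  simp only [hsplit, Finset.sum_add_distrib, ← Finset.mul_sum, law_const hL, law_quad hL,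
    law_ip hL]
  have : ip (GG (lam - toR n s)) (lam - lam) = 0 := by simp [ip]
  rw [this]
  ring

/-- Total of a matrix. -/
def tot (x : Fin n → Fin n → ℝ) : ℝ := ∑ i, ∑ j, x i j

lemma un_facts {q a s : Fin n → Fin n → ℕ} (hs : IsPerm n s) :
    (∀ i, ∑ j, un q a s i j ≤ 1) ∧ (∀ j, ∑ i, un q a s i j ≤ 1) ∧
    0 ≤ tot (un q a s) ∧ tot (un q a s) ≤ n := by
  have h1 : ∀ i, ∑ j, un q a s i j ≤ 1 := fun i => by
    have : ∑ j, (s i j : ℝ) = 1 := by exact_mod_cast hs.2.1 i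
    rw [← this]
    exact Finset.sum_le_sum fun j _ => un_le hs.1 i j
  have h2 : ∀ j, ∑ i, un q a s i j ≤ 1 := fun j => by
    have : ∑ i, (s i j : ℝ) = 1 := by exact_mod_cast hs.2.2 j
    rw [← this]
    exact Finset.sum_le_sum fun i _ => un_le hs.1 i j
  refine ⟨h1, h2, ?_, ?_⟩
  · exact Finset.sum_nonneg fun i _ => Finset.sum_nonneg fun j _ => un_nonneg hs.1 i j
  · calc tot (un q a s) ≤ ∑ _i : Fin n, (1:ℝ) := Finset.sum_le_sum fun i _ => h1 i
      _ = n := by simp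

/-- pointwise bound on the error terms -/
lemma err_bound (hn : 1 ≤ n) {q a s : Fin n → Fin n → ℕ} (hs : IsPerm n s) {η : ℝ} (hη : 0 < η) :
    |2 * ip (GG (toR n (nextQ n q a s))) (un q a s) - ip (GG (un q a s)) (un q a s)| ≤
      (n * (n + 2)) * (η * ip (res (toR n (nextQ n q a s))) (res (toR n (nextQ n q a s))) +
        n * tot (un q a s) / η) + 2 * tot (un q a s) := by
  obtain ⟨hr, hc, ht0, htn⟩ := un_facts (q := q) (a := a) hs
  have hu0 := un_nonneg (q := q) (a := a) hs.1
  have hqu := ip_next_un (q := q) (a := a) hs.1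
  set u := un q a s with hu
  set x := toR n (nextQ n q a s) with hx
  set r := res x with hrr
  set T := tot u with hT
  have hnR : (1 : ℝ) ≤ n := by exact_mod_cast hn
  have hr0 : ∀ i, 0 ≤ ∑ j, u i j := fun i => Finset.sum_nonneg fun j _ => hu0 i j
  have hc0 : ∀ j, 0 ≤ ∑ i, u i j := fun j => Finset.sum_nonneg fun i _ => hu0 i j
  have hrT : ∀ i, ∑ j, u i j ≤ T := fun i =>
    Finset.single_le_sum (f := fun i => ∑ j, u i j) (fun i _ => hr0 i) (Finset.mem_univ i)
  have hT' : T = ∑ j, ∑ i, u i j := by rw [hT, tot, Finset.sum_comm]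
  have hcT : ∀ j, ∑ i, u i j ≤ T := fun j => by
    rw [hT']
    exact Finset.single_le_sum (f := fun j => ∑ i, u i j) (fun j _ => hc0 j) (Finset.mem_univ j)
  have huT : ∀ i j, u i j ≤ T := fun i j =>
    (Finset.single_le_sum (f := fun j => u i j) (fun j _ => hu0 i j) (Finset.mem_univ j)).trans
      (hrT i)
  have hTn0 : 0 ≤ T / n := by positivity
  have hTn1 : T / n ≤ 1 := by rw [div_le_one (by positivity)]; exact htn
  have hTnT : T / n ≤ T := div_le_self ht0 hnR
  -- second term
  have b2 : |ip (GG u) u| ≤ 2 * T := by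
    have hG : ∀ i j, |GG u i j| ≤ 2 := by
      intro i j
      have e : GG u i j = (∑ l, u i l) + (∑ k, u k j) - T / n := rfl
      rw [e, abs_le]
      constructor <;> linarith [hr i, hc j, hr0 i, hc0 j]
    calc |ip (GG u) u| ≤ ∑ i, ∑ j, 2 * u i j := by
          refine (Finset.abs_sum_le_sum_abs _ _).trans (Finset.sum_le_sum fun i _ => ?_)
          refine (Finset.abs_sum_le_sum_abs _ _).trans (Finset.sum_le_sum fun j _ => ?_)
          rw [abs_mul, abs_of_nonneg (hu0 i j)]
          exact mul_le_mul_of_nonneg_right (hG i j) (hu0 i j)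
      _ = 2 * T := by simp only [← Finset.mul_sum]; rfl
  -- first term
  have hxp : x = prj x + r := by rw [hrr, res]; abel
  have e1 : ip (GG x) u = ip r (GG u - (n : ℝ) • u) := by
    rw [ip_sub_right, ip_smul_right, ← ip_GG_symm]
    have h1 : ip (GG x) u = ip (GG (prj x)) u + ip (GG r) u := by
      conv_lhs => rw [hxp]
      rw [GG_add, ip_add_left]
    have h2 : ip x u = ip (prj x) u + ip r u := by
      conv_lhs => rw [hxp]
      rw [ip_add_left]
    have h3 := cone_ip (prj_mem x) u
    rw [h1, ← h3]
    have h4 : ip (prj x) u = - ip r u := by linarith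
    rw [h4]; ring
  set y := GG u - (n : ℝ) • u with hy
  have hyb : ∀ i j, |y i j| ≤ (n + 2) * T := by
    intro i j
    have e : y i j = (∑ l, u i l) + (∑ k, u k j) - T / n - n * u i j := rfl
    have h1 := mul_le_mul_of_nonneg_left (huT i j) (by positivity : (0:ℝ) ≤ n)
    have h2 := mul_nonneg (by positivity : (0:ℝ) ≤ n) (hu0 i j)
    have h3 := mul_nonneg (by positivity : (0:ℝ) ≤ n) ht0
    rw [e, abs_le]
    constructor <;> linarith [hrT i, hcT j, hr0 i, hc0 j]
  have hyy : √(ip y y) ≤ n * (n + 2) * T := by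
    rw [Real.sqrt_le_left (by positivity)]
    calc _ ≤ _ := ip_self_le hyb
      _ = _ := by ring
  have hX0 := ip_self_nonneg r
  set D := √(ip r r) with hD
  have hDD : D ^ 2 = ip r r := Real.sq_sqrt hX0
  have hD0 : 0 ≤ D := Real.sqrt_nonneg _
  have b1 : |ip (GG x) u| ≤ D * (n * (n + 2) * T) := by
    rw [e1]
    exact (abs_ip_le r y).trans (mul_le_mul_of_nonneg_left hyy hD0)
  have amgm : 2 * (D * T) ≤ η * ip r r + n * T / η := by
    rw [← hDD]
    have h1 : T ^ 2 / η ≤ n * T / η := by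
      apply div_le_div_of_nonneg_right _ hη.le
      nlinarith
    have h2 : 2 * (D * T) ≤ η * D ^ 2 + T ^ 2 / η := by
      have h3 : η * D ^ 2 + T ^ 2 / η - 2 * (D * T) = (η * D - T) ^ 2 / η := by
        field_simp
        ring
      have h4 : 0 ≤ (η * D - T) ^ 2 / η := by positivity
      linarith
    linarith
  have am2 := mul_le_mul_of_nonneg_left amgm (by positivity : (0:ℝ) ≤ n * (n + 2))
  calc _ ≤ |2 * ip (GG x) u| + |ip (GG u) u| := abs_sub _ _
    _ = 2 * |ip (GG x) u| + |ip (GG u) u| := by rw [abs_mul, abs_two]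
    _ ≤ _ := by linarith

lemma tot_add (x y : Fin n → Fin n → ℝ) : tot (x + y) = tot x + tot y := by
  simp [tot, Finset.sum_add_distrib]

lemma tot_eq_ip (x : Fin n → Fin n → ℝ) : tot x = ip (one1 n) x := by
  rw [ip_comm, ip_one1, tot]

/-- Quadratic test function bound. -/
lemma V_bound (hn : 1 ≤ n) (x : Fin n → Fin n → ℝ) : |ip (GG x) x| ≤ 3 * n ^ 2 * ip x x := by
  have hnR : (1 : ℝ) ≤ n := by exact_mod_cast hn
  set D := √(ip x x) with hD
  have hD0 : 0 ≤ D := Real.sqrt_nonneg _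
  have hDD : D * D = ip x x := Real.mul_self_sqrt (ip_self_nonneg x)
  have hb : ∀ i j, |x i j| ≤ D := abs_le_sqrt_ip x
  have h1 : ∀ i, |∑ j, x i j| ≤ n * D := fun i =>
    (Finset.abs_sum_le_sum_abs _ _).trans
      ((Finset.sum_le_sum fun j _ => hb i j).trans (by simp))
  have h2 : ∀ j, |∑ i, x i j| ≤ n * D := fun j =>
    (Finset.abs_sum_le_sum_abs _ _).trans
      ((Finset.sum_le_sum fun i _ => hb i j).trans (by simp))
  have h3 : |(∑ i, ∑ j, x i j) / n| ≤ n * D := by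
    rw [abs_div, Nat.abs_cast, div_le_iff₀ (by positivity)]
    refine (Finset.abs_sum_le_sum_abs _ _).trans
      ((Finset.sum_le_sum fun i _ => h1 i).trans ?_)
    simp
    linarith
  have hG : ∀ i j, |GG x i j| ≤ 3 * n * D := by
    intro i j
    have e : GG x i j = (∑ l, x i l) + (∑ k, x k j) - (∑ k, ∑ l, x k l) / n := rfl
    have a1 := abs_le.1 (h1 i)
    have a2 := abs_le.1 (h2 j)
    have a3 := abs_le.1 h3
    rw [e, abs_le]
    constructor <;> linarith [a1.1, a1.2, a2.1, a2.2, a3.1, a3.2]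
  have hGG : √(ip (GG x) (GG x)) ≤ 3 * n ^ 2 * D := by
    rw [Real.sqrt_le_left (by positivity)]
    calc _ ≤ _ := ip_self_le hG
      _ = _ := by ring
  calc _ ≤ _ := abs_ip_le _ _
    _ ≤ 3 * n ^ 2 * D * D := mul_le_mul_of_nonneg_right hGG hD0
    _ = _ := by rw [mul_assoc, hDD]

lemma int_comb {α : Type*} [MeasurableSpace α] {m : Measure α} {f g : α → ℝ}
    (hf : Integrable f m) (hg : Integrable g m) (a b c d : ℝ) :
    ∫ x, (c * (a * f x + b * g x) + d * g x) ∂m =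
      c * (a * (∫ x, f x ∂m) + b * (∫ x, g x ∂m)) + d * (∫ x, g x ∂m) := by
  have h1 : Integrable (fun x => a * f x + b * g x) m := (hf.const_mul a).add (hg.const_mul b)
  rw [integral_add (h1.const_mul c) (hg.const_mul d), integral_const_mul, integral_const_mul,
    integral_add (hf.const_mul a) (hg.const_mul b), integral_const_mul, integral_const_mul]

lemma ip_sub_self {n : ℕ} (x y : Fin n → Fin n → ℝ) :
    ip (x - y) (x - y) = ip x x - 2 * ip x y + ip y y := by
  rw [ip_sub_left, ip_sub_right, ip_sub_right, ip_comm y x]; ring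

lemma main_est [IsProbabilityMeasure μ] (hn : 1 ≤ n) {ν : Fin n → Fin n → ℝ} (hν : memF n ν)
    {ε : ℝ} (hε : 0 < ε)
    (hL : Law n Bx w (fun i j => (1 - ε) * ν i j) sig amax)
    (hμ : Inv Bx w (fun q a => nextQ n q a (S q)) μ)
    (hS : ∀ q, IsPerm n (S q)) {N : ℝ} (hN : 0 ≤ N)
    (hX : ∫⁻ q, ENNReal.ofReal (ip (res (toR n q)) (res (toR n q))) ∂μ ≤ ENNReal.ofReal N)
    (hH : ∫⁻ q, ENNReal.ofReal (ip (toR n q) (toR n q)) ∂μ < ⊤) :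
    Integrable (fun q => tot (toR n q)) μ ∧
    |2 * ε * (∫ q, tot (toR n q) ∂μ) - (2 - 1 / n) * ∑ i, ∑ j, sig i j ^ 2| ≤
      n * ε ^ 2 + (n * (n + 2)) * (N + n ^ 2) * √ε + 2 * n * ε := by
  have hnR : (1 : ℝ) ≤ n := by exact_mod_cast hn
  have hHi : Integrable (fun q => ip (toR n q) (toR n q)) μ := by
    refine ⟨(measurable_of_countable _).aestronglyMeasurable, ?_⟩
    rw [hasFiniteIntegral_iff_ofReal (Filter.Eventually.of_forall fun q => ip_self_nonneg _)]
    exact hH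
  have dom : ∀ (g : (Fin n → Fin n → ℕ) → ℝ) (c : ℝ), 0 ≤ c →
      (∀ q, |g q| ≤ c * ip (toR n q) (toR n q)) →
      Integrable g μ ∧ ∀ a ∈ Bx, Integrable (fun q => g (nextQ n q a (S q))) μ := by
    intro g c hc hg
    refine ⟨?_, fun a ha => ?_⟩
    · refine (hHi.const_mul c).mono' (measurable_of_countable _).aestronglyMeasurable
        (Filter.Eventually.of_forall hg)
    · refine (((hHi.const_mul 2).add (integrable_const (2 * MM n amax))).const_mul c).mono'
        (measurable_of_countable _).aestronglyMeasurable (Filter.Eventually.of_forall fun q => ?_)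
      refine (hg _).trans (mul_le_mul_of_nonneg_left ?_ hc)
      have h1 := step_q (q := q) (hS q).1 (hL.bdd a ha)
      have h2 := z_bound (hS q).1 (hL.bdd a ha)
      have h3 := ip_self_nonneg (toR n q - (toR n a - toR n (S q)))
      rw [ip_sub_self] at h3
      simp only [Pi.add_apply]
      linarith
  have hT0 : ∀ q, 0 ≤ tot (toR n q) := fun q =>
    Finset.sum_nonneg fun i _ => Finset.sum_nonneg fun j _ => Nat.cast_nonneg _
  obtain ⟨iT, iTn⟩ := dom (fun q => tot (toR n q)) 1 zero_le_one (fun q => by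
    rw [abs_of_nonneg (hT0 q), one_mul]
    refine Finset.sum_le_sum fun i _ => Finset.sum_le_sum fun j _ => ?_
    simp only [toR]
    exact_mod_cast Nat.le_mul_self _)
  obtain ⟨iV, iVn⟩ := dom (fun q => ip (GG (toR n q)) (toR n q)) (3 * n ^ 2) (by positivity)
    (fun q => V_bound hn _)
  obtain ⟨iX, iXn⟩ := dom (fun q => ip (res (toR n q)) (res (toR n q))) 1 zero_le_one (fun q => by
    rw [abs_of_nonneg (ip_self_nonneg _), one_mul]
    have := res_min (toR n q) 0 cone_zero
    rwa [sub_zero] at this)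
  have sumi : ∀ (g : (Fin n → Fin n → ℕ) → ℝ),
      (∀ a ∈ Bx, Integrable (fun q => g (nextQ n q a (S q))) μ) →
      Integrable (fun q => ∑ a ∈ Bx, w a * g (nextQ n q a (S q))) μ := fun g hg =>
    integrable_finsetSum _ fun a ha => (hg a ha).const_mul _
  have sT := sumi (fun q => tot (toR n q)) iTn
  have sV := sumi (fun q => ip (GG (toR n q)) (toR n q)) iVn
  have sX := sumi (fun q => ip (res (toR n q)) (res (toR n q))) iXn
  have inT := inv_int hμ hL.nonneg (fun q => tot (toR n q)) iTn
  have inV := inv_int hμ hL.nonneg (fun q => ip (GG (toR n q)) (toR n q)) iVn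
  have inX := inv_int hμ hL.nonneg (fun q => ip (res (toR n q)) (res (toR n q))) iXn
  have hXN : ∫ q, ip (res (toR n q)) (res (toR n q)) ∂μ ≤ N := by
    rw [← ofReal_integral_eq_lintegral_ofReal iX
      (Filter.Eventually.of_forall fun q => ip_self_nonneg _)] at hX
    exact (ENNReal.ofReal_le_ofReal_iff hN).1 hX
  -- abbreviations
  set K : ℝ := (2 - 1 / n) * (∑ i, ∑ j, sig i j ^ 2) + n * ε ^ 2 with hK
  have hds : ∀ q, (∀ i, ∑ j, toR n (S q) i j = 1) ∧ (∀ j, ∑ i, toR n (S q) i j = 1) := fun q =>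
    ⟨fun i => by simp only [toR]; exact_mod_cast (hS q).2.1 i,
      fun j => by simp only [toR]; exact_mod_cast (hS q).2.2 j⟩
  -- total drift
  have dT : ∀ q, ∑ a ∈ Bx, w a * tot (toR n (nextQ n q a (S q))) =
      tot (toR n q) - n * ε + ∑ a ∈ Bx, w a * tot (un q a (S q)) := by
    intro q
    have h1 : ∀ a, w a * tot (toR n (nextQ n q a (S q))) = w a * tot (toR n q) +
        w a * ip (one1 n) (toR n a - toR n (S q)) + w a * tot (un q a (S q)) := by
      intro a
      rw [next_eq, tot_add, tot_add, tot_eq_ip (toR n a - toR n (S q))]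
      ring
    simp only [h1, Finset.sum_add_distrib, law_const hL, law_ip hL]
    have h2 : ip (one1 n) ((fun i j => (1 - ε) * ν i j) - toR n (S q)) = - (n * ε) := by
      rw [← tot_eq_ip, tot]
      simp only [Pi.sub_apply, Finset.sum_sub_distrib, ← Finset.mul_sum, hν.2.1, (hds q).1]
      simp
      ring
    rw [h2]; ring
  have dV : ∀ q, ∑ a ∈ Bx, w a * ip (GG (toR n (nextQ n q a (S q)))) (toR n (nextQ n q a (S q))) =
      ip (GG (toR n q)) (toR n q) - 2 * ε * tot (toR n q) + K +
        ∑ a ∈ Bx, w a * (2 * ip (GG (toR n (nextQ n q a (S q)))) (un q a (S q)) -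
          ip (GG (un q a (S q))) (un q a (S q))) := by
    intro q
    have h1 : ∀ a, w a * ip (GG (toR n (nextQ n q a (S q)))) (toR n (nextQ n q a (S q))) =
        w a * ip (GG (toR n q)) (toR n q) +
        2 * (w a * ip (GG (toR n q)) (toR n a - toR n (S q))) +
        w a * ip (GG (toR n a - toR n (S q))) (toR n a - toR n (S q)) +
        w a * (2 * ip (GG (toR n (nextQ n q a (S q)))) (un q a (S q)) -
          ip (GG (un q a (S q))) (un q a (S q))) := by
      intro a
      rw [next_eq]
      set x := toR n q
      set z := toR n a - toR n (S q)
      set u := un q a (S q)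
      simp only [GG_add, ip_add_left, ip_add_right]
      rw [ip_GG_symm z x, ip_comm z (GG x), ip_GG_symm u x, ip_comm u (GG x),
        ip_GG_symm u z, ip_comm u (GG z)]
      ring
    simp only [h1, Finset.sum_add_distrib, ← Finset.mul_sum, law_const hL, law_ip hL,
      law_quad_z hn hν hL (hS q)]
    have h2 : ip (GG (toR n q)) ((fun i j => (1 - ε) * ν i j) - toR n (S q)) =
        - (ε * tot (toR n q)) := by
      have h3 : ((fun i j => (1 - ε) * ν i j) : Fin n → Fin n → ℝ) = (1 - ε) • ν := rfl
      rw [ip_GG_symm, GG_sub, h3, GG_smul, GG_ds hn hν.2.1 hν.2.2,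
        GG_ds hn (hds q).1 (hds q).2, ip_sub_right, ip_smul_right, ip_one1, tot]
      ring
    rw [h2]; ring
  set tu : (Fin n → Fin n → ℕ) → ℝ := fun q => ∑ a ∈ Bx, w a * tot (un q a (S q)) with htu
  set er : (Fin n → Fin n → ℕ) → ℝ := fun q => ∑ a ∈ Bx,
    w a * (2 * ip (GG (toR n (nextQ n q a (S q)))) (un q a (S q)) -
          ip (GG (un q a (S q))) (un q a (S q))) with her
  have tu_eq : tu = fun q => ∑ a ∈ Bx, w a * tot (toR n (nextQ n q a (S q))) -
      (tot (toR n q) - n * ε) := by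
    funext q
    rw [dT q]
    simp only [htu]; ring
  have er_eq : er = fun q => ∑ a ∈ Bx, w a *
      ip (GG (toR n (nextQ n q a (S q)))) (toR n (nextQ n q a (S q))) -
      (ip (GG (toR n q)) (toR n q) - 2 * ε * tot (toR n q) + K) := by
    funext q
    rw [dV q]
    simp only [her]; ring
  have i1 : Integrable (fun q => tot (toR n q) - n * ε) μ := iT.sub (integrable_const _)
  have i2a : Integrable (fun q => ip (GG (toR n q)) (toR n q) - 2 * ε * tot (toR n q)) μ :=
    iV.sub (iT.const_mul _)
  have i2 : Integrable (fun q => ip (GG (toR n q)) (toR n q) - 2 * ε * tot (toR n q) + K) μ :=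
    i2a.add (integrable_const _)
  have tu_int : Integrable tu μ := by rw [tu_eq]; exact sT.sub i1
  have er_int : Integrable er μ := by rw [er_eq]; exact sV.sub i2
  have tu_val : ∫ q, tu q ∂μ = n * ε := by
    rw [tu_eq, integral_sub sT i1, inT, integral_sub iT (integrable_const _)]
    simp
  have er_val : ∫ q, er q ∂μ = 2 * ε * (∫ q, tot (toR n q) ∂μ) - K := by
    rw [er_eq, integral_sub sV i2, inV, integral_add i2a (integrable_const _),
      integral_sub iV (iT.const_mul _), integral_const_mul]
    simp
    ring
  have hη : 0 < √ε := Real.sqrt_pos.2 hε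
  have er_le : ∀ q, |er q| ≤ (n * (n + 2)) * (√ε * (∑ a ∈ Bx, w a *
      ip (res (toR n (nextQ n q a (S q)))) (res (toR n (nextQ n q a (S q))))) +
        n / √ε * tu q) + 2 * tu q := by
    intro q
    have h1 : |er q| ≤ ∑ a ∈ Bx, w a * ((n * (n + 2)) *
      (√ε * ip (res (toR n (nextQ n q a (S q)))) (res (toR n (nextQ n q a (S q)))) +
        n * tot (un q a (S q)) / √ε) + 2 * tot (un q a (S q))) := by
      refine (Finset.abs_sum_le_sum_abs _ _).trans (Finset.sum_le_sum fun a _ => ?_)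
      rw [abs_mul, abs_of_nonneg (hL.nonneg a)]
      exact mul_le_mul_of_nonneg_left (err_bound hn (hS q) hη) (hL.nonneg a)
    refine h1.trans (le_of_eq ?_)
    simp only [htu, Finset.mul_sum, ← Finset.sum_add_distrib]
    refine Finset.sum_congr rfl fun a _ => ?_
    ring
  have ib : Integrable (fun q => (n * (n + 2)) * (√ε * (∑ a ∈ Bx, w a *
      ip (res (toR n (nextQ n q a (S q)))) (res (toR n (nextQ n q a (S q))))) +
        n / √ε * tu q) + 2 * tu q) μ :=
    (((sX.const_mul _).add (tu_int.const_mul _)).const_mul _).add (tu_int.const_mul _)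
  have hfin : |∫ q, er q ∂μ| ≤ (n * (n + 2)) * (√ε * N + n / √ε * (n * ε)) + 2 * (n * ε) := by
    calc |∫ q, er q ∂μ| ≤ ∫ q, |er q| ∂μ := abs_integral_le_integral_abs
      _ ≤ _ := integral_mono er_int.abs ib er_le
      _ = (n * (n + 2)) * (√ε * (∫ q, ip (res (toR n q)) (res (toR n q)) ∂μ) +
          n / √ε * (n * ε)) + 2 * (n * ε) := by
        rw [int_comb sX tu_int, inX, tu_val]
      _ ≤ _ := by gcongr
  refine ⟨iT, ?_⟩
  rw [er_val] at hfin
  have hss : n / √ε * (n * ε) = n ^ 2 * √ε := by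
    have : ε = √ε * √ε := (Real.mul_self_sqrt hε.le).symm
    field_simp
    rw [Real.sq_sqrt hε.le]
  rw [hss] at hfin
  have e0 : 0 ≤ n * ε ^ 2 := by positivity
  have e3 := abs_le.1 hfin
  rw [abs_le]
  constructor
  · linarith [e3.1, e3.2]
  · linarith [e3.1, e3.2]

end Main

end SwitchModel

namespace SwitchModel

open MeasureTheory

lemma eps_est {n : ℕ} (hn : 1 ≤ n) {ν : Fin n → Fin n → ℝ} (hν : memF n ν) {νmin ε : ℝ}
    (hmin : ∀ i j, νmin ≤ ν i j) (hpos : 0 < νmin) (hε0 : 0 < ε)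
    (hε : ε * normE n ν ≤ νmin / 2) {amax : ℕ}
    {A : Fin n → Fin n → ℕ → ℝ≥0∞} {sig : Fin n → Fin n → ℝ}
    {sched : (Fin n → Fin n → ℕ) → (Fin n → Fin n → ℕ)} {pd : (Fin n → Fin n → ℕ) → ℝ≥0∞}
    (hA : ArrivalDist n A (fun i j => (1 - ε) * ν i j) sig amax) (hM : IsMaxWeight n sched)
    (hI : IsInvariant n (kernelMW n A sched) pd) :
    ∃ T : ℝ, ENNReal.ofReal ε * Etot n pd = ENNReal.ofReal (ε * T) ∧
      |ε * T - (1 - 1 / (2 * n)) * ∑ i, ∑ j, sig i j ^ 2| ≤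
        (n * ε ^ 2 + (n * (n + 2)) * (LB (MM n amax) (νmin / 2) + n ^ 2) * √ε + 2 * n * ε) / 2 := by
  have hnR : (1 : ℝ) ≤ n := by exact_mod_cast hn
  have hL := law_of_arrival hA
  have hμ := inv_of_invariant hA hI
  haveI : IsProbabilityMeasure (stM pd) := ⟨by
    rw [stM_apply]; simpa using hI.1⟩
  have hX := lyap hL hμ (fun q => (hM q).1.1) (fun q => res (toR n q)) (δ := νmin / 2)
    (by positivity) (fun q a ha => step_res (hM q).1.1 (hL.bdd a ha))
    (fun q => drift_res hn (hM q).1 (hM q).2 hν hmin hpos hε0 hε)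
  have hH := lyap hL hμ (fun q => (hM q).1.1) (fun q => toR n q) (δ := ε * νmin)
    (by positivity) (fun q a ha => step_q (hM q).1.1 (hL.bdd a ha))
    (fun q => drift_q (hM q).2 hν hmin hpos hε0)
  have hN : 0 ≤ LB (MM n amax) (νmin / 2) := by
    have := MM_nonneg n amax
    unfold LB; positivity
  obtain ⟨hi, hb⟩ := main_est hn hν hε0 hL hμ (fun q => (hM q).1) hN hX
    (hH.trans_lt ENNReal.ofReal_lt_top)
  refine ⟨∫ q, tot (toR n q) ∂(stM pd), ?_, ?_⟩
  · rw [ENNReal.ofReal_mul hε0.le, ofReal_integral_eq_lintegral_ofReal hi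
      (Filter.Eventually.of_forall fun q => Finset.sum_nonneg fun i _ =>
        Finset.sum_nonneg fun j _ => Nat.cast_nonneg _), lint_stM, Etot]
    congr 1
    refine tsum_congr fun q => ?_
    congr 1
    simp only [tot, toR]
    rw [ENNReal.ofReal_sum_of_nonneg (fun i _ =>
        Finset.sum_nonneg fun j _ => Nat.cast_nonneg _)]
    refine Finset.sum_congr rfl fun i _ => ?_
    rw [ENNReal.ofReal_sum_of_nonneg (fun j _ => Nat.cast_nonneg _)]
    refine Finset.sum_congr rfl fun j _ => ?_
    simp
  · have e : ∀ T s : ℝ, ε * T - (1 - 1 / (2 * n)) * s = (2 * ε * T - (2 - 1 / n) * s) / 2 := by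
      intro T s
      field_simp
    rw [e, abs_div, abs_of_pos (zero_lt_two' ℝ)]
    exact div_le_div_of_nonneg_right hb zero_le_two

end SwitchModel

open SwitchModel Filter

/-- Theorem 5.2, heavy-traffic limit version: under MaxWeight,
`ε · E[∑ q̄] → (1 − 1/(2n))‖σ‖²` as `ε ↓ 0`. -/
theorem maxweight_heavy_traffic_limit
    (n : ℕ) (hn : 1 ≤ n)
    (ν : Fin n → Fin n → ℝ) (hν : memF n ν)
    (νmin : ℝ) (hνmin : IsLeast {x : ℝ | ∃ i j : Fin n, ν i j = x} νmin)
    (hνminpos : 0 < νmin)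
    (amax : ℕ) (hamax : 1 ≤ amax)
    (A : ℝ → Fin n → Fin n → ℕ → ℝ≥0∞)
    (sig : ℝ → Fin n → Fin n → ℝ)
    (sched : ℝ → (Fin n → Fin n → ℕ) → (Fin n → Fin n → ℕ))
    (pd : ℝ → (Fin n → Fin n → ℕ) → ℝ≥0∞)
    (hsys : ∀ ε ∈ Set.Ioc (0 : ℝ) (νmin / (2 * normE n ν)),
      ArrivalDist n (A ε) (fun i j => (1 - ε) * ν i j) (sig ε) amax ∧
      IsMaxWeight n (sched ε) ∧
      IsInvariant n (kernelMW n (A ε) (sched ε)) (pd ε))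
    (sigma : Fin n → Fin n → ℝ)
    (hconv : ∀ i j, Tendsto (fun ε => (sig ε i j) ^ 2)
      (nhdsWithin 0 (Set.Ioi (0 : ℝ))) (nhds ((sigma i j) ^ 2))) :
    Tendsto (fun ε : ℝ => ENNReal.ofReal ε * Etot n (pd ε))
      (nhdsWithin 0 (Set.Ioi (0 : ℝ)))
      (nhds (ENNReal.ofReal ((1 - 1 / (2 * n)) * (∑ i, ∑ j, (sigma i j) ^ 2)))) := by
  have hmin : ∀ i j, νmin ≤ ν i j := fun i j => hνmin.2 ⟨i, j, rfl⟩
  have i0 : Fin n := ⟨0, hn⟩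
  have hnorm : 0 < normE n ν := by
    refine Real.sqrt_pos.2 ?_
    have hp : ∀ i j, 0 < ν i j ^ 2 := fun i j => pow_pos (hνminpos.trans_le (hmin i j)) 2
    exact Finset.sum_pos (fun i _ => Finset.sum_pos (fun j _ => hp i j) ⟨i0, Finset.mem_univ _⟩)
      ⟨i0, Finset.mem_univ _⟩
  have hest : ∀ ε, ∃ T : ℝ, ε ∈ Set.Ioc (0 : ℝ) (νmin / (2 * normE n ν)) →
      (ENNReal.ofReal ε * Etot n (pd ε) = ENNReal.ofReal (ε * T) ∧
      |ε * T - (1 - 1 / (2 * n)) * ∑ i, ∑ j, sig ε i j ^ 2| ≤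
        (n * ε ^ 2 + (n * (n + 2)) * (LB (MM n amax) (νmin / 2) + n ^ 2) * √ε + 2 * n * ε) / 2) := by
    intro ε
    by_cases h : ε ∈ Set.Ioc (0 : ℝ) (νmin / (2 * normE n ν))
    · obtain ⟨h1, h2, h3⟩ := hsys ε h
      have hε : ε * normE n ν ≤ νmin / 2 := by
        have := (le_div_iff₀ (by positivity)).1 h.2
        linarith
      obtain ⟨T, hT⟩ := eps_est hn hν hmin hνminpos h.1 hε h1 h2 h3
      exact ⟨T, fun _ => hT⟩
    · exact ⟨0, fun h' => absurd h' h⟩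
  choose T hT using hest
  have hev : ∀ᶠ ε in nhdsWithin (0 : ℝ) (Set.Ioi 0),
      ε ∈ Set.Ioc (0 : ℝ) (νmin / (2 * normE n ν)) :=
    Ioc_mem_nhdsGT (by positivity)
  have hB : Tendsto (fun ε : ℝ => (n * ε ^ 2 +
      (n * (n + 2)) * (LB (MM n amax) (νmin / 2) + n ^ 2) * √ε + 2 * n * ε) / 2)
      (nhdsWithin 0 (Set.Ioi (0 : ℝ))) (nhds 0) := by
    have hc : Continuous (fun ε : ℝ => ((n : ℝ) * ε ^ 2 +
      (n * (n + 2)) * (LB (MM n amax) (νmin / 2) + n ^ 2) * √ε + 2 * n * ε) / 2) := by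
      fun_prop
    have := hc.tendsto 0
    simp only [Real.sqrt_zero] at this
    norm_num at this
    exact this.mono_left nhdsWithin_le_nhds
  have hS : Tendsto (fun ε => (1 - 1 / (2 * (n : ℝ))) * ∑ i, ∑ j, sig ε i j ^ 2)
      (nhdsWithin 0 (Set.Ioi (0 : ℝ)))
      (nhds ((1 - 1 / (2 * (n : ℝ))) * ∑ i, ∑ j, sigma i j ^ 2)) :=
    (tendsto_finsetSum _ fun i _ => tendsto_finsetSum _ fun j _ => hconv i j).const_mul _
  have hD : Tendsto (fun ε => ε * T ε - (1 - 1 / (2 * (n : ℝ))) * ∑ i, ∑ j, sig ε i j ^ 2)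
      (nhdsWithin 0 (Set.Ioi (0 : ℝ))) (nhds 0) :=
    squeeze_zero_norm' (hev.mono fun ε h => (hT ε h).2) hB
  have hfin := hD.add hS
  simp only [sub_add_cancel, zero_add] at hfin
  refine (ENNReal.tendsto_ofReal hfin).congr' (hev.mono fun ε h => ?_)
  exact (hT ε h).1.symm
end

section
/- MaxWeight queue-length bounds for uniform Bernoulli traffic (Theorem 6.1, MaxWeight part). Fix n ≥ 1 and 0 < ε ≤ 1/(2n), and suppose each arrival entry a_{ij} is Bernoulli with P(a_{ij}=1) = (1−ε)/n (entries independent). Let π be an invariant distribution of the MaxWeight Markov chain. Then for every integer r ≥ 2: (1/ε)·(n − 3/2 + 1/(2n)) − B̃₁ ≤ E_π[∑_{ij} q̄_{ij}] ≤ (1/ε)·(n − 3/2 + 1/(2n)) + B̃₂, where M̃_r = (2√r·e)^{1/r}·16·(r/e)·n²·(n+1), B̃₁ = (1 − ε/2)(n − 2 + 1/n) + n − 1/2 + 3·n^{2−1/r}·ε^{−1/r}·M̃_r, and B̃₂ = −(1 − ε/2)(n − 2 + 1/n) + (n+1)/2 + 2·n^{2−1/r}·ε^{−1/r}·M̃_r.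 -/
open scoped BigOperators ENNReal

open SwitchModel

namespace MWProof

/-- Arrival patterns as Boolean functions. -/
abbrev Arr (n : ℕ) := Fin n × Fin n → Bool

/-- Arrival matrix of a pattern. -/
def am (n : ℕ) (b : Arr n) : Fin n → Fin n → ℕ := fun i j => if b (i, j) then 1 else 0

/-- Probability of an arrival pattern. -/
noncomputable def pw (n : ℕ) (lam : ℝ) (b : Arr n) : ℝ := ∏ k, if b k then lam else 1 - lam

/-- Expectation over arrivals. -/
noncomputable def Ea (n : ℕ) (lam : ℝ) (f : Arr n → ℝ) : ℝ := ∑ b, pw n lam b * f b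

lemma pw_nonneg {n : ℕ} {lam : ℝ} (h0 : 0 ≤ lam) (h1 : lam ≤ 1) (b : Arr n) : 0 ≤ pw n lam b := by
  unfold pw
  apply Finset.prod_nonneg
  intro k _
  split_ifs <;> linarith

lemma Ea_prod (n : ℕ) (lam : ℝ) (g : Fin n × Fin n → Bool → ℝ) :
    Ea n lam (fun b => ∏ k, g k (b k)) = ∏ k, (lam * g k true + (1 - lam) * g k false) := by
  have h := Finset.prod_univ_sum (fun _ : Fin n × Fin n => (Finset.univ : Finset Bool))
    (fun k v => (if v then lam else 1 - lam) * g k v)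
  simp only [Fintype.piFinset_univ] at h
  unfold Ea pw
  simp only [Finset.prod_mul_distrib] at h
  rw [← h]
  simp

lemma Ea_one (n : ℕ) (lam : ℝ) : Ea n lam (fun _ => 1) = 1 := by
  have := Ea_prod n lam (fun _ _ => 1)
  simpa using this

lemma Ea_add (n : ℕ) (lam : ℝ) (f g : Arr n → ℝ) :
    Ea n lam (fun b => f b + g b) = Ea n lam f + Ea n lam g := by
  simp [Ea, mul_add, Finset.sum_add_distrib]

lemma Ea_sub (n : ℕ) (lam : ℝ) (f g : Arr n → ℝ) :
    Ea n lam (fun b => f b - g b) = Ea n lam f - Ea n lam g := by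
  simp [Ea, mul_sub, Finset.sum_sub_distrib]

lemma Ea_const_mul (n : ℕ) (lam c : ℝ) (f : Arr n → ℝ) :
    Ea n lam (fun b => c * f b) = c * Ea n lam f := by
  simp only [Ea, Finset.mul_sum]
  exact Finset.sum_congr rfl fun _ _ => by ring

lemma Ea_const (n : ℕ) (lam c : ℝ) : Ea n lam (fun _ => c) = c := by
  have := Ea_const_mul n lam c (fun _ => 1)
  simpa [Ea_one] using this

lemma Ea_sum {ι : Type*} (n : ℕ) (lam : ℝ) (s : Finset ι) (f : ι → Arr n → ℝ) :
    Ea n lam (fun b => ∑ i ∈ s, f i b) = ∑ i ∈ s, Ea n lam (f i) := by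
  simp only [Ea, Finset.mul_sum]
  rw [Finset.sum_comm]

lemma Ea_mono {n : ℕ} {lam : ℝ} (h0 : 0 ≤ lam) (h1 : lam ≤ 1) {f g : Arr n → ℝ}
    (h : ∀ b, f b ≤ g b) : Ea n lam f ≤ Ea n lam g := by
  unfold Ea
  exact Finset.sum_le_sum fun b _ => mul_le_mul_of_nonneg_left (h b) (pw_nonneg h0 h1 b)

lemma Ea_nonneg {n : ℕ} {lam : ℝ} (h0 : 0 ≤ lam) (h1 : lam ≤ 1) {f : Arr n → ℝ}
    (h : ∀ b, 0 ≤ f b) : 0 ≤ Ea n lam f :=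
  Finset.sum_nonneg fun b _ => mul_nonneg (pw_nonneg h0 h1 b) (h b)

/-- Real indicator of an arrival. -/
def ar (n : ℕ) (b : Arr n) (k : Fin n × Fin n) : ℝ := if b k then 1 else 0

lemma am_cast (n : ℕ) (b : Arr n) (i j : Fin n) : ((am n b i j : ℕ) : ℝ) = ar n b (i, j) := by
  unfold am ar; split_ifs <;> simp

lemma Ea_ar (n : ℕ) (lam : ℝ) (k : Fin n × Fin n) : Ea n lam (fun b => ar n b k) = lam := by
  have := Ea_prod n lam (fun l v => if l = k then (if v then 1 else 0) else 1)
  have h2 : ∀ b : Arr n, (∏ l, if l = k then (if b l then (1:ℝ) else 0) else 1) = ar n b k := by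
    intro b
    rw [Finset.prod_ite_eq' Finset.univ k]
    simp [ar]
  simp only [h2] at this
  rw [this]
  rw [Finset.prod_eq_single k]
  · simp
  · intro l _ hl; simp [hl]
  · simp

lemma Ea_ar2 (n : ℕ) (lam : ℝ) (k l : Fin n × Fin n) :
    Ea n lam (fun b => ar n b k * ar n b l) = lam ^ 2 + if k = l then lam * (1 - lam) else 0 := by
  split_ifs with h
  · subst h
    have : ∀ b : Arr n, ar n b k * ar n b k = ar n b k := by intro b; unfold ar; split_ifs <;> simp
    simp only [this, Ea_ar]; ring
  · have := Ea_prod n lam (fun m v => (if m = k then (if v then 1 else 0) else 1) *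
      (if m = l then (if v then 1 else 0) else 1))
    have h2 : ∀ b : Arr n, (∏ m, (if m = k then (if b m then (1:ℝ) else 0) else 1) *
      (if m = l then (if b m then 1 else 0) else 1)) = ar n b k * ar n b l := by
      intro b
      rw [Finset.prod_mul_distrib, Finset.prod_ite_eq' Finset.univ k,
        Finset.prod_ite_eq' Finset.univ l]
      simp [ar]
    simp only [h2] at this
    rw [this, Finset.prod_eq_mul k l h]
    · simp [h, Ne.symm h]; ring
    · intro m _ hm; simp [hm.1, hm.2]
    · simp
    · simp

/-- Second moment of an affine function of the arrivals. -/
lemma Ea_sq (n : ℕ) (lam c : ℝ) (s : Finset (Fin n × Fin n)) :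
    Ea n lam (fun b => (∑ k ∈ s, ar n b k + c) ^ 2)
      = s.card * (lam * (1 - lam)) + (s.card * lam + c) ^ 2 := by
  have h : ∀ b : Arr n, (∑ k ∈ s, ar n b k + c) ^ 2
      = (∑ k ∈ s, ∑ l ∈ s, ar n b k * ar n b l) + (2 * c * ∑ k ∈ s, ar n b k + c ^ 2) := by
    intro b
    rw [← Finset.sum_mul_sum]; ring
  simp only [h, Ea_add, Ea_sum, Ea_const_mul, Ea_const, Ea_ar, Ea_ar2, Finset.sum_add_distrib]
  simp
  ring

lemma jointA_am (n : ℕ) (lam : ℝ) (h0 : 0 ≤ lam) (h1 : lam ≤ 1) (b : Arr n) :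
    jointA n (fun _ _ => bern lam) (am n b) = ENNReal.ofReal (pw n lam b) := by
  unfold jointA pw
  rw [ENNReal.ofReal_prod_of_nonneg, Fintype.prod_prod_type]
  · refine Finset.prod_congr rfl fun i _ => Finset.prod_congr rfl fun j _ => ?_
    unfold bern am
    by_cases h : b (i, j) <;> simp [h]
  · intro k _; split_ifs <;> linarith

lemma am_inj (n : ℕ) : Function.Injective (am n) := by
  intro b c h
  funext k
  have := congrFun (congrFun h k.1) k.2
  unfold am at this
  cases hb : b k <;> cases hc : c k <;> simp_all

lemma kernel_eq (n : ℕ) (lam : ℝ) (h0 : 0 ≤ lam) (h1 : lam ≤ 1)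
    (sched : (Fin n → Fin n → ℕ) → (Fin n → Fin n → ℕ)) (q q' : Fin n → Fin n → ℕ) :
    kernelMW n (fun _ _ => bern lam) sched q q'
      = ∑ b : Arr n, ENNReal.ofReal (pw n lam b) *
          (if nextQ n q (am n b) (sched q) = q' then 1 else 0) := by
  unfold kernelMW
  rw [← (am_inj n).tsum_eq]
  · rw [tsum_fintype]
    exact Finset.sum_congr rfl fun b _ => by rw [jointA_am n lam h0 h1]
  · intro a ha
    have h2 : jointA n (fun _ _ => bern lam) a ≠ 0 := left_ne_zero_of_mul ha
    have h3 : ∀ i j, a i j = 0 ∨ a i j = 1 := by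
      intro i j
      by_contra hc
      push Not at hc
      apply h2
      unfold jointA
      refine Finset.prod_eq_zero (Finset.mem_univ i) (Finset.prod_eq_zero (Finset.mem_univ j) ?_)
      simp [bern, hc.1, hc.2]
    refine ⟨fun k => decide (a k.1 k.2 = 1), ?_⟩
    funext i j
    unfold am
    rcases h3 i j with h | h <;> simp [h]

/-- Next state under pattern `b`. -/
def nx (n : ℕ) (sched : (Fin n → Fin n → ℕ) → (Fin n → Fin n → ℕ)) (q : Fin n → Fin n → ℕ)
    (b : Arr n) : Fin n → Fin n → ℕ := nextQ n q (am n b) (sched q)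

lemma inv_enn (n : ℕ) (lam : ℝ) (h0 : 0 ≤ lam) (h1 : lam ≤ 1)
    (sched : (Fin n → Fin n → ℕ) → (Fin n → Fin n → ℕ))
    (pd : (Fin n → Fin n → ℕ) → ℝ≥0∞)
    (hpd : IsInvariant n (kernelMW n (fun _ _ => bern lam) sched) pd)
    (f : (Fin n → Fin n → ℕ) → ℝ≥0∞) :
    ∑' q, pd q * ∑ b : Arr n, ENNReal.ofReal (pw n lam b) * f (nx n sched q b)
      = ∑' q, pd q * f q := by
  have e1 : ∀ q', pd q' * f q' = ∑' q, pd q * (kernelMW n (fun _ _ => bern lam) sched q q' * f q') := by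
    intro q'
    conv_lhs => rw [← hpd.2 q']
    rw [← ENNReal.tsum_mul_right]
    simp only [mul_assoc]
  simp only [e1]
  rw [ENNReal.tsum_comm]
  refine tsum_congr fun q => ?_
  rw [ENNReal.tsum_mul_left]
  congr 1
  simp only [kernel_eq n lam h0 h1, Finset.sum_mul]
  rw [Summable.tsum_finsetSum (fun _ _ => ENNReal.summable)]
  refine Finset.sum_congr rfl fun b _ => ?_
  simp only [mul_assoc]
  rw [ENNReal.tsum_mul_left]
  congr 1
  rw [tsum_eq_single (nx n sched q b)]
  · simp [nx]
  · intro q' hq'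
    rw [if_neg]
    · simp
    · intro h; exact hq' h.symm

/-- Invariance, as an abstract hypothesis. -/
def Inv (n : ℕ) (lam : ℝ) (sched : (Fin n → Fin n → ℕ) → (Fin n → Fin n → ℕ))
    (pd : (Fin n → Fin n → ℕ) → ℝ≥0∞) : Prop :=
  (∑' q, pd q = 1) ∧ ∀ f : (Fin n → Fin n → ℕ) → ℝ≥0∞,
    ∑' q, pd q * ∑ b : Arr n, ENNReal.ofReal (pw n lam b) * f (nx n sched q b)
      = ∑' q, pd q * f q

lemma ofReal_Ea {n : ℕ} {lam : ℝ} (h0 : 0 ≤ lam) (h1 : lam ≤ 1) {f : Arr n → ℝ}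
    (h : ∀ b, 0 ≤ f b) : ENNReal.ofReal (Ea n lam f)
      = ∑ b : Arr n, ENNReal.ofReal (pw n lam b) * ENNReal.ofReal (f b) := by
  unfold Ea
  rw [ENNReal.ofReal_sum_of_nonneg]
  · exact Finset.sum_congr rfl fun b _ => ENNReal.ofReal_mul (pw_nonneg h0 h1 b)
  · exact fun b _ => mul_nonneg (pw_nonneg h0 h1 b) (h b)

lemma foster {n : ℕ} {lam : ℝ} (h0 : 0 ≤ lam) (h1 : lam ≤ 1)
    {sched : (Fin n → Fin n → ℕ) → (Fin n → Fin n → ℕ)}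
    {pd : (Fin n → Fin n → ℕ) → ℝ≥0∞} (hinv : Inv n lam sched pd)
    (V f : (Fin n → Fin n → ℕ) → ℝ) (c : ℝ) (hV : ∀ q, 0 ≤ V q) (hf : ∀ q, 0 ≤ f q) (hc : 0 ≤ c)
    (hd : ∀ q, Ea n lam (fun b => V (nx n sched q b)) ≤ V q - f q + c) :
    ∑' q, pd q * ENNReal.ofReal (f q) ≤ ENNReal.ofReal c := by
  have key : ∀ m : ℕ, ∑' q, pd q * ENNReal.ofReal (if V q < m then f q else 0)
      ≤ ENNReal.ofReal c := by
    intro m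
    have hm : ∀ q, 0 ≤ min (V q) m := fun q => le_min (hV q) (Nat.cast_nonneg m)
    have e := hinv.2 (fun q => ENNReal.ofReal (min (V q) m))
    simp only [← ofReal_Ea h0 h1 (fun b => hm _)] at e
    have hfin : ∑' q, pd q * ENNReal.ofReal (min (V q) m) ≠ ⊤ := by
      refine ne_top_of_le_ne_top (b := ∑' q, pd q * ENNReal.ofReal m) ?_ ?_
      · rw [ENNReal.tsum_mul_right, hinv.1]; simp
      · exact ENNReal.tsum_le_tsum fun q => by gcongr; exact min_le_right _ _
    have hp : ∀ q, (if V q < m then f q else 0) + Ea n lam (fun b => min (V (nx n sched q b)) m)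
        ≤ c + min (V q) m := by
      intro q
      have a1 : Ea n lam (fun b => min (V (nx n sched q b)) m) ≤ V q - f q + c :=
        (Ea_mono h0 h1 fun b => min_le_left _ _).trans (hd q)
      have a2 : Ea n lam (fun b => min (V (nx n sched q b)) m) ≤ m := by
        calc _ ≤ Ea n lam (fun _ => (m : ℝ)) := Ea_mono h0 h1 fun b => min_le_right _ _
          _ = m := Ea_const _ _ _
      split_ifs with h
      · rw [min_eq_left h.le]; linarith
      · rw [min_eq_right (not_lt.mp h)]; linarith
    have h3 : ∑' q, pd q * ENNReal.ofReal (if V q < m then f q else 0)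
        + ∑' q, pd q * ENNReal.ofReal (min (V q) m)
        ≤ ENNReal.ofReal c + ∑' q, pd q * ENNReal.ofReal (min (V q) m) := by
      conv_lhs => rw [← e]
      rw [← ENNReal.tsum_add]
      have : ENNReal.ofReal c = ∑' q, pd q * ENNReal.ofReal c := by
        rw [ENNReal.tsum_mul_right, hinv.1, one_mul]
      rw [this, ← ENNReal.tsum_add]
      refine ENNReal.tsum_le_tsum fun q => ?_
      rw [← mul_add, ← mul_add, ← ENNReal.ofReal_add, ← ENNReal.ofReal_add hc (hm q)]
      · exact mul_le_mul' le_rfl (ENNReal.ofReal_le_ofReal (hp q))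
      · split_ifs; exacts [hf q, le_rfl]
      · exact Ea_nonneg h0 h1 fun b => hm _
    exact (ENNReal.add_le_add_iff_right hfin).mp h3
  rw [ENNReal.tsum_eq_iSup_sum]
  refine iSup_le fun s => ?_
  obtain ⟨m, hm⟩ := exists_nat_gt (∑ q ∈ s, V q)
  calc ∑ q ∈ s, pd q * ENNReal.ofReal (f q)
      = ∑ q ∈ s, pd q * ENNReal.ofReal (if V q < m then f q else 0) := by
        refine Finset.sum_congr rfl fun q hq => ?_
        rw [if_pos]
        exact (Finset.single_le_sum (fun q _ => hV q) hq).trans_lt hm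
    _ ≤ ∑' q, pd q * ENNReal.ofReal (if V q < m then f q else 0) := ENNReal.sum_le_tsum s
    _ ≤ _ := key m

lemma hasSum_real {n : ℕ} {pd : (Fin n → Fin n → ℕ) → ℝ≥0∞} 
    (g : (Fin n → Fin n → ℕ) → ℝ) (hg : ∀ q, 0 ≤ g q)
    (hfin : ∑' q, pd q * ENNReal.ofReal (g q) ≠ ⊤) :
    HasSum (fun q => (pd q).toReal * g q) (∑' q, pd q * ENNReal.ofReal (g q)).toReal := by
  have := ENNReal.hasSum_toReal hfin
  have h2 := ENNReal.tsum_toReal_eq (f := fun q => pd q * ENNReal.ofReal (g q))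
    (fun q => ENNReal.ne_top_of_tsum_ne_top hfin q)
  simp only [ENNReal.toReal_mul, ENNReal.toReal_ofReal (hg _)] at this h2
  rw [h2]
  exact this

/-- Real form of invariance for nonnegative functions with finite expectation. -/
lemma hasSum_inv {n : ℕ} {lam : ℝ} (h0 : 0 ≤ lam) (h1 : lam ≤ 1)
    {sched : (Fin n → Fin n → ℕ) → (Fin n → Fin n → ℕ)}
    {pd : (Fin n → Fin n → ℕ) → ℝ≥0∞} (hinv : Inv n lam sched pd)
    (g : (Fin n → Fin n → ℕ) → ℝ) (hg : ∀ q, 0 ≤ g q)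
    (hfin : ∑' q, pd q * ENNReal.ofReal (g q) ≠ ⊤) :
    HasSum (fun q => (pd q).toReal * Ea n lam (fun b => g (nx n sched q b)))
      (∑' q, pd q * ENNReal.ofReal (g q)).toReal := by
  have e := hinv.2 (fun q => ENNReal.ofReal (g q))
  simp only [← ofReal_Ea h0 h1 (fun b => hg _)] at e
  have := hasSum_real (fun q => Ea n lam (fun b => g (nx n sched q b)))
    (fun q => Ea_nonneg h0 h1 fun b => hg _) (by rw [e]; exact hfin)
  rwa [e] at this

lemma exp_aux {t : ℝ} (ht : 1 / 8 ≤ t) : Real.exp t * (1 / (4 * t) - 3 / 8) ≤ 2 := by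
  have ht0 : 0 < t := by linarith
  rcases le_or_gt (2 / 3) t with h | h
  · have : 1 / (4 * t) ≤ 3 / 8 := by
      rw [div_le_iff₀ (by positivity)]; linarith
    have := mul_nonneg (Real.exp_pos t).le (sub_nonneg.mpr this)
    nlinarith
  · have h1 : Real.exp t * (1 - t) ≤ 1 := by
      have := Real.add_one_le_exp (-t)
      have h2 : Real.exp t * Real.exp (-t) = 1 := by rw [← Real.exp_add]; simp
      have := mul_le_mul_of_nonneg_left this (Real.exp_pos t).le
      linarith
    have h2 : 1 / (4 * t) - 3 / 8 ≤ 2 * (1 - t) := by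
      have : 1 / (4 * t) ≤ 2 * (1 - t) + 3 / 8 := by
        rw [div_le_iff₀ (by positivity)]; nlinarith
      linarith
    have := mul_le_mul_of_nonneg_left h2 (Real.exp_pos t).le
    linarith

lemma G_step {N N' l : ℝ} (hl : 0 < l) :
    Real.sqrt (N' ^ 2 + l ^ 2) - Real.sqrt (N ^ 2 + l ^ 2)
      ≤ (N' ^ 2 - N ^ 2) / (2 * Real.sqrt (N ^ 2 + l ^ 2)) := by
  have hG : 0 < Real.sqrt (N ^ 2 + l ^ 2) := Real.sqrt_pos.mpr (by positivity)
  rw [le_div_iff₀ (by positivity)]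
  have a1 := Real.sq_sqrt (show 0 ≤ N ^ 2 + l ^ 2 by positivity)
  have a2 := Real.sq_sqrt (show 0 ≤ N' ^ 2 + l ^ 2 by positivity)
  nlinarith [sq_nonneg (Real.sqrt (N' ^ 2 + l ^ 2) - Real.sqrt (N ^ 2 + l ^ 2))]

lemma G_lip1 {N N' l : ℝ} (hl : 0 < l) :
    Real.sqrt (N' ^ 2 + l ^ 2) - Real.sqrt (N ^ 2 + l ^ 2) ≤ |N' - N| := by
  have hG : 0 < Real.sqrt (N ^ 2 + l ^ 2) := Real.sqrt_pos.mpr (by positivity)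
  have a1 := Real.sq_sqrt (show 0 ≤ N ^ 2 + l ^ 2 by positivity)
  have a3 : |N| ≤ Real.sqrt (N ^ 2 + l ^ 2) := Real.abs_le_sqrt (by nlinarith)
  rw [sub_le_iff_le_add]
  apply Real.sqrt_le_iff.mpr
  refine ⟨by positivity, ?_⟩
  have a4 : N * (N' - N) ≤ |N' - N| * Real.sqrt (N ^ 2 + l ^ 2) := by
    calc N * (N' - N) ≤ |N * (N' - N)| := le_abs_self _
      _ = |N' - N| * |N| := by rw [abs_mul, mul_comm]
      _ ≤ _ := by gcongr
  nlinarith [sq_abs (N' - N)]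

lemma G_lip {N N' l : ℝ} (hl : 0 < l) :
    |Real.sqrt (N' ^ 2 + l ^ 2) - Real.sqrt (N ^ 2 + l ^ 2)| ≤ |N' - N| := by
  rw [abs_le]
  have h1 := G_lip1 (N := N) (N' := N') hl
  have h2 := G_lip1 (N := N') (N' := N) hl
  rw [abs_sub_comm] at h2
  exact ⟨by linarith, h1⟩

lemma exp_moment {n : ℕ} (hn : 1 ≤ n) {lam : ℝ} (h0 : 0 ≤ lam) (h1 : lam ≤ 1)
    {sched : (Fin n → Fin n → ℕ) → (Fin n → Fin n → ℕ)}
    {pd : (Fin n → Fin n → ℕ) → ℝ≥0∞} (hinv : Inv n lam sched pd)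
    (N : (Fin n → Fin n → ℕ) → ℝ) (hN : ∀ q, 0 ≤ N q)
    (D : (Fin n → Fin n → ℕ) → Arr n → ℝ)
    (hLip : ∀ q b, |N (nx n sched q b) - N q| ≤ D q b)
    (hD : ∀ q b, D q b ≤ n)
    (hD2 : ∀ q, Ea n lam (fun b => D q b ^ 2) ≤ 2 * n)
    (β : ℝ) (hβ : 0 < β) (hβ1 : β ≤ 1)
    (hdr : ∀ q, Ea n lam (fun b => N (nx n sched q b) ^ 2) ≤ N q ^ 2 - 2 * β * N q + 2 * n) :
    ∑' q, pd q * ENNReal.ofReal (Real.exp (β / (8 * n) * N q)) ≤ ENNReal.ofReal (16 / 3) := by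
  have hn' : (1 : ℝ) ≤ n := by exact_mod_cast hn
  set θ := β / (8 * n) with hθ
  have hθ0 : 0 < θ := by positivity
  set l := n / β with hl
  have hl0 : 0 < l := by positivity
  set G : (Fin n → Fin n → ℕ) → ℝ := fun q => Real.sqrt (N q ^ 2 + l ^ 2) with hG
  have hGpos : ∀ q, 0 < G q := fun q => Real.sqrt_pos.mpr (by positivity)
  have hGl : ∀ q, l ≤ G q := fun q => Real.le_sqrt_of_sq_le (by nlinarith [sq_nonneg (N q)])
  have hGN : ∀ q, N q ≤ G q := fun q => Real.le_sqrt_of_sq_le (by nlinarith [sq_nonneg l])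
  have hGN2 : ∀ q, G q ≤ N q + l := fun q => by
    apply Real.sqrt_le_iff.mpr
    have := hN q
    exact ⟨by positivity, by nlinarith [mul_nonneg this hl0.le]⟩
  have hθn : θ * n ≤ 1 := by
    have : θ * n = β / 8 := by rw [hθ]; field_simp
    linarith
  have main : ∀ q, Ea n lam (fun b => Real.exp (θ * G (nx n sched q b))) ≤
      Real.exp (θ * G q) - 3 / 8 * (θ * β) * Real.exp (θ * G q) + 2 * (θ * β) := by
    intro q
    have s1 : ∀ b, Real.exp (θ * G (nx n sched q b)) ≤ Real.exp (θ * G q) *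
        (1 + (θ * ((1 / (2 * G q)) * (N (nx n sched q b) ^ 2 - N q ^ 2)) + θ ^ 2 * D q b ^ 2)) := by
      intro b
      have e : θ * G (nx n sched q b) = θ * G q + θ * (G (nx n sched q b) - G q) := by ring
      rw [e, Real.exp_add]
      apply mul_le_mul_of_nonneg_left _ (Real.exp_pos _).le
      have b1 : |G (nx n sched q b) - G q| ≤ D q b := (G_lip hl0).trans (hLip q b)
      have b2 : G (nx n sched q b) - G q ≤ (N (nx n sched q b) ^ 2 - N q ^ 2) / (2 * G q) :=
        G_step hl0
      have b3 : |θ * (G (nx n sched q b) - G q)| ≤ 1 := by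
        rw [abs_mul, abs_of_pos hθ0]
        calc θ * |G (nx n sched q b) - G q| ≤ θ * n := by gcongr; exact b1.trans (hD q b)
          _ ≤ 1 := hθn
      have b4 := (abs_le.mp (Real.abs_exp_sub_one_sub_id_le b3)).2
      have b5 : (θ * (G (nx n sched q b) - G q)) ^ 2 ≤ θ ^ 2 * D q b ^ 2 := by
        rw [mul_pow]
        gcongr 1
        rw [← sq_abs]; gcongr
      have b6 := mul_le_mul_of_nonneg_left b2 hθ0.le
      have b7 : θ * ((N (nx n sched q b) ^ 2 - N q ^ 2) / (2 * G q))
        = θ * ((1 / (2 * G q)) * (N (nx n sched q b) ^ 2 - N q ^ 2)) := by ring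
      linarith
    have s2 := Ea_mono h0 h1 s1
    rw [Ea_const_mul, Ea_add, Ea_add, Ea_const_mul, Ea_const_mul, Ea_const_mul, Ea_sub, Ea_const,
      Ea_const] at s2
    refine s2.trans ?_
    have s3 : Ea n lam (fun b => N (nx n sched q b) ^ 2) - N q ^ 2 ≤ 2 * n - 2 * β * N q := by
      linarith [hdr q]
    have hg := hGpos q
    have s4 : (1 / (2 * G q)) * (Ea n lam (fun b => N (nx n sched q b) ^ 2) - N q ^ 2)
        ≤ 2 * n / G q - β := by
      rw [one_div_mul_eq_div, div_le_iff₀ (by positivity)]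
      have : (2 * n / G q - β) * (2 * G q) = 4 * n - 2 * β * G q := by field_simp; ring
      rw [this]
      have h5 : β * l = n := by rw [hl]; field_simp
      nlinarith [mul_le_mul_of_nonneg_left (hGN2 q) hβ.le]
    have s5 : 1 + (θ * ((1 / (2 * G q)) * (Ea n lam (fun b => N (nx n sched q b) ^ 2) - N q ^ 2))
        + θ ^ 2 * Ea n lam (fun b => D q b ^ 2)) ≤
        1 + θ * β * (1 / (4 * (θ * G q)) - 3 / 4) := by
      have h6 := mul_le_mul_of_nonneg_left s4 hθ0.le
      have h7 := mul_le_mul_of_nonneg_left (hD2 q) (sq_nonneg θ)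
      have h8 : β = 8 * n * θ := by rw [hθ]; field_simp
      have h9 : θ * β * (1 / (4 * (θ * G q))) = θ * (2 * n / G q) := by
        rw [h8]; field_simp; ring
      have h10 : θ ^ 2 * (2 * n) = θ * β / 4 := by rw [h8]; ring
      nlinarith
    have s6 := mul_le_mul_of_nonneg_left s5 (Real.exp_pos (θ * G q)).le
    have s7 : 1 / 8 ≤ θ * G q := by
      have : θ * l = 1 / 8 := by rw [hθ, hl]; field_simp
      rw [← this]; gcongr; exact hGl q
    have s8 := exp_aux s7
    have s9 := mul_le_mul_of_nonneg_left s8 (show 0 ≤ θ * β by positivity)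
    linarith
  have hk : 0 < 3 / 8 * (θ * β) := by positivity
  have hF := foster h0 h1 hinv (fun q => (1 / (3 / 8 * (θ * β))) * Real.exp (θ * G q))
    (fun q => Real.exp (θ * N q)) (16 / 3) (fun q => by positivity) (fun q => by positivity)
    (by norm_num) (by
      intro q
      rw [Ea_const_mul]
      have h2 := mul_le_mul_of_nonneg_left (main q) (show 0 ≤ 1 / (3 / 8 * (θ * β)) by positivity)
      have h3 : 1 / (3 / 8 * (θ * β)) * (Real.exp (θ * G q) - 3 / 8 * (θ * β) * Real.exp (θ * G q)
        + 2 * (θ * β)) = (1 / (3 / 8 * (θ * β))) * Real.exp (θ * G q) - Real.exp (θ * G q) + 16 / 3 := by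
        field_simp
        ring
      have h4 : Real.exp (θ * N q) ≤ Real.exp (θ * G q) := by gcongr; exact hGN q
      linarith)
  exact hF

lemma pow_moment {n : ℕ} {pd : (Fin n → Fin n → ℕ) → ℝ≥0∞}
    (N : (Fin n → Fin n → ℕ) → ℝ) (hN : ∀ q, 0 ≤ N q) (θ : ℝ) (hθ : 0 < θ)
    (h : ∑' q, pd q * ENNReal.ofReal (Real.exp (θ * N q)) ≤ ENNReal.ofReal (16 / 3)) (r : ℕ) :
    ∑' q, pd q * ENNReal.ofReal (N q ^ r) ≤ ENNReal.ofReal (r.factorial / θ ^ r * (16 / 3)) := by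
  rw [ENNReal.ofReal_mul (by positivity)]
  refine le_trans ?_ (mul_le_mul' le_rfl h)
  rw [← ENNReal.tsum_mul_left]
  refine ENNReal.tsum_le_tsum fun q => ?_
  rw [mul_left_comm, ← ENNReal.ofReal_mul (by positivity)]
  refine mul_le_mul' le_rfl (ENNReal.ofReal_le_ofReal ?_)
  have := Real.pow_div_factorial_le_exp (θ * N q) (mul_nonneg hθ.le (hN q)) r
  rw [div_le_iff₀ (by positivity), mul_pow] at this
  rw [div_mul_eq_mul_div, le_div_iff₀ (by positivity)]
  linarith

lemma normE_sq {n : ℕ} (x : Fin n → Fin n → ℝ) : normE n x ^ 2 = ∑ i, ∑ j, x i j ^ 2 := by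
  unfold normE
  exact Real.sq_sqrt (Finset.sum_nonneg fun i _ => Finset.sum_nonneg fun j _ => sq_nonneg _)

lemma normE_nonneg {n : ℕ} (x : Fin n → Fin n → ℝ) : 0 ≤ normE n x := Real.sqrt_nonneg _

lemma normE_eq {n : ℕ} (x : Fin n → Fin n → ℝ) :
    normE n x = ‖(WithLp.toLp 2 (fun k : Fin n × Fin n => x k.1 k.2) :
      EuclideanSpace ℝ (Fin n × Fin n))‖ := by
  rw [EuclideanSpace.norm_eq, Fintype.sum_prod_type]
  simp [normE]

lemma normE_add_le {n : ℕ} (x y : Fin n → Fin n → ℝ) :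
    normE n (x + y) ≤ normE n x + normE n y := by
  rw [normE_eq, normE_eq, normE_eq]
  exact norm_add_le (WithLp.toLp 2 (fun k : Fin n × Fin n => x k.1 k.2) :
      EuclideanSpace ℝ (Fin n × Fin n)) (WithLp.toLp 2 (fun k : Fin n × Fin n => y k.1 k.2))

lemma abs_entry_le {n : ℕ} (x : Fin n → Fin n → ℝ) (i j : Fin n) : |x i j| ≤ normE n x := by
  apply Real.abs_le_sqrt
  calc x i j ^ 2 ≤ ∑ j, x i j ^ 2 :=
        Finset.single_le_sum (f := fun j => x i j ^ 2) (fun j _ => sq_nonneg _) (Finset.mem_univ j)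
    _ ≤ _ := Finset.single_le_sum (f := fun i => ∑ j, x i j ^ 2)
        (fun i _ => Finset.sum_nonneg fun j _ => sq_nonneg _) (Finset.mem_univ i)

/-- Cauchy-Schwarz. -/
lemma inner_le {n : ℕ} (x y : Fin n → Fin n → ℝ) :
    |∑ i, ∑ j, x i j * y i j| ≤ normE n x * normE n y := by
  apply abs_le_of_sq_le_sq _ (mul_nonneg (normE_nonneg _) (normE_nonneg _))
  rw [mul_pow, normE_sq, normE_sq]
  simp only [← Fintype.sum_prod_type']
  exact Finset.sum_mul_sq_le_sq_mul_sq _ _ _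

lemma cone_exists {n : ℕ} (x : Fin n → Fin n → ℝ) :
    ∃ w wt : Fin n → ℝ, (∀ i, 0 ≤ w i) ∧ (∀ j, 0 ≤ wt j) ∧
      ∀ v vt : Fin n → ℝ, (∀ i, 0 ≤ v i) → (∀ j, 0 ≤ vt j) →
        ∑ i, ∑ j, (x i j - (w i + wt j)) ^ 2 ≤ ∑ i, ∑ j, (x i j - (v i + vt j)) ^ 2 := by
  set B := ∑ i, ∑ j, |x i j| with hB
  have hB0 : 0 ≤ B := Finset.sum_nonneg fun i _ => Finset.sum_nonneg fun j _ => abs_nonneg _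
  have hxB : ∀ i j, x i j ≤ B := by
    intro i j
    calc x i j ≤ |x i j| := le_abs_self _
      _ ≤ ∑ j, |x i j| :=
        Finset.single_le_sum (f := fun j => |x i j|) (fun j _ => abs_nonneg _) (Finset.mem_univ j)
      _ ≤ _ := Finset.single_le_sum (f := fun i => ∑ j, |x i j|)
        (fun i _ => Finset.sum_nonneg fun j _ => abs_nonneg _) (Finset.mem_univ i)
  have hc : IsCompact (Set.Icc (0 : (Fin n → ℝ) × (Fin n → ℝ)) (fun _ => B, fun _ => B)) :=
    isCompact_Icc
  have hne : (Set.Icc (0 : (Fin n → ℝ) × (Fin n → ℝ)) (fun _ => B, fun _ => B)).Nonempty :=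
    ⟨0, le_rfl, ⟨fun _ => hB0, fun _ => hB0⟩⟩
  obtain ⟨⟨w, wt⟩, hw, hmin⟩ := hc.exists_isMinOn hne
    (f := fun p => ∑ i, ∑ j, (x i j - (p.1 i + p.2 j)) ^ 2) (by fun_prop)
  refine ⟨w, wt, fun i => hw.1.1 i, fun j => hw.1.2 j, ?_⟩
  intro v vt hv hvt
  have h1 := hmin (a := (fun i => min (v i) B, fun j => min (vt j) B))
    ⟨⟨fun i => le_min (hv i) hB0, fun j => le_min (hvt j) hB0⟩,
      ⟨fun i => min_le_right _ _, fun j => min_le_right _ _⟩⟩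
  refine le_trans h1 ?_
  refine Finset.sum_le_sum fun i _ => Finset.sum_le_sum fun j _ => ?_
  have a1 := hv i
  have a2 := hvt j
  have a3 := hxB i j
  show (x i j - (min (v i) B + min (vt j) B)) ^ 2 ≤ _
  rcases le_total (v i) B with c1 | c1 <;> rcases le_total (vt j) B with c2 | c2 <;>
    simp only [c1, c2, min_eq_left, min_eq_right] <;> nlinarith

lemma quad_aux {R c : ℝ} (hc : 0 ≤ c) (h : ∀ t : ℝ, 0 < t → t ≤ 1 → 2 * t * R ≤ c * t ^ 2) :
    R ≤ 0 := by
  by_contra hR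
  push Not at hR
  have h1 := h (min 1 (R / (c + 1))) (by positivity) (min_le_left _ _)
  have hm : 0 < min 1 (R / (c + 1)) := by positivity
  have h2 : 2 * R ≤ c * min 1 (R / (c + 1)) := by
    by_contra hh
    push Not at hh
    nlinarith
  have h3 : c * min 1 (R / (c + 1)) ≤ c * (R / (c + 1)) := by gcongr; exact min_le_right _ _
  have h4 : (R / (c + 1)) * (c + 1) = R := by field_simp
  have h5 : 0 < R / (c + 1) := by positivity
  nlinarith

lemma cone_proj {n : ℕ} (x : Fin n → Fin n → ℝ) :
    ∃ w wt : Fin n → ℝ, (∀ i, 0 ≤ w i) ∧ (∀ j, 0 ≤ wt j) ∧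
      (∀ v vt : Fin n → ℝ, (∀ i, 0 ≤ v i) → (∀ j, 0 ≤ vt j) →
        ∑ i, ∑ j, (x i j - (w i + wt j)) ^ 2 ≤ ∑ i, ∑ j, (x i j - (v i + vt j)) ^ 2) ∧
      (∀ i, ∑ j, (x i j - (w i + wt j)) ≤ 0) ∧ (∀ j, ∑ i, (x i j - (w i + wt j)) ≤ 0) ∧
      0 ≤ ∑ i, ∑ j, (x i j - (w i + wt j)) * (w i + wt j) := by
  obtain ⟨w, wt, hw, hwt, hmin⟩ := cone_exists x
  refine ⟨w, wt, hw, hwt, hmin, ?_, ?_, ?_⟩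
  · intro i0
    apply quad_aux (c := n) (by positivity)
    intro t ht _
    have h := hmin (fun i => w i + if i = i0 then t else 0) wt
      (fun i => add_nonneg (hw i) (by split_ifs <;> linarith)) hwt
    have e : ∀ i, ∑ j, (x i j - ((w i + if i = i0 then t else 0) + wt j)) ^ 2
        = ∑ j, (x i j - (w i + wt j)) ^ 2 +
          if i = i0 then (-(2 * t * ∑ j, (x i j - (w i + wt j))) + n * t ^ 2) else 0 := by
      intro i
      split_ifs
      · have e2 : ∀ j, (x i j - (w i + t + wt j)) ^ 2
          = (x i j - (w i + wt j)) ^ 2 + (-(2 * t * (x i j - (w i + wt j))) + t ^ 2) := by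
          intro j; ring
        simp only [e2, Finset.sum_add_distrib, Finset.sum_neg_distrib, ← Finset.mul_sum]
        simp
      · simp
    simp only [e, Finset.sum_add_distrib (s := Finset.univ)] at h
    rw [Finset.sum_ite_eq' Finset.univ i0] at h
    simp only [Finset.mem_univ, if_true] at h
    linarith
  · intro j0
    apply quad_aux (c := n) (by positivity)
    intro t ht _
    have h := hmin w (fun j => wt j + if j = j0 then t else 0) hw
      (fun j => add_nonneg (hwt j) (by split_ifs <;> linarith))
    rw [Finset.sum_comm, Finset.sum_comm (f := fun i j => (x i j - (w i +
      (wt j + if j = j0 then t else 0))) ^ 2)] at h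
    have e : ∀ j, ∑ i, (x i j - (w i + (wt j + if j = j0 then t else 0))) ^ 2
        = ∑ i, (x i j - (w i + wt j)) ^ 2 +
          if j = j0 then (-(2 * t * ∑ i, (x i j - (w i + wt j))) + n * t ^ 2) else 0 := by
      intro j
      split_ifs
      · have e2 : ∀ i, (x i j - (w i + (wt j + t))) ^ 2
          = (x i j - (w i + wt j)) ^ 2 + (-(2 * t * (x i j - (w i + wt j))) + t ^ 2) := by
          intro i; ring
        simp only [e2, Finset.sum_add_distrib, Finset.sum_neg_distrib, ← Finset.mul_sum]
        simp
      · simp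
    simp only [e, Finset.sum_add_distrib (s := Finset.univ)] at h
    rw [Finset.sum_ite_eq' Finset.univ j0] at h
    simp only [Finset.mem_univ, if_true] at h
    linarith
  · have := quad_aux (R := -∑ i, ∑ j, (x i j - (w i + wt j)) * (w i + wt j))
      (c := ∑ i, ∑ j, (w i + wt j) ^ 2) (by positivity) (by
        intro t ht ht1
        have h := hmin (fun i => (1 - t) * w i) (fun j => (1 - t) * wt j)
          (fun i => mul_nonneg (by linarith) (hw i)) (fun j => mul_nonneg (by linarith) (hwt j))
        have e : ∀ i j, (x i j - ((1 - t) * w i + (1 - t) * wt j)) ^ 2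
          = (x i j - (w i + wt j)) ^ 2 + (2 * t * ((x i j - (w i + wt j)) * (w i + wt j))
            + t ^ 2 * (w i + wt j) ^ 2) := by
          intro i j; ring
        simp only [e, Finset.sum_add_distrib, ← Finset.mul_sum] at h
        linarith)
    linarith

lemma dominated {n : ℕ} (m : Fin n → Fin n → ℝ) (hm : ∀ i j, 0 ≤ m i j)
    (hr : ∀ i, ∑ j, m i j ≤ 1) (hc : ∀ j, ∑ i, m i j ≤ 1) :
    ∃ d : Matrix (Fin n) (Fin n) ℝ, d ∈ doublyStochastic ℝ (Fin n) ∧ ∀ i j, m i j ≤ d i j := by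
  set R : Fin n → ℝ := fun i => 1 - ∑ j, m i j with hR
  set C : Fin n → ℝ := fun j => 1 - ∑ i, m i j with hC
  have hR0 : ∀ i, 0 ≤ R i := fun i => sub_nonneg.mpr (hr i)
  have hC0 : ∀ j, 0 ≤ C j := fun j => sub_nonneg.mpr (hc j)
  have hRC : ∑ i, R i = ∑ j, C j := by
    simp only [hR, hC, Finset.sum_sub_distrib]
    rw [Finset.sum_comm]
  have hS0 : 0 ≤ ∑ j, C j := Finset.sum_nonneg fun j _ => hC0 j
  refine ⟨Matrix.of fun i j => m i j + R i * C j / ∑ j, C j, ?_, ?_⟩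
  · rw [mem_doublyStochastic_iff_sum]
    simp only [Matrix.of_apply]
    refine ⟨fun i j => add_nonneg (hm i j) (div_nonneg (mul_nonneg (hR0 i) (hC0 j)) hS0), ?_, ?_⟩
    · intro i
      rw [Finset.sum_add_distrib, ← Finset.sum_div, ← Finset.mul_sum]
      rcases hS0.eq_or_lt with h | h
      · have : R i = 0 := by
          have := (Finset.sum_eq_zero_iff_of_nonneg (fun i _ => hR0 i)).mp (hRC.trans h.symm) i
            (Finset.mem_univ i)
          exact this
        rw [this]; simp only [hR] at this; simp; linarith
      · rw [mul_div_assoc, div_self h.ne']; simp [hR]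
    · intro j
      rw [Finset.sum_add_distrib, ← Finset.sum_div, ← Finset.sum_mul]
      rcases hS0.eq_or_lt with h | h
      · have : C j = 0 := by
          have := (Finset.sum_eq_zero_iff_of_nonneg (fun i _ => hC0 i)).mp (h.symm) j
            (Finset.mem_univ j)
          exact this
        rw [this]; simp only [hC] at this; simp; linarith
      · rw [hRC, mul_comm, mul_div_assoc, div_self h.ne']; simp [hC]
  · intro i j
    have := div_nonneg (mul_nonneg (hR0 i) (hC0 j)) hS0
    show m i j ≤ m i j + _
    linarith

lemma maxweight_ge {n : ℕ} {sched : (Fin n → Fin n → ℕ) → (Fin n → Fin n → ℕ)}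
    (hs : IsMaxWeight n sched) (q : Fin n → Fin n → ℕ)
    (m : Fin n → Fin n → ℝ) (hm : ∀ i j, 0 ≤ m i j)
    (hr : ∀ i, ∑ j, m i j ≤ 1) (hc : ∀ j, ∑ i, m i j ≤ 1) :
    ∑ i, ∑ j, (q i j : ℝ) * m i j ≤ ∑ i, ∑ j, (q i j : ℝ) * (sched q i j : ℝ) := by
  obtain ⟨d, hd, hmd⟩ := dominated m hm hr hc
  obtain ⟨w, hw0, hw1, hwd⟩ := exists_eq_sum_perm_of_mem_doublyStochastic hd
  have h1 : ∑ i, ∑ j, (q i j : ℝ) * m i j ≤ ∑ i, ∑ j, (q i j : ℝ) * d i j :=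
    Finset.sum_le_sum fun i _ => Finset.sum_le_sum fun j _ =>
      mul_le_mul_of_nonneg_left (hmd i j) (Nat.cast_nonneg _)
  refine h1.trans ?_
  have hσ : ∀ σ : Equiv.Perm (Fin n), ∑ i, ∑ j, (q i j : ℝ) * (σ.permMatrix ℝ) i j
      ≤ ∑ i, ∑ j, (q i j : ℝ) * (sched q i j : ℝ) := by
    intro σ
    have := (hs q).2 (fun i j => if σ i = j then 1 else 0) ⟨?_, ?_, ?_⟩
    · have h2 : (((∑ i, ∑ j, q i j * (if σ i = j then 1 else 0) : ℕ)) : ℝ)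
        ≤ ((∑ i, ∑ j, q i j * sched q i j : ℕ) : ℝ) := by exact_mod_cast this
      push_cast at h2
      refine le_trans (le_of_eq ?_) h2
      refine Finset.sum_congr rfl fun i _ => Finset.sum_congr rfl fun j _ => ?_
      simp [Equiv.Perm.permMatrix, PEquiv.toMatrix_apply, Equiv.toPEquiv_apply]
      try simp [eq_comm]
    · intro i j; dsimp only; split_ifs <;> simp
    · intro i; simp
    · intro j
      rw [Finset.sum_eq_single (σ.symm j)]
      · simp
      · intro i _ hi
        dsimp only
        rw [if_neg]
        intro h; exact hi (by simp [← h])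
      · simp
  have h2 : ∑ i, ∑ j, (q i j : ℝ) * d i j
      = ∑ σ : Equiv.Perm (Fin n), w σ * ∑ i, ∑ j, (q i j : ℝ) * (σ.permMatrix ℝ) i j := by
    rw [← hwd]
    simp only [Matrix.sum_apply, Matrix.smul_apply, smul_eq_mul, Finset.mul_sum]
    rw [Finset.sum_comm]
    simp only [Finset.sum_comm (s := (Finset.univ : Finset (Fin n)))
      (t := (Finset.univ : Finset (Equiv.Perm (Fin n))))]
    refine Finset.sum_congr rfl fun σ _ => ?_
    rw [Finset.sum_comm]
    refine Finset.sum_congr rfl fun i _ => Finset.sum_congr rfl fun j _ => by ring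
  rw [h2]
  calc _ ≤ ∑ σ : Equiv.Perm (Fin n), w σ * ∑ i, ∑ j, (q i j : ℝ) * (sched q i j : ℝ) :=
        Finset.sum_le_sum fun σ _ => mul_le_mul_of_nonneg_left (hσ σ) (hw0 σ)
    _ = _ := by rw [← Finset.sum_mul, hw1, one_mul]

/-- Unused service. -/
noncomputable def uu (n : ℕ) (sched : (Fin n → Fin n → ℕ) → (Fin n → Fin n → ℕ))
    (q : Fin n → Fin n → ℕ) (b : Arr n) (i j : Fin n) : ℝ :=
  (nx n sched q b i j : ℝ) - q i j - ar n b (i, j) + sched q i j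

section dyn
variable {n : ℕ} {sched : (Fin n → Fin n → ℕ) → (Fin n → Fin n → ℕ)}

lemma uu_cases (hs : IsMaxWeight n sched) (q : Fin n → Fin n → ℕ) (b : Arr n) (i j : Fin n) :
    uu n sched q b i j = 0 ∨ (uu n sched q b i j = 1 ∧ sched q i j = 1 ∧ q i j = 0 ∧
      nx n sched q b i j = 0) := by
  have h1 := (hs q).1.1 i j
  unfold uu nx nextQ
  rw [← am_cast]
  have ha : am n b i j ≤ 1 := by unfold am; split_ifs <;> simp
  generalize am n b i j = a at *
  generalize sched q i j = s at *
  generalize q i j = x at *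
  by_cases h : s ≤ x + a
  · left
    rw [Nat.cast_sub h]; push_cast; ring
  · right
    have h2 : s = 1 := by omega
    have h3 : x = 0 := by omega
    have h4 : a = 0 := by omega
    subst h2 h3 h4
    simp

lemma step_sq (hs : IsMaxWeight n sched) (q : Fin n → Fin n → ℕ) (b : Arr n) (i j : Fin n) :
    ((nx n sched q b i j : ℝ) - q i j) ^ 2 ≤ ar n b (i, j) + sched q i j ∧
    ((nx n sched q b i j : ℝ) - q i j) ^ 2 ≤ 1 := by
  have h1 := (hs q).1.1 i j
  have h2 : ((sched q i j : ℕ) : ℝ) = 0 ∨ ((sched q i j : ℕ) : ℝ) = 1 := by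
    rcases Nat.le_one_iff_eq_zero_or_eq_one.mp h1 with h | h <;> simp [h]
  have h3 : ar n b (i, j) = 0 ∨ ar n b (i, j) = 1 := by unfold ar; split_ifs <;> simp
  have e : (nx n sched q b i j : ℝ) - q i j
      = ar n b (i, j) - sched q i j + uu n sched q b i j := by unfold uu; ring
  rcases uu_cases hs q b i j with h | ⟨h, hs1, hq0, hn0⟩
  · rw [e, h]
    rcases h2 with h2 | h2 <;> rcases h3 with h3 | h3 <;> rw [h2, h3] <;> norm_num
  · rw [hq0, hn0, hs1]
    rcases h3 with h3 | h3 <;> rw [h3] <;> norm_num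

lemma sched_row (hs : IsMaxWeight n sched) (q : Fin n → Fin n → ℕ) (i : Fin n) :
    ∑ j, (sched q i j : ℝ) = 1 := by exact_mod_cast (hs q).1.2.1 i

lemma sched_col (hs : IsMaxWeight n sched) (q : Fin n → Fin n → ℕ) (j : Fin n) :
    ∑ i, (sched q i j : ℝ) = 1 := by exact_mod_cast (hs q).1.2.2 j

/-- Size of a step. -/
noncomputable def DD (n : ℕ) (sched : (Fin n → Fin n → ℕ) → (Fin n → Fin n → ℕ))
    (q : Fin n → Fin n → ℕ) (b : Arr n) : ℝ := normE n (toR n (nx n sched q b) - toR n q)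

lemma DD_sq (q : Fin n → Fin n → ℕ) (b : Arr n) :
    DD n sched q b ^ 2 = ∑ i, ∑ j, ((nx n sched q b i j : ℝ) - q i j) ^ 2 := by
  unfold DD; rw [normE_sq]; rfl

lemma DD_le (hs : IsMaxWeight n sched) (q : Fin n → Fin n → ℕ) (b : Arr n) :
    DD n sched q b ≤ n := by
  refine (abs_le_of_sq_le_sq' ?_ (Nat.cast_nonneg n)).2
  rw [DD_sq]
  calc _ ≤ ∑ i : Fin n, ∑ j : Fin n, (1 : ℝ) :=
        Finset.sum_le_sum fun i _ => Finset.sum_le_sum fun j _ => (step_sq hs q b i j).2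
    _ = _ := by simp; ring

lemma DD_sq_le (hs : IsMaxWeight n sched) (hn : 1 ≤ n) {lam : ℝ} (h0 : 0 ≤ lam) (h1 : lam ≤ 1)
    (hl : n * lam ≤ 1) (q : Fin n → Fin n → ℕ) :
    Ea n lam (fun b => DD n sched q b ^ 2) ≤ 2 * n := by
  calc _ ≤ Ea n lam (fun b => ∑ i : Fin n, ∑ j : Fin n, (ar n b (i, j) + sched q i j)) := by
        apply Ea_mono h0 h1
        intro b
        rw [DD_sq]
        exact Finset.sum_le_sum fun i _ => Finset.sum_le_sum fun j _ => (step_sq hs q b i j).1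
    _ = n * (n * lam) + n := by
        simp only [Ea_sum, Ea_add, Ea_ar, Ea_const, Finset.sum_add_distrib, sched_row hs]
        simp
    _ ≤ 2 * n := by
        have : (n : ℝ) * (n * lam) ≤ n * 1 := by gcongr
        linarith

lemma drift_y (hs : IsMaxWeight n sched) (hn : 1 ≤ n) {lam : ℝ} (h0 : 0 ≤ lam) (h1 : lam ≤ 1)
    (hl : n * lam ≤ 1) (q : Fin n → Fin n → ℕ) (y : Fin n → Fin n → ℝ) (hy : ∀ i j, 0 ≤ y i j) :
    Ea n lam (fun b => normE n (toR n (nx n sched q b) - y) ^ 2)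
      ≤ normE n (toR n q - y) ^ 2
        + 2 * (∑ i, ∑ j, ((q i j : ℝ) - y i j) * (lam - sched q i j)) + 2 * n := by
  have hp : ∀ b, normE n (toR n (nx n sched q b) - y) ^ 2 ≤
      (normE n (toR n q - y) ^ 2 + 2 * (∑ i, ∑ j, ((q i j : ℝ) - y i j) *
        (ar n b (i, j) - sched q i j))) + DD n sched q b ^ 2 := by
    intro b
    rw [DD_sq, normE_sq, normE_sq]
    simp only [Finset.mul_sum, ← Finset.sum_add_distrib]
    refine Finset.sum_le_sum fun i _ => Finset.sum_le_sum fun j _ => ?_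
    simp only [toR, Pi.sub_apply]
    have e : (nx n sched q b i j : ℝ)
      = q i j + (ar n b (i, j) - sched q i j + uu n sched q b i j) := by unfold uu; ring
    have hu : ((q i j : ℝ) - y i j) * uu n sched q b i j ≤ 0 := by
      rcases uu_cases hs q b i j with h | ⟨h, _, hq0, _⟩
      · rw [h]; simp
      · rw [h, hq0]; simp; exact hy i j
    rw [e]
    nlinarith
  refine (Ea_mono h0 h1 hp).trans ?_
  rw [Ea_add, Ea_add, Ea_const, Ea_const_mul]
  simp only [Ea_sum, Ea_const_mul, Ea_sub, Ea_ar, Ea_const]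
  linarith [DD_sq_le hs hn h0 h1 hl q]

/-- Row weights of the cone projection. -/
noncomputable def cw (n : ℕ) (q : Fin n → Fin n → ℕ) : Fin n → ℝ := (cone_proj (toR n q)).choose

/-- Column weights of the cone projection. -/
noncomputable def cwt (n : ℕ) (q : Fin n → Fin n → ℕ) : Fin n → ℝ :=
  (cone_proj (toR n q)).choose_spec.choose

/-- The cone projection. -/
noncomputable def cy (n : ℕ) (q : Fin n → Fin n → ℕ) : Fin n → Fin n → ℝ :=
  fun i j => cw n q i + cwt n q j

/-- Distance to the cone. -/
noncomputable def WW (n : ℕ) (q : Fin n → Fin n → ℕ) : ℝ := normE n (toR n q - cy n q)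

lemma c_spec (q : Fin n → Fin n → ℕ) : (∀ i, 0 ≤ cw n q i) ∧ (∀ j, 0 ≤ cwt n q j) ∧
      (∀ v vt : Fin n → ℝ, (∀ i, 0 ≤ v i) → (∀ j, 0 ≤ vt j) →
        ∑ i, ∑ j, (toR n q i j - (cw n q i + cwt n q j)) ^ 2
          ≤ ∑ i, ∑ j, (toR n q i j - (v i + vt j)) ^ 2) ∧
      (∀ i, ∑ j, (toR n q i j - (cw n q i + cwt n q j)) ≤ 0) ∧
      (∀ j, ∑ i, (toR n q i j - (cw n q i + cwt n q j)) ≤ 0) ∧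
      0 ≤ ∑ i, ∑ j, (toR n q i j - (cw n q i + cwt n q j)) * (cw n q i + cwt n q j) :=
  (cone_proj (toR n q)).choose_spec.choose_spec

lemma WW_min (q q' : Fin n → Fin n → ℕ) : WW n q ≤ normE n (toR n q - cy n q') := by
  apply Real.sqrt_le_sqrt
  exact (c_spec q).2.2.1 _ _ (c_spec q').1 (c_spec q').2.1

lemma WW_lip1 (q q' : Fin n → Fin n → ℕ) : WW n q ≤ WW n q' + normE n (toR n q - toR n q') := by
  refine (WW_min q q').trans ?_
  have : toR n q - cy n q' = (toR n q' - cy n q') + (toR n q - toR n q') := by abel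
  rw [this]
  exact normE_add_le _ _

lemma normE_sub_comm (x y : Fin n → Fin n → ℝ) : normE n (x - y) = normE n (y - x) := by
  unfold normE
  congr 1
  refine Finset.sum_congr rfl fun i _ => Finset.sum_congr rfl fun j _ => ?_
  simp only [Pi.sub_apply]; ring

lemma WW_lip (q : Fin n → Fin n → ℕ) (b : Arr n) :
    |WW n (nx n sched q b) - WW n q| ≤ DD n sched q b := by
  have h1 := WW_lip1 (nx n sched q b) q
  have h2 := WW_lip1 q (nx n sched q b)
  rw [normE_sub_comm] at h2
  unfold DD
  rw [abs_le]
  constructor <;> linarith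

lemma norm_lip (q : Fin n → Fin n → ℕ) (b : Arr n) :
    |normE n (toR n (nx n sched q b)) - normE n (toR n q)| ≤ DD n sched q b := by
  have h1 := normE_add_le (toR n q) (toR n (nx n sched q b) - toR n q)
  have h2 := normE_add_le (toR n (nx n sched q b)) (toR n q - toR n (nx n sched q b))
  rw [normE_sub_comm] at h2
  rw [add_sub_cancel] at h1 h2
  unfold DD
  rw [abs_le]
  constructor <;> linarith

lemma sum_bound (x : Fin n → Fin n → ℝ) : |∑ i, ∑ j, x i j| ≤ n * normE n x := by
  have := inner_le x (fun _ _ => 1)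
  simp only [mul_one] at this
  have h : normE n (fun _ _ => 1) = n := by
    unfold normE
    simp only [one_pow, Finset.sum_const, Finset.card_univ, Fintype.card_fin, nsmul_eq_mul, mul_one]
    exact Real.sqrt_mul_self (Nat.cast_nonneg n)
  rw [h] at this
  linarith

lemma ssc_drift (hs : IsMaxWeight n sched) (hn : 1 ≤ n) {ε : ℝ} (hε0 : 0 < ε)
    (hε : ε ≤ 1 / (2 * n)) (q : Fin n → Fin n → ℕ) :
    ∑ i, ∑ j, ((q i j : ℝ) - cy n q i j) * ((1 - ε) / n - sched q i j) ≤ - (WW n q / (2 * n)) := by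
  have hn' : (0 : ℝ) < n := by exact_mod_cast hn
  obtain ⟨c1, c2, c3, c4, c5, c6⟩ := c_spec q
  set x : Fin n → Fin n → ℝ := toR n q - cy n q with hx
  have hxe : ∀ i j, x i j = toR n q i j - (cw n q i + cwt n q j) := fun i j => rfl
  have hxe2 : ∀ i j, (q i j : ℝ) - cy n q i j = x i j := fun i j => rfl
  simp only [← hxe] at c4 c5 c6
  simp only [hxe2]
  have hW : WW n q = normE n x := rfl
  have hW0 : 0 ≤ WW n q := normE_nonneg _
  rcases hW0.eq_or_lt with h | hpos
  · have hz : ∀ i j, x i j = 0 := by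
      intro i j
      have := abs_entry_le x i j
      rw [← hW, ← h] at this
      exact abs_nonpos_iff.mp this
    simp [hz, ← h]
  have key := maxweight_ge hs q (fun i j => 1 / n + x i j * (1 / (n * WW n q))) (by
      intro i j
      have h1 := (abs_le.mp (abs_entry_le x i j)).1
      rw [← hW] at h1
      have : 1 / (n : ℝ) + x i j * (1 / (n * WW n q)) = (WW n q + x i j) / (n * WW n q) := by
        field_simp
      rw [this]
      apply div_nonneg _ (by positivity)
      linarith) (by
      intro i
      rw [Finset.sum_add_distrib, ← Finset.sum_mul]
      have : (∑ j, x i j) * (1 / (n * WW n q)) ≤ 0 :=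
        mul_nonpos_of_nonpos_of_nonneg (c4 i) (by positivity)
      have h2 : ∑ j : Fin n, 1 / (n : ℝ) = 1 := by simp; field_simp
      linarith) (by
      intro j
      rw [Finset.sum_add_distrib, ← Finset.sum_mul]
      have : (∑ i, x i j) * (1 / (n * WW n q)) ≤ 0 :=
        mul_nonpos_of_nonpos_of_nonneg (c5 j) (by positivity)
      have h2 : ∑ j : Fin n, 1 / (n : ℝ) = 1 := by simp; field_simp
      linarith)
  set S := ∑ i, cw n q i + ∑ j, cwt n q j with hS
  set X := ∑ i, ∑ j, x i j with hX
  set T := ∑ i, ∑ j, (q i j : ℝ) with hT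
  -- total
  have e1 : X = T - n * S := by
    simp only [hX, hT, hS, hxe, Finset.sum_sub_distrib, Finset.sum_add_distrib, toR]
    simp [← Finset.mul_sum]
    ring
  -- inner products with s
  have e2 : ∑ i, ∑ j, x i j * (sched q i j : ℝ) = ∑ i, ∑ j, (q i j : ℝ) * (sched q i j : ℝ) - S := by
    have a1 : ∑ i, ∑ j, cw n q i * (sched q i j : ℝ) = ∑ i, cw n q i := by
      refine Finset.sum_congr rfl fun i _ => ?_
      rw [← Finset.mul_sum, sched_row hs, mul_one]
    have a2 : ∑ i, ∑ j, cwt n q j * (sched q i j : ℝ) = ∑ j, cwt n q j := by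
      rw [Finset.sum_comm]
      refine Finset.sum_congr rfl fun i _ => ?_
      rw [← Finset.mul_sum, sched_col hs, mul_one]
    simp only [hxe, sub_mul, add_mul, Finset.sum_sub_distrib, Finset.sum_add_distrib, a1, a2, toR]
    rfl
  have e3 : ∑ i, ∑ j, (q i j : ℝ) * (1 / n + x i j * (1 / (n * WW n q)))
      = T / n + (∑ i, ∑ j, (q i j : ℝ) * x i j) * (1 / (n * WW n q)) := by
    simp only [mul_add, Finset.sum_add_distrib, ← mul_assoc, ← Finset.sum_mul]
    rw [← hT]; ring
  have e4 : WW n q ^ 2 ≤ ∑ i, ∑ j, (q i j : ℝ) * x i j := by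
    rw [hW, normE_sq]
    have : ∑ i, ∑ j, (q i j : ℝ) * x i j = ∑ i, ∑ j, x i j ^ 2
        + ∑ i, ∑ j, x i j * (cw n q i + cwt n q j) := by
      simp only [← Finset.sum_add_distrib]
      refine Finset.sum_congr rfl fun i _ => Finset.sum_congr rfl fun j _ => ?_
      rw [hxe]; simp only [toR]; ring
    linarith
  have e5 : WW n q / n ≤ (∑ i, ∑ j, (q i j : ℝ) * x i j) * (1 / (n * WW n q)) := by
    calc WW n q / n = WW n q ^ 2 * (1 / (n * WW n q)) := by field_simp
      _ ≤ _ := by gcongr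
  rw [e3] at key
  have e6 : ∑ i, ∑ j, x i j * ((1 - ε) / n - sched q i j)
      = X * ((1 - ε) / n) - ∑ i, ∑ j, x i j * (sched q i j : ℝ) := by
    simp only [mul_sub, Finset.sum_sub_distrib, ← Finset.sum_mul]
    rw [← hX]
  have e7 := (abs_le.mp (sum_bound x)).1
  rw [← hX, ← hW] at e7
  rw [e6, e2]
  have e8 : X * ((1 - ε) / n) = T / n - S - ε * (X / n) := by
    rw [e1]; field_simp
  have e9 : - WW n q ≤ X / n := by
    rw [le_div_iff₀ hn']; linarith
  have e10 : ε * WW n q ≤ 1 / (2 * n) * WW n q := by gcongr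
  have e11 : ε * (-WW n q) ≤ ε * (X / n) := by gcongr
  have e12 : WW n q / n = 2 * (WW n q / (2 * n)) := by field_simp
  have e13 : 1 / (2 * n) * WW n q = WW n q / (2 * n) := by ring
  rw [e8]
  linarith

lemma q_drift (hs : IsMaxWeight n sched) (hn : 1 ≤ n) {ε : ℝ} (hε0 : 0 < ε)
    (q : Fin n → Fin n → ℕ) :
    ∑ i, ∑ j, ((q i j : ℝ) - 0) * ((1 - ε) / n - sched q i j)
      ≤ - (ε / n * normE n (toR n q)) := by
  have hn' : (0 : ℝ) < n := by exact_mod_cast hn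
  have key := maxweight_ge hs q (fun i j => 1 / n) (fun _ _ => by positivity)
    (fun i => by simp; field_simp; rfl) (fun i => by simp; field_simp; rfl)
  have hT : normE n (toR n q) ≤ ∑ i, ∑ j, (q i j : ℝ) := by
    apply Real.sqrt_le_iff.mpr
    refine ⟨Finset.sum_nonneg fun i _ => Finset.sum_nonneg fun j _ => Nat.cast_nonneg _, ?_⟩
    simp only [← Fintype.sum_prod_type']
    exact Finset.sum_sq_le_sq_sum_of_nonneg fun i _ => Nat.cast_nonneg _
  simp only [sub_zero, mul_sub, Finset.sum_sub_distrib, ← Finset.sum_mul] at key ⊢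
  have : ε / n * normE n (toR n q) ≤ ε / n * ∑ i, ∑ j, (q i j : ℝ) := by gcongr
  have e : (∑ i, ∑ j, (q i j : ℝ)) * ((1 - ε) / n)
    = (∑ i, ∑ j, (q i j : ℝ)) * (1 / n) - ε / n * ∑ i, ∑ j, (q i j : ℝ) := by ring
  linarith

end dyn

lemma W_exp {n : ℕ} {sched : (Fin n → Fin n → ℕ) → (Fin n → Fin n → ℕ)}
    (hs : IsMaxWeight n sched) (hn : 1 ≤ n) {ε : ℝ} (hε0 : 0 < ε)
    (hε : ε ≤ 1 / (2 * n)) (h0 : 0 ≤ (1 - ε) / n) (h1 : (1 - ε) / n ≤ 1)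
    {pd : (Fin n → Fin n → ℕ) → ℝ≥0∞} (hinv : Inv n ((1 - ε) / n) sched pd) :
    ∑' q, pd q * ENNReal.ofReal (Real.exp (1 / (2 * n) / (8 * n) * WW n q))
      ≤ ENNReal.ofReal (16 / 3) := by
  have hn' : (1 : ℝ) ≤ n := by exact_mod_cast hn
  have hl : n * ((1 - ε) / n) ≤ 1 := by
    rw [mul_div_cancel₀ _ (by positivity)]; linarith
  refine exp_moment hn h0 h1 hinv (WW n) (fun q => normE_nonneg _) (DD n sched)
    WW_lip (DD_le hs) (DD_sq_le hs hn h0 h1 hl) _ (by positivity) ?_ ?_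
  · rw [div_le_one (by positivity)]; linarith
  · intro q
    have a1 := drift_y hs hn h0 h1 hl q (cy n q)
      (fun i j => add_nonneg ((c_spec q).1 i) ((c_spec q).2.1 j))
    have a2 := ssc_drift hs hn hε0 hε q
    have a3 : Ea n ((1 - ε) / n) (fun b => WW n (nx n sched q b) ^ 2) ≤
        Ea n ((1 - ε) / n) (fun b => normE n (toR n (nx n sched q b) - cy n q) ^ 2) := by
      apply Ea_mono h0 h1
      intro b
      have := WW_min (nx n sched q b) q
      have h := normE_nonneg (toR n (nx n sched q b) - cy n (nx n sched q b))
      exact pow_le_pow_left₀ h this 2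
    have a4 : normE n (toR n q - cy n q) = WW n q := rfl
    rw [a4] at a1
    have a5 : 2 * (1 / (2 * (n : ℝ))) * WW n q = 2 * (WW n q / (2 * n)) := by ring
    linarith

lemma q_exp {n : ℕ} {sched : (Fin n → Fin n → ℕ) → (Fin n → Fin n → ℕ)}
    (hs : IsMaxWeight n sched) (hn : 1 ≤ n) {ε : ℝ} (hε0 : 0 < ε)
    (hε1 : ε ≤ 1) (h0 : 0 ≤ (1 - ε) / n) (h1 : (1 - ε) / n ≤ 1)
    {pd : (Fin n → Fin n → ℕ) → ℝ≥0∞} (hinv : Inv n ((1 - ε) / n) sched pd) :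
    ∑' q, pd q * ENNReal.ofReal (Real.exp (ε / n / (8 * n) * normE n (toR n q)))
      ≤ ENNReal.ofReal (16 / 3) := by
  have hn' : (1 : ℝ) ≤ n := by exact_mod_cast hn
  have hl : n * ((1 - ε) / n) ≤ 1 := by
    rw [mul_div_cancel₀ _ (by positivity)]; linarith
  refine exp_moment hn h0 h1 hinv (fun q => normE n (toR n q)) (fun q => normE_nonneg _)
    (DD n sched) norm_lip (DD_le hs) (DD_sq_le hs hn h0 h1 hl) _ (by positivity) ?_ ?_
  · rw [div_le_one (by positivity)]; linarith
  · intro q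
    have a1 := drift_y hs hn h0 h1 hl q 0 (fun i j => le_rfl)
    have a2 := q_drift hs hn hε0 q
    simp only [sub_zero, Pi.zero_apply] at a1 a2
    linarith

/-- Row sum. -/
noncomputable def rs {n : ℕ} (x : Fin n → Fin n → ℝ) (i : Fin n) : ℝ := ∑ j, x i j
/-- Column sum. -/
noncomputable def cs {n : ℕ} (x : Fin n → Fin n → ℝ) (j : Fin n) : ℝ := ∑ i, x i j
/-- Total sum. -/
noncomputable def tot {n : ℕ} (x : Fin n → Fin n → ℝ) : ℝ := ∑ i, ∑ j, x i j

/-- Inner product of the parallel components. -/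
noncomputable def Bf (n : ℕ) (x y : Fin n → Fin n → ℝ) : ℝ :=
  (1 / n) * ∑ i, rs x i * rs y i + (1 / n) * ∑ j, cs x j * cs y j - (1 / n ^ 2) * (tot x * tot y)

/-- Parallel component. -/
noncomputable def Pp (n : ℕ) (x : Fin n → Fin n → ℝ) : Fin n → Fin n → ℝ :=
  fun i j => rs x i / n + (cs x j / n - tot x / n ^ 2)

section par
variable {n : ℕ}

lemma rs_add (x y : Fin n → Fin n → ℝ) (i : Fin n) : rs (x + y) i = rs x i + rs y i := by
  simp [rs, Finset.sum_add_distrib]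
lemma cs_add (x y : Fin n → Fin n → ℝ) (i : Fin n) : cs (x + y) i = cs x i + cs y i := by
  simp [cs, Finset.sum_add_distrib]
lemma tot_add (x y : Fin n → Fin n → ℝ) : tot (x + y) = tot x + tot y := by
  simp [tot, Finset.sum_add_distrib]
lemma tot_rs (x : Fin n → Fin n → ℝ) : tot x = ∑ i, rs x i := rfl
lemma tot_cs (x : Fin n → Fin n → ℝ) : tot x = ∑ i, cs x i := by
  unfold tot cs; rw [Finset.sum_comm]

lemma Bf_add_left (x y z : Fin n → Fin n → ℝ) : Bf n (x + y) z = Bf n x z + Bf n y z := by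
  simp only [Bf, rs_add, cs_add, tot_add, add_mul, Finset.sum_add_distrib]
  ring

lemma Bf_comm (x y : Fin n → Fin n → ℝ) : Bf n x y = Bf n y x := by
  simp only [Bf, mul_comm]

lemma Bf_expand (x α u : Fin n → Fin n → ℝ) :
    Bf n (x + α + u) (x + α + u) = Bf n x x + 2 * Bf n x α + Bf n α α
      + 2 * Bf n (x + α + u) u - Bf n u u := by
  have e : ∀ a b c : Fin n → Fin n → ℝ, Bf n a (b + c) = Bf n a b + Bf n a c := by
    intro a b c
    rw [Bf_comm, Bf_add_left, Bf_comm b, Bf_comm c]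
  simp only [Bf_add_left, e]
  rw [Bf_comm α x, Bf_comm u x, Bf_comm u α]
  ring

lemma sum_sep (z : Fin n → Fin n → ℝ) (f g : Fin n → ℝ) :
    ∑ i, ∑ j, z i j * (f i + g j) = ∑ i, rs z i * f i + ∑ j, cs z j * g j := by
  simp only [mul_add, Finset.sum_add_distrib, rs, cs, Finset.sum_mul]
  congr 1
  rw [Finset.sum_comm]

lemma Pp_inner (x u : Fin n → Fin n → ℝ) : ∑ i, ∑ j, u i j * Pp n x i j = Bf n x u := by
  unfold Pp
  rw [sum_sep]
  simp only [mul_sub, Finset.sum_sub_distrib, ← Finset.sum_mul, ← tot_cs, Bf, Finset.mul_sum]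
  have : tot u * (tot x / n ^ 2) = 1 / n ^ 2 * (tot x * tot u) := by ring
  rw [this, add_sub_assoc]
  congr 1
  · exact Finset.sum_congr rfl fun i _ => by ring
  · congr 1
    exact Finset.sum_congr rfl fun i _ => by ring

lemma rs_perp (hn : 1 ≤ n) (x : Fin n → Fin n → ℝ) (i : Fin n) : rs (x - Pp n x) i = 0 := by
  have hn' : (n : ℝ) ≠ 0 := by positivity
  have : rs (x - Pp n x) i = rs x i - ∑ j, Pp n x i j := by simp [rs]
  rw [this]
  simp only [Pp, Finset.sum_add_distrib, Finset.sum_sub_distrib, ← Finset.sum_div, ← tot_cs]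
  simp
  field_simp
  ring

lemma cs_perp (hn : 1 ≤ n) (x : Fin n → Fin n → ℝ) (j : Fin n) : cs (x - Pp n x) j = 0 := by
  have hn' : (n : ℝ) ≠ 0 := by positivity
  have : cs (x - Pp n x) j = cs x j - ∑ i, Pp n x i j := by simp [cs]
  rw [this]
  simp only [Pp, Finset.sum_add_distrib, Finset.sum_sub_distrib, ← Finset.sum_div, ← tot_rs]
  simp
  field_simp
  ring

lemma perp_le (hn : 1 ≤ n) (x : Fin n → Fin n → ℝ) (f g : Fin n → ℝ) :
    normE n (x - Pp n x) ≤ normE n (x - fun i j => f i + g j) := by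
  apply Real.sqrt_le_sqrt
  have h := sum_sep (x - Pp n x) (fun i => rs x i / n - f i)
    (fun j => cs x j / n - tot x / n ^ 2 - g j)
  simp only [rs_perp hn, cs_perp hn, zero_mul, Finset.sum_const_zero, add_zero] at h
  have e : ∑ i, ∑ j, (x - fun i j => f i + g j) i j ^ 2 = ∑ i, ∑ j, (x - Pp n x) i j ^ 2
      + 2 * ∑ i, ∑ j, (x - Pp n x) i j *
        (rs x i / n - f i + (cs x j / n - tot x / n ^ 2 - g j))
      + ∑ i, ∑ j, (rs x i / n - f i + (cs x j / n - tot x / n ^ 2 - g j)) ^ 2 := by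
    simp only [Finset.mul_sum, ← Finset.sum_add_distrib]
    refine Finset.sum_congr rfl fun i _ => Finset.sum_congr rfl fun j _ => ?_
    simp only [Pi.sub_apply, Pp]; ring
  rw [e, h]
  have : 0 ≤ ∑ i, ∑ j, (rs x i / n - f i + (cs x j / n - tot x / n ^ 2 - g j)) ^ 2 := by positivity
  linarith

lemma Bf_self (hn : 1 ≤ n) (x : Fin n → Fin n → ℝ) :
    Bf n x x = ∑ i, ∑ j, Pp n x i j ^ 2 ∧
    Bf n x x = normE n x ^ 2 - normE n (x - Pp n x) ^ 2 := by
  have h := sum_sep (x - Pp n x) (fun i => rs x i / n) (fun j => cs x j / n - tot x / n ^ 2)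
  simp only [rs_perp hn, cs_perp hn, zero_mul, Finset.sum_const_zero, add_zero] at h
  have h' : ∑ i, ∑ j, (x - Pp n x) i j * Pp n x i j = 0 := h
  have h2 := Pp_inner x x
  rw [normE_sq, normE_sq]
  constructor
  · rw [← h2, ← sub_eq_zero, ← h']
    simp only [← Finset.sum_sub_distrib]
    refine Finset.sum_congr rfl fun i _ => Finset.sum_congr rfl fun j _ => ?_
    simp only [Pi.sub_apply]; ring
  · rw [← h2, ← sub_eq_zero, ← neg_eq_zero, ← h']
    simp only [← Finset.sum_sub_distrib, ← Finset.sum_neg_distrib]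
    refine Finset.sum_congr rfl fun i _ => Finset.sum_congr rfl fun j _ => ?_
    simp only [Pi.sub_apply]; ring

lemma Bf_nonneg (hn : 1 ≤ n) (x : Fin n → Fin n → ℝ) : 0 ≤ Bf n x x := by
  rw [(Bf_self hn x).1]; positivity

lemma Bf_le (hn : 1 ≤ n) (x : Fin n → Fin n → ℝ) : Bf n x x ≤ normE n x ^ 2 := by
  rw [(Bf_self hn x).2]
  linarith [sq_nonneg (normE n (x - Pp n x))]

/-- Split inequality replacing Hölder. -/
lemma split_aux {W K v : ℝ} (hW : 0 ≤ W) (hK : 0 < K) (hv : v = 0 ∨ 1 ≤ v) {r : ℕ} (hr : 2 ≤ r) :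
    W * v ≤ K * v ^ 2 + W ^ r / K ^ (r - 1) := by
  have hp : 0 ≤ W ^ r / K ^ (r - 1) := by positivity
  rcases hv with h | h
  · rw [h]; simp; exact hp
  rcases le_or_gt W (K * v) with h1 | h1
  · nlinarith
  · have h2 : v ≤ W / K := by rw [le_div_iff₀ hK]; linarith
    have h3 : v ≤ (W / K) ^ (r - 1) := by
      calc v ≤ v ^ (r - 1) := le_self_pow₀ h (by omega)
        _ ≤ _ := by gcongr
    have h4 : W * (W / K) ^ (r - 1) = W ^ r / K ^ (r - 1) := by
      rw [div_pow, ← mul_div_assoc, ← pow_succ']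
      congr 2; omega
    have h5 := mul_le_mul_of_nonneg_left h3 hW
    nlinarith [sq_nonneg v]

variable {sched : (Fin n → Fin n → ℕ) → (Fin n → Fin n → ℕ)}

lemma uu_nonneg (hs : IsMaxWeight n sched) (q : Fin n → Fin n → ℕ) (b : Arr n) (i j : Fin n) :
    0 ≤ uu n sched q b i j := by
  rcases uu_cases hs q b i j with h | ⟨h, _⟩ <;> rw [h]; norm_num

lemma uu_le (hs : IsMaxWeight n sched) (q : Fin n → Fin n → ℕ) (b : Arr n) (i j : Fin n) :
    uu n sched q b i j ≤ sched q i j := by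
  rcases uu_cases hs q b i j with h | ⟨h, h2, _⟩ <;> rw [h]
  · exact Nat.cast_nonneg _
  · rw [h2]; simp

lemma uu_rs (hs : IsMaxWeight n sched) (q : Fin n → Fin n → ℕ) (b : Arr n) (i : Fin n) :
    rs (uu n sched q b) i * rs (uu n sched q b) i = rs (uu n sched q b) i := by
  by_cases h : ∃ j, uu n sched q b i j ≠ 0
  · obtain ⟨j, hj⟩ := h
    have h1 : uu n sched q b i j = 1 := by
      rcases uu_cases hs q b i j with h | ⟨h, _⟩
      · exact absurd h hj
      · exact h
    have h2 : 1 ≤ rs (uu n sched q b) i := by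
      rw [← h1]
      exact Finset.single_le_sum (f := fun j => uu n sched q b i j)
        (fun j _ => uu_nonneg hs q b i j) (Finset.mem_univ j)
    have h3 : rs (uu n sched q b) i ≤ 1 := by
      rw [← sched_row hs q i]
      exact Finset.sum_le_sum fun j _ => uu_le hs q b i j
    rw [le_antisymm h3 h2]; simp
  · push Not at h
    simp [rs, h]

lemma uu_cs (hs : IsMaxWeight n sched) (q : Fin n → Fin n → ℕ) (b : Arr n) (j : Fin n) :
    cs (uu n sched q b) j * cs (uu n sched q b) j = cs (uu n sched q b) j := by
  by_cases h : ∃ i, uu n sched q b i j ≠ 0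
  · obtain ⟨i, hj⟩ := h
    have h1 : uu n sched q b i j = 1 := by
      rcases uu_cases hs q b i j with h | ⟨h, _⟩
      · exact absurd h hj
      · exact h
    have h2 : 1 ≤ cs (uu n sched q b) j := by
      rw [← h1]
      exact Finset.single_le_sum (f := fun i => uu n sched q b i j)
        (fun i _ => uu_nonneg hs q b i j) (Finset.mem_univ i)
    have h3 : cs (uu n sched q b) j ≤ 1 := by
      rw [← sched_col hs q j]
      exact Finset.sum_le_sum fun i _ => uu_le hs q b i j
    rw [le_antisymm h3 h2]; simp
  · push Not at h
    simp [cs, h]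

lemma uu_tot_nonneg (hs : IsMaxWeight n sched) (q : Fin n → Fin n → ℕ) (b : Arr n) :
    0 ≤ tot (uu n sched q b) :=
  Finset.sum_nonneg fun i _ => Finset.sum_nonneg fun j _ => uu_nonneg hs q b i j

lemma uu_tot_le (hs : IsMaxWeight n sched) (q : Fin n → Fin n → ℕ) (b : Arr n) :
    tot (uu n sched q b) ≤ n := by
  calc tot (uu n sched q b) ≤ ∑ i, ∑ j, (sched q i j : ℝ) :=
        Finset.sum_le_sum fun i _ => Finset.sum_le_sum fun j _ => uu_le hs q b i j
    _ = n := by simp [sched_row hs]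

lemma uu_Bf (hs : IsMaxWeight n sched) (hn : 1 ≤ n) (q : Fin n → Fin n → ℕ) (b : Arr n) :
    (1 / n) * tot (uu n sched q b) ≤ Bf n (uu n sched q b) (uu n sched q b) ∧
    Bf n (uu n sched q b) (uu n sched q b) ≤ 2 * ((1 / n) * tot (uu n sched q b)) := by
  have hn' : (0 : ℝ) < n := by exact_mod_cast hn
  simp only [Bf, uu_rs hs, uu_cs hs, ← tot_rs, ← tot_cs]
  have h0 := uu_tot_nonneg hs q b
  have h1 := uu_tot_le hs q b
  set U := tot (uu n sched q b)
  have h2 : 0 ≤ 1 / (n : ℝ) ^ 2 * (U * U) := by positivity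
  have h3 : 1 / (n : ℝ) ^ 2 * (U * U) ≤ 1 / n * U := by
    have : 1 / (n : ℝ) ^ 2 * (U * U) ≤ 1 / (n : ℝ) ^ 2 * (n * U) := by gcongr
    have e : 1 / (n : ℝ) ^ 2 * (n * U) = 1 / n * U := by field_simp
    linarith
  constructor <;> linarith

lemma uu_norm (hs : IsMaxWeight n sched) (q : Fin n → Fin n → ℕ) (b : Arr n) :
    normE n (uu n sched q b) ^ 2 = tot (uu n sched q b) ∧
    (normE n (uu n sched q b) = 0 ∨ 1 ≤ normE n (uu n sched q b)) := by
  have h : normE n (uu n sched q b) ^ 2 = tot (uu n sched q b) := by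
    rw [normE_sq]
    refine Finset.sum_congr rfl fun i _ => Finset.sum_congr rfl fun j _ => ?_
    rcases uu_cases hs q b i j with h | ⟨h, _⟩ <;> rw [h] <;> norm_num
  refine ⟨h, ?_⟩
  by_cases hz : ∃ i j, uu n sched q b i j ≠ 0
  · right
    obtain ⟨i, j, hj⟩ := hz
    have h1 : uu n sched q b i j = 1 := by
      rcases uu_cases hs q b i j with h | ⟨h, _⟩
      · exact absurd h hj
      · exact h
    have := abs_entry_le (uu n sched q b) i j
    rwa [h1, abs_one] at this
  · left
    push Not at hz
    simp [normE, hz]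

lemma cross_le (hs : IsMaxWeight n sched) (hn : 1 ≤ n) (q : Fin n → Fin n → ℕ) (b : Arr n)
    {K : ℝ} (hK : 0 < K) {r : ℕ} (hr : 2 ≤ r) :
    |Bf n (toR n (nx n sched q b)) (uu n sched q b)|
      ≤ K * tot (uu n sched q b) + (1 / K ^ (r - 1)) * WW n (nx n sched q b) ^ r := by
  set x := toR n (nx n sched q b) with hx
  set u := uu n sched q b with hu
  have h1 : Bf n x u = - ∑ i, ∑ j, (x - Pp n x) i j * u i j := by
    rw [← Pp_inner, ← Finset.sum_neg_distrib]
    refine Finset.sum_congr rfl fun i _ => ?_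
    rw [← Finset.sum_neg_distrib]
    refine Finset.sum_congr rfl fun j _ => ?_
    have : x i j * u i j = 0 := by
      rcases uu_cases hs q b i j with h | ⟨_, _, _, h⟩
      · rw [hu, h]; simp
      · rw [hx, toR, h]; simp
    simp only [Pi.sub_apply, sub_mul, this]; ring
  rw [h1, abs_neg]
  have h2 := inner_le (x - Pp n x) u
  have h3 : normE n (x - Pp n x) ≤ WW n (nx n sched q b) :=
    perp_le hn x (cw n (nx n sched q b)) (cwt n (nx n sched q b))
  have h4 := split_aux (W := WW n (nx n sched q b)) (K := K) (v := normE n u) (normE_nonneg _) hK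
    (uu_norm hs q b).2 hr
  rw [(uu_norm hs q b).1] at h4
  have h5 : normE n (x - Pp n x) * normE n u ≤ WW n (nx n sched q b) * normE n u :=
    mul_le_mul_of_nonneg_right h3 (normE_nonneg _)
  have h6 : (1 / K ^ (r - 1)) * WW n (nx n sched q b) ^ r = WW n (nx n sched q b) ^ r / K ^ (r - 1) := by
    ring
  rw [h6]
  linarith

/-- Arrivals minus services. -/
noncomputable def al (n : ℕ) (sched : (Fin n → Fin n → ℕ) → (Fin n → Fin n → ℕ))
    (q : Fin n → Fin n → ℕ) (b : Arr n) (i j : Fin n) : ℝ := ar n b (i, j) - sched q i j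

lemma nx_eq (q : Fin n → Fin n → ℕ) (b : Arr n) :
    toR n (nx n sched q b) = toR n q + al n sched q b + uu n sched q b := by
  funext i j
  simp only [toR, Pi.add_apply, al, uu]; ring

lemma al_rs (hs : IsMaxWeight n sched) (q : Fin n → Fin n → ℕ) (b : Arr n) (i : Fin n) :
    rs (al n sched q b) i = ∑ k ∈ ({i} : Finset (Fin n)) ×ˢ Finset.univ, ar n b k + (-1) := by
  rw [Finset.sum_product]
  simp only [rs, al, Finset.sum_sub_distrib, sched_row hs, Finset.sum_singleton]
  ring

lemma al_cs (hs : IsMaxWeight n sched) (q : Fin n → Fin n → ℕ) (b : Arr n) (j : Fin n) :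
    cs (al n sched q b) j = ∑ k ∈ Finset.univ ×ˢ ({j} : Finset (Fin n)), ar n b k + (-1) := by
  rw [Finset.sum_product]
  simp only [cs, al, Finset.sum_sub_distrib, sched_col hs, Finset.sum_singleton]
  ring

lemma al_tot (hs : IsMaxWeight n sched) (q : Fin n → Fin n → ℕ) (b : Arr n) :
    tot (al n sched q b) = ∑ k, ar n b k + (-n) := by
  rw [Fintype.sum_prod_type]
  simp only [tot, al, Finset.sum_sub_distrib, sched_row hs]
  simp
  ring

lemma Ea_al_sq (hs : IsMaxWeight n sched) (hn : 1 ≤ n) (ε : ℝ) (q : Fin n → Fin n → ℕ) :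
    Ea n ((1 - ε) / n) (fun b => Bf n (al n sched q b) (al n sched q b))
      = (2 * n - 1) * ((1 - ε) / n * (1 - (1 - ε) / n)) + ε ^ 2 := by
  have hn' : (n : ℝ) ≠ 0 := by positivity
  simp only [Bf, al_rs hs, al_cs hs, al_tot hs, ← pow_two]
  simp only [Ea_sub, Ea_add, Ea_const_mul, Ea_sum, Ea_sq]
  simp
  field_simp
  ring

lemma Ea_al_lin (hs : IsMaxWeight n sched) (hn : 1 ≤ n) (ε : ℝ) (q : Fin n → Fin n → ℕ) :
    Ea n ((1 - ε) / n) (fun b => Bf n (toR n q) (al n sched q b))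
      = - (ε / n * tot (toR n q)) := by
  have hn' : (n : ℝ) ≠ 0 := by positivity
  simp only [Bf, al_rs hs, al_cs hs, al_tot hs]
  simp only [Ea_sub, Ea_add, Ea_const_mul, Ea_sum, Ea_const, Ea_ar, ← Finset.sum_mul,
    ← tot_rs, Finset.sum_const, Finset.card_product, Finset.card_singleton, Finset.card_univ,
    Fintype.card_fin, Fintype.card_prod, ← tot_cs, nsmul_eq_mul]
  push_cast
  field_simp
  ring

lemma Ea_tot (hs : IsMaxWeight n sched) (hn : 1 ≤ n) (ε : ℝ) (q : Fin n → Fin n → ℕ) :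
    Ea n ((1 - ε) / n) (fun b => tot (uu n sched q b))
      = Ea n ((1 - ε) / n) (fun b => tot (toR n (nx n sched q b))) - tot (toR n q) + n * ε := by
  have hn' : (n : ℝ) ≠ 0 := by positivity
  simp only [nx_eq, tot_add, al_tot hs, Ea_add, Ea_sum, Ea_const, Ea_ar]
  simp
  field_simp
  ring

/-- One-step bounds for the parallel quadratic function. -/
lemma step_bounds (hs : IsMaxWeight n sched) (hn : 1 ≤ n) {ε : ℝ}
    (h0 : 0 ≤ (1 - ε) / n) (h1 : (1 - ε) / n ≤ 1) (q : Fin n → Fin n → ℕ)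
    {K : ℝ} (hK : 0 < K) {r : ℕ} (hr : 2 ≤ r) (c0 : ℝ)
    (hc0 : c0 = (2 * n - 1) * ((1 - ε) / n * (1 - (1 - ε) / n)) + ε ^ 2) :
    |Ea n ((1 - ε) / n) (fun b => Bf n (toR n (nx n sched q b)) (toR n (nx n sched q b)))
      - (Bf n (toR n q) (toR n q) - 2 * (ε / n * tot (toR n q)) + c0)
      + 3 / 2 * (1 / n) * (Ea n ((1 - ε) / n) (fun b => tot (toR n (nx n sched q b)))
        - tot (toR n q) + n * ε)|
      ≤ (2 * K + 1 / 2 * (1 / n)) * (Ea n ((1 - ε) / n) (fun b => tot (toR n (nx n sched q b)))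
        - tot (toR n q) + n * ε)
        + 2 * ((1 / K ^ (r - 1)) * Ea n ((1 - ε) / n) (fun b => WW n (nx n sched q b) ^ r)) := by
  rw [← Ea_tot hs hn ε q]
  have hb : ∀ b, |Bf n (toR n (nx n sched q b)) (toR n (nx n sched q b))
      - (Bf n (toR n q) (toR n q) + 2 * Bf n (toR n q) (al n sched q b)
        + Bf n (al n sched q b) (al n sched q b)) + 3 / 2 * (1 / n) * tot (uu n sched q b)| ≤
      (2 * K + 1 / 2 * (1 / n)) * tot (uu n sched q b)
        + 2 * ((1 / K ^ (r - 1)) * WW n (nx n sched q b) ^ r) := by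
    intro b
    have e := Bf_expand (toR n q) (al n sched q b) (uu n sched q b)
    rw [← nx_eq] at e
    rw [e]
    have h2 := abs_le.mp (cross_le hs hn q b hK hr)
    have h3 := uu_Bf hs hn q b
    rw [abs_le]
    constructor <;> linarith [h2.1, h2.2, h3.1, h3.2]
  have hb1 := Ea_mono h0 h1 fun b => (abs_le.mp (hb b)).1
  have hb2 := Ea_mono h0 h1 fun b => (abs_le.mp (hb b)).2
  have hneg : ∀ f : Arr n → ℝ, Ea n ((1 - ε) / n) (fun b => - f b) = - Ea n ((1 - ε) / n) f := by
    intro f; simp [Ea]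
  simp only [hneg, Ea_sub, Ea_add, Ea_const_mul, Ea_const, Ea_al_sq hs hn, Ea_al_lin hs hn] at hb1 hb2
  rw [← hc0] at hb1 hb2
  rw [abs_le]
  constructor <;> linarith

end par

lemma fact_le (r : ℕ) (hr : 1 ≤ r) :
    (r.factorial : ℝ) ≤ Real.exp 1 * Real.sqrt r * (r / Real.exp 1) ^ r := by
  obtain ⟨m, rfl⟩ : ∃ m, r = m + 1 := ⟨r - 1, by omega⟩
  have h := Stirling.stirlingSeq'_antitone (Nat.zero_le m)
  simp only [Function.comp, Nat.succ_eq_add_one, zero_add, Stirling.stirlingSeq_one] at h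
  rw [Stirling.stirlingSeq, div_le_iff₀ (by positivity)] at h
  refine h.trans (le_of_eq ?_)
  rw [Real.sqrt_mul (by norm_num)]
  have : Real.sqrt 2 ≠ 0 := by positivity
  field_simp

lemma fin_of_le {n : ℕ} {pd : (Fin n → Fin n → ℕ) → ℝ≥0∞} (f g : (Fin n → Fin n → ℕ) → ℝ)
    (c : ℝ) (hc : 0 ≤ c) (hfg : ∀ q, f q ≤ c * g q)
    (hg : ∑' q, pd q * ENNReal.ofReal (g q) ≠ ⊤) : ∑' q, pd q * ENNReal.ofReal (f q) ≠ ⊤ := by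
  have : ∑' q, pd q * ENNReal.ofReal (f q) ≤
      ENNReal.ofReal c * ∑' q, pd q * ENNReal.ofReal (g q) := by
    rw [← ENNReal.tsum_mul_left]
    refine ENNReal.tsum_le_tsum fun q => ?_
    rw [mul_left_comm, ← ENNReal.ofReal_mul hc]
    exact mul_le_mul' le_rfl (ENNReal.ofReal_le_ofReal (hfg q))
  exact ne_top_of_le_ne_top (ENNReal.mul_ne_top ENNReal.ofReal_ne_top hg) this

/-- Steady-state bounds with a free truncation parameter. -/
lemma steady {n : ℕ} {sched : (Fin n → Fin n → ℕ) → (Fin n → Fin n → ℕ)}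
    (hs : IsMaxWeight n sched) (hn : 1 ≤ n) {ε : ℝ} (hε0 : 0 < ε)
    (hε : ε ≤ 1 / (2 * n)) (h0 : 0 ≤ (1 - ε) / n) (h1 : (1 - ε) / n ≤ 1)
    {pd : (Fin n → Fin n → ℕ) → ℝ≥0∞} (hinv : Inv n ((1 - ε) / n) sched pd)
    {K : ℝ} (hK : 0 < K) {r : ℕ} (hr : 2 ≤ r) (c0 : ℝ)
    (hc0 : c0 = (2 * n - 1) * ((1 - ε) / n * (1 - (1 - ε) / n)) + ε ^ 2) :
    ∃ ET : ℝ, Etot n pd = ENNReal.ofReal ET ∧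
      |2 * (ε / n * ET) - c0 + 3 / 2 * ε| ≤ 2 * K * (n * ε) + 1 / 2 * ε
        + 2 * ((1 / K ^ (r - 1)) * (r.factorial / (1 / (2 * n) / (8 * n) : ℝ) ^ r * (16 / 3))) := by
  have hn' : (1 : ℝ) ≤ n := by exact_mod_cast hn
  have hn0 : (0 : ℝ) < n := by linarith
  have hε1 : ε ≤ 1 := by
    refine hε.trans ?_
    rw [div_le_one (by positivity)]; linarith
  have hq := q_exp hs hn hε0 hε1 h0 h1 hinv
  have hW := pow_moment (WW n) (fun q => normE_nonneg _) _ (by positivity)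
    (W_exp hs hn hε0 hε h0 h1 hinv) r
  have hN1 := pow_moment (fun q => normE n (toR n q)) (fun q => normE_nonneg _) _ (by positivity) hq 1
  have hN2 := pow_moment (fun q => normE n (toR n q)) (fun q => normE_nonneg _) _ (by positivity) hq 2
  have fW : ∑' q, pd q * ENNReal.ofReal (WW n q ^ r) ≠ ⊤ :=
    ne_top_of_le_ne_top ENNReal.ofReal_ne_top hW
  have fT : ∑' q, pd q * ENNReal.ofReal (tot (toR n q)) ≠ ⊤ := by
    refine fin_of_le _ _ n hn0.le (fun q => ?_) (ne_top_of_le_ne_top ENNReal.ofReal_ne_top hN1)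
    rw [pow_one]
    exact (le_abs_self _).trans (sum_bound _)
  have fV : ∑' q, pd q * ENNReal.ofReal (Bf n (toR n q) (toR n q)) ≠ ⊤ := by
    refine fin_of_le _ _ 1 zero_le_one (fun q => ?_) (ne_top_of_le_ne_top ENNReal.ofReal_ne_top hN2)
    rw [one_mul]
    exact Bf_le hn _
  have f1 : ∑' q, pd q * ENNReal.ofReal ((fun _ => (1 : ℝ)) q) ≠ ⊤ := by
    simp [hinv.1]
  have pT : ∀ q : Fin n → Fin n → ℕ, 0 ≤ tot (toR n q) := fun q =>
    Finset.sum_nonneg fun i _ => Finset.sum_nonneg fun j _ => Nat.cast_nonneg _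
  have pV : ∀ q : Fin n → Fin n → ℕ, 0 ≤ Bf n (toR n q) (toR n q) := fun q => Bf_nonneg hn _
  have pW : ∀ q : Fin n → Fin n → ℕ, 0 ≤ WW n q ^ r := fun q => pow_nonneg (normE_nonneg _) _
  have s1 := hasSum_real (pd := pd) (fun _ => (1 : ℝ)) (fun _ => zero_le_one) f1
  have sT := hasSum_real (pd := pd) (fun q => tot (toR n q)) pT fT
  have sV := hasSum_real (pd := pd) (fun q => Bf n (toR n q) (toR n q)) pV fV
  have sT' := hasSum_inv h0 h1 hinv (fun q => tot (toR n q)) pT fT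
  have sV' := hasSum_inv h0 h1 hinv (fun q => Bf n (toR n q) (toR n q)) pV fV
  have sW' := hasSum_inv h0 h1 hinv (fun q => WW n q ^ r) pW fW
  have e1 : (∑' q, pd q * ENNReal.ofReal ((fun _ => (1 : ℝ)) q)).toReal = 1 := by
    simp [hinv.1]
  rw [e1] at s1
  refine ⟨(∑' q, pd q * ENNReal.ofReal (tot (toR n q))).toReal, ?_, ?_⟩
  · rw [ENNReal.ofReal_toReal fT, Etot]
    refine tsum_congr fun q => ?_
    congr 1
    unfold tot toR
    rw [ENNReal.ofReal_sum_of_nonneg fun i _ => Finset.sum_nonneg fun j _ => Nat.cast_nonneg _]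
    refine Finset.sum_congr rfl fun i _ => ?_
    rw [ENNReal.ofReal_sum_of_nonneg fun j _ => Nat.cast_nonneg _]
    refine Finset.sum_congr rfl fun j _ => ?_
    rw [ENNReal.ofReal_natCast]
  have hWr : (∑' q, pd q * ENNReal.ofReal (WW n q ^ r)).toReal ≤
      r.factorial / (1 / (2 * n) / (8 * n) : ℝ) ^ r * (16 / 3) :=
    ENNReal.toReal_le_of_le_ofReal (by positivity) hW
  set ET := (∑' q, pd q * ENNReal.ofReal (tot (toR n q))).toReal
  set EV := (∑' q, pd q * ENNReal.ofReal (Bf n (toR n q) (toR n q))).toReal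
  set EW := (∑' q, pd q * ENNReal.ofReal (WW n q ^ r)).toReal
  have dT := (sT'.sub sT).add (s1.mul_left (n * ε))
  have L := ((sV'.sub sV).add (sT.mul_left (2 * (ε / n)))).add
    ((s1.mul_left (-c0)).add (dT.mul_left (3 / 2 * (1 / (n : ℝ)))))
  have R := (dT.mul_left (2 * K + 1 / 2 * (1 / (n : ℝ)))).add
    (sW'.mul_left (2 * (1 / K ^ (r - 1))))
  have st := fun q => abs_le.mp (step_bounds hs hn h0 h1 q hK hr c0 hc0)
  have b1 := hasSum_le (fun q => ?_) L R
  have b2 := hasSum_le (fun q => ?_) R.neg L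
  · have e2 : 1 / (n : ℝ) * (n * ε) = ε := by field_simp
    have b3 : 1 / K ^ (r - 1) * EW ≤
        1 / K ^ (r - 1) * (r.factorial / (1 / (2 * n) / (8 * n) : ℝ) ^ r * (16 / 3)) :=
      mul_le_mul_of_nonneg_left hWr (by positivity)
    rw [abs_le]
    constructor <;> nlinarith
  · have := mul_le_mul_of_nonneg_left (st q).1 (ENNReal.toReal_nonneg (a := pd q))
    linarith
  · have := mul_le_mul_of_nonneg_left (st q).2 (ENNReal.toReal_nonneg (a := pd q))
    linarith

/-- The moment bound against the constant of the theorem. -/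
lemma const_le {n r : ℕ} (hn : 1 ≤ n) (hr : 2 ≤ r) (Mr : ℝ)
    (hMr : Mr = (2 * Real.sqrt r * Real.exp 1) ^ ((1 : ℝ) / r) * 16 * (r / Real.exp 1) *
        (n : ℝ) ^ 2 * (n + 1)) :
    0 < Mr ∧ r.factorial / (1 / (2 * n) / (8 * n) : ℝ) ^ r * (16 / 3) ≤ Mr ^ r := by
  have hn' : (1 : ℝ) ≤ n := by exact_mod_cast hn
  have hn0 : (0 : ℝ) < n := by linarith
  have hr0 : (0 : ℝ) < r := by exact_mod_cast (by omega : 0 < r)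
  refine ⟨by rw [hMr]; positivity, ?_⟩
  have e1 : Mr ^ r = (2 * Real.sqrt r * Real.exp 1) * (16 * (n : ℝ) ^ 2) ^ r
      * (r / Real.exp 1) ^ r * (n + 1) ^ r := by
    rw [hMr, mul_pow, mul_pow, mul_pow, mul_pow, ← Real.rpow_natCast _ r, ← Real.rpow_mul (by positivity),
      one_div_mul_cancel hr0.ne', Real.rpow_one]
    ring
  have e2 : (r.factorial : ℝ) / (1 / (2 * n) / (8 * n) : ℝ) ^ r = r.factorial * (16 * (n : ℝ) ^ 2) ^ r := by
    rw [show (1 / (2 * n) / (8 * n) : ℝ) = (16 * (n : ℝ) ^ 2)⁻¹ by field_simp; norm_num, inv_pow, div_inv_eq_mul]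
  rw [e1, e2]
  have h4 : (4 : ℝ) ≤ (n + 1) ^ r := by
    calc (4 : ℝ) = 2 ^ 2 := by norm_num
      _ ≤ (n + 1 : ℝ) ^ 2 := by gcongr; linarith
      _ ≤ (n + 1) ^ r := pow_le_pow_right₀ (by linarith) hr
  have hf := fact_le r (by omega)
  calc (r.factorial : ℝ) * (16 * (n : ℝ) ^ 2) ^ r * (16 / 3)
      ≤ (Real.exp 1 * Real.sqrt r * (r / Real.exp 1) ^ r) * (16 * (n : ℝ) ^ 2) ^ r * (2 * (n + 1) ^ r) := by
        gcongr
        linarith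
    _ = _ := by ring

lemma final {n : ℕ} (hn : 1 ≤ n) {ε : ℝ} (hε0 : 0 < ε) {r : ℕ} (hr : 2 ≤ r) {Mr : ℝ} (hM : 0 < Mr) :
    ∃ K : ℝ, 0 < K ∧ n / ε * (K * (n * ε)) = (n : ℝ) ^ ((2 : ℝ) - 1 / r) * ε ^ (-(1 : ℝ) / r) * Mr ∧
      1 / K ^ (r - 1) * Mr ^ r = K * (n * ε) := by
  have hn' : (1 : ℝ) ≤ n := by exact_mod_cast hn
  have hn0 : (0 : ℝ) < n := by linarith
  have hr0 : (0 : ℝ) < r := by exact_mod_cast (by omega : 0 < r)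
  have hx : 0 < (n * ε) ^ (-(1 : ℝ) / r) := by positivity
  refine ⟨Mr * (n * ε) ^ (-(1 : ℝ) / r), by positivity, ?_, ?_⟩
  · rw [Real.mul_rpow hn0.le hε0.le, show (2 : ℝ) - 1 / r = 2 + (-1) / r by ring,
      Real.rpow_add hn0, Real.rpow_two]
    field_simp
  · obtain ⟨m, rfl⟩ : ∃ m, r = m + 1 := ⟨r - 1, by omega⟩
    have h : ((n * ε) ^ (-(1 : ℝ) / (m + 1 : ℕ))) ^ (m + 1) * (n * ε) = 1 := by
      rw [← Real.rpow_natCast, ← Real.rpow_mul (by positivity), div_mul_cancel₀ _ hr0.ne',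
        Real.rpow_neg_one, inv_mul_cancel₀ (by positivity)]
    set x := (n * ε) ^ (-(1 : ℝ) / (m + 1 : ℕ))
    rw [Nat.add_sub_cancel, one_div_mul_eq_div, div_eq_iff (by positivity)]
    calc Mr ^ (m + 1) = Mr ^ (m + 1) * (x ^ (m + 1) * (n * ε)) := by rw [h, mul_one]
      _ = _ := by ring

end MWProof

/-- Theorem 6.1, MaxWeight part: two-sided steady-state bound on the
expected total queue length for uniform Bernoulli traffic under MaxWeight. -/
theorem maxweight_bernoulli_two_sided_bound
    (n : ℕ) (hn : 1 ≤ n) (ε : ℝ) (hε0 : 0 < ε) (hε : ε ≤ 1 / (2 * n))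
    (sched : (Fin n → Fin n → ℕ) → (Fin n → Fin n → ℕ))
    (hsched : IsMaxWeight n sched)
    (pd : (Fin n → Fin n → ℕ) → ℝ≥0∞)
    (hpd : IsInvariant n (kernelMW n (fun _ _ => bern ((1 - ε) / n)) sched) pd)
    (r : ℕ) (hr : 2 ≤ r)
    (Mr B1 B2 : ℝ)
    (hMr : Mr = (2 * Real.sqrt r * Real.exp 1) ^ ((1 : ℝ) / r) * 16 * (r / Real.exp 1) *
        (n : ℝ) ^ 2 * (n + 1))
    (hB1 : B1 = (1 - ε / 2) * (n - 2 + 1 / n) + n - 1 / 2 +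
        3 * (n : ℝ) ^ ((2 : ℝ) - 1 / r) * ε ^ (-(1 : ℝ) / r) * Mr)
    (hB2 : B2 = -((1 - ε / 2) * (n - 2 + 1 / n)) + (n + 1) / 2 +
        2 * (n : ℝ) ^ ((2 : ℝ) - 1 / r) * ε ^ (-(1 : ℝ) / r) * Mr) :
    ENNReal.ofReal ((1 / ε) * (n - 3 / 2 + 1 / (2 * n)) - B1) ≤ Etot n pd ∧
    Etot n pd ≤ ENNReal.ofReal ((1 / ε) * (n - 3 / 2 + 1 / (2 * n)) + B2) := by
  have hn' : (1 : ℝ) ≤ n := by exact_mod_cast hn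
  have hn0 : (0 : ℝ) < n := by linarith
  have hε1 : ε ≤ 1 / 2 := by
    refine hε.trans ?_
    rw [div_le_div_iff₀ (by positivity) (by norm_num)]; linarith
  have h0 : 0 ≤ (1 - ε) / n := div_nonneg (by linarith) hn0.le
  have h1 : (1 - ε) / n ≤ 1 := by rw [div_le_one hn0]; linarith
  have hinv : MWProof.Inv n ((1 - ε) / n) sched pd :=
    ⟨hpd.1, MWProof.inv_enn n _ h0 h1 sched pd hpd⟩
  obtain ⟨hM, hMle⟩ := MWProof.const_le hn hr Mr hMr
  obtain ⟨K, hK, hK1, hK2⟩ := MWProof.final hn hε0 hr hM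
  obtain ⟨ET, hET, hb⟩ := MWProof.steady hsched hn hε0 hε h0 h1 hinv hK hr _ rfl
  have hb2 := mul_le_mul_of_nonneg_left hMle (by positivity : 0 ≤ 1 / K ^ (r - 1))
  rw [hK2] at hb2
  have hX : 0 ≤ (n : ℝ) ^ ((2 : ℝ) - 1 / r) * ε ^ (-(1 : ℝ) / r) * Mr := by positivity
  rw [← hK1] at hX
  have hc : (0 : ℝ) < n / ε := by positivity
  obtain ⟨l1, l2⟩ := abs_le.mp hb
  have id1 : n / ε * ((2 * n - 1) * ((1 - ε) / n * (1 - (1 - ε) / n)) + ε ^ 2)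
      = 2 * ((1 / ε) * (n - 3 / 2 + 1 / (2 * n)) - (1 - ε / 2) * (n - 2 + 1 / n) + 1 / 2) := by
    field_simp
    ring
  have id2 : n / ε * (ε / n * ET) = ET := by field_simp
  have id3 : n / ε * ε = n := by field_simp
  set c0 := (2 * (n : ℝ) - 1) * ((1 - ε) / n * (1 - (1 - ε) / n)) + ε ^ 2
  have m1 : n / ε * (c0 - 2 * ε - 4 * (K * (n * ε))) ≤ n / ε * (2 * (ε / n * ET)) :=
    mul_le_mul_of_nonneg_left (by linarith) hc.le
  have m2 : n / ε * (2 * (ε / n * ET)) ≤ n / ε * (c0 - ε + 4 * (K * (n * ε))) :=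
    mul_le_mul_of_nonneg_left (by linarith) hc.le
  have hB1' : B1 = (1 - ε / 2) * (n - 2 + 1 / n) + n - 1 / 2 + 3 * (n / ε * (K * (n * ε))) := by
    rw [hB1, hK1]; ring
  have hB2' : B2 = -((1 - ε / 2) * (n - 2 + 1 / n)) + (n + 1) / 2
      + 2 * (n / ε * (K * (n * ε))) := by
    rw [hB2, hK1]; ring
  rw [hET, hB1', hB2']
  constructor <;> refine ENNReal.ofReal_le_ofReal ?_ <;> linarith
end
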